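/- arXiv:1902.01594 — 12 statements merged into one kernel-verified Lean document; each statement's English description precedes it below -/
import Mathlib

section
/- If a metric space (X,d) admits a bounded, self-contracted, and unrectifiable curve γ : I → X, then for every α with 1/2 < α < 1 and every k ∈ ℕ there exists a k-point subset Y ⊆ γ(I) satisfying the SRA(α) condition. -/
/-- A subset of a metric space satisfies the small rough angle condition `SRA(α)`. -/
def IsSRA {X : Type*} [MetricSpace X] (α : ℝ) (s : Set X) : Prop :=
  ∀ x ∈ s, ∀ y ∈ s, ∀ z ∈ s,
    dist x y ≤ max (dist x z + α * dist z y) (α * dist x z + dist z y)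

/-- A curve `γ` defined on `I ⊆ ℝ` is self-contracted. -/
def SelfContracted {X : Type*} [MetricSpace X] (γ : ℝ → X) (I : Set ℝ) : Prop :=
  ∀ t₁ ∈ I, ∀ t₂ ∈ I, ∀ t₃ ∈ I, t₁ ≤ t₂ → t₂ ≤ t₃ →
    dist (γ t₂) (γ t₃) ≤ dist (γ t₁) (γ t₃)

/-- A curve is rectifiable if the sums of consecutive distances along increasing
finite sequences of parameters are uniformly bounded. -/
def Rectifiable {X : Type*} [MetricSpace X] (γ : ℝ → X) (I : Set ℝ) : Prop :=
  ∃ M : ℝ, ∀ (k : ℕ) (t : Fin (k + 1) → ℝ), (∀ i, t i ∈ I) → StrictMono t →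
    ∑ i : Fin k, dist (γ (t i.castSucc)) (γ (t i.succ)) ≤ M

namespace SCC

/-- Self-contracted sequence. -/
def SC {X : Type*} [MetricSpace X] (x : ℕ → X) : Prop :=
  ∀ i j k, i ≤ j → j ≤ k → dist (x j) (x k) ≤ dist (x i) (x k)

def Good {X : Type*} [MetricSpace X] (α : ℝ) (x : ℕ → X) (f : ℕ → ℝ) (T : Finset ℕ) : Prop :=
  (∀ p ∈ T, ∀ q ∈ T, p < q → 0 < dist (x p) (x q) ∧ f p - f q ≤ α * dist (x p) (x q)) ∧
  (∀ p ∈ T, ∀ q ∈ T, ∀ r ∈ T, p < q → q < r →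
    dist (x p) (x r) ≤ dist (x q) (x r) + α * dist (x p) (x q) ∧
    dist (x p) (x q) ≤ dist (x p) (x r) + α * dist (x q) (x r))

def Small {X : Type*} [MetricSpace X] (x : ℕ → X) (f : ℕ → ℝ) (a b : ℕ) (w : ℝ) : Prop :=
  (∀ i j, a ≤ i → i ≤ b → a ≤ j → j ≤ b → dist (x i) (x j) ≤ w) ∧ f a - f b ≤ w

noncomputable def len {X : Type*} [MetricSpace X] (x : ℕ → X) (a b : ℕ) : ℝ :=
  ∑ i ∈ Finset.Ico a b, dist (x i) (x (i+1))

theorem len_nonneg {X : Type*} [MetricSpace X] (x : ℕ → X) (a b : ℕ) : 0 ≤ len x a b :=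
  Finset.sum_nonneg fun _ _ => dist_nonneg

theorem len_self {X : Type*} [MetricSpace X] (x : ℕ → X) (a : ℕ) : len x a a = 0 := by
  simp [len]

theorem len_add {X : Type*} [MetricSpace X] (x : ℕ → X) {a b c : ℕ} (h : a ≤ b) (h' : b ≤ c) :
    len x a c = len x a b + len x b c := by
  simp only [len]; exact (Finset.sum_Ico_consecutive _ h h').symm

theorem len_succ {X : Type*} [MetricSpace X] (x : ℕ → X) {a b : ℕ} (h : a ≤ b) :
    len x a (b+1) = len x a b + dist (x b) (x (b+1)) := by
  simp only [len]; exact Finset.sum_Ico_succ_top h _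

/-- adding a last point -/
theorem good_insert {X : Type*} [MetricSpace X] {α : ℝ} {x : ℕ → X} {f g : ℕ → ℝ}
    {T : Finset ℕ} {r : ℕ} (hT : Good α x g T) (hr : ∀ p ∈ T, p < r)
    (h1 : ∀ p ∈ T, 0 < dist (x p) (x r) ∧ f p - f r ≤ α * dist (x p) (x r))
    (h2 : ∀ p ∈ T, ∀ q ∈ T, p < q → f p - f q ≤ α * dist (x p) (x q) ∧
      dist (x p) (x r) ≤ dist (x q) (x r) + α * dist (x p) (x q) ∧
      dist (x p) (x q) ≤ dist (x p) (x r) + α * dist (x q) (x r)) :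
    Good α x f (insert r T) := by
  constructor
  · intro p hp q hq hpq
    rw [Finset.mem_insert] at hp hq
    rcases hq with rfl | hq
    · rcases hp with rfl | hp
      · omega
      · exact h1 p hp
    · rcases hp with rfl | hp
      · have := hr q hq; omega
      · exact ⟨(hT.1 p hp q hq hpq).1, (h2 p hp q hq hpq).1⟩
  · intro p hp q hq s hs hpq hqs
    rw [Finset.mem_insert] at hp hq hs
    rcases hp with rfl | hp
    · rcases hq with rfl | hq
      · omega
      · have := hr q hq; omega
    rcases hq with rfl | hq
    · rcases hs with rfl | hs
      · omega
      · have := hr s hs; omega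
    rcases hs with rfl | hs
    · exact (h2 p hp q hq hpq).2
    · exact hT.2 p hp q hq s hs hpq hqs

/-- pigeonhole -/
theorem ph (f : ℕ → ℝ) (θ : ℝ) (m n : ℕ) (hm : 0 < m) (h : f 0 - f (m * n) ≤ m * θ) :
    ∃ j < m, f (j * n) - f ((j+1) * n) ≤ θ := by
  by_contra hc
  push Not at hc
  have : ∀ l, l ≤ m → (l : ℝ) * θ ≤ f 0 - f (l * n) ∧ (0 < l → (l : ℝ) * θ < f 0 - f (l * n)) := by
    intro l
    induction l with
    | zero => intro _; simp
    | succ l ih =>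
      intro hl
      have h1 := (ih (by omega)).1
      have h2 := hc l (by omega)
      push_cast
      constructor
      · linarith
      · intro _; linarith
  have := (this m le_rfl).2 hm
  linarith

/-- Separated sequences. -/
theorem separated {X : Type*} [MetricSpace X] (α : ℝ) (hα : 0 < α) (R : ℕ) (k : ℕ) :
    ∃ N : ℕ, ∀ (y : ℕ → X) (δ : ℝ), 0 < δ → SC y →
      (∀ i j, i < j → j ≤ N → δ ≤ dist (y i) (y j)) →
      (∀ i j, i ≤ N → j ≤ N → dist (y i) (y j) ≤ R * (α * δ)) →
      ∃ T : Finset ℕ, T.card = k ∧ (∀ p ∈ T, p ≤ N) ∧ Good α y (fun _ => 0) T := by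
  induction k with
  | zero =>
    exact ⟨0, fun y δ _ _ _ _ => ⟨∅, by simp, by simp, by simp [Good]⟩⟩
  | succ k ih =>
    obtain ⟨N', hN'⟩ := ih
    have key : ∀ v : ℕ, v ≤ R → ∃ N : ℕ, ∀ (y : ℕ → X) (δ : ℝ), 0 < δ → SC y →
      (∀ i j, i < j → j ≤ N → δ ≤ dist (y i) (y j)) →
      (∀ i j, i ≤ N → j ≤ N → dist (y i) (y j) ≤ v * (α * δ)) →
      ∃ T : Finset ℕ, T.card = k+1 ∧ (∀ p ∈ T, p ≤ N) ∧ Good α y (fun _ => 0) T := by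
      intro v
      induction v with
      | zero =>
        intro _
        refine ⟨1, fun y δ hδ _ h1 h2 => ?_⟩
        have a1 := h1 0 1 (by omega) le_rfl
        have a2 := h2 0 1 (by omega) le_rfl
        simp at a2
        rw [a2, dist_self] at a1
        linarith
      | succ v ihv =>
        intro hv
        obtain ⟨N, hN⟩ := ihv (by omega)
        set P := (R+1) * N' with hP
        refine ⟨P + 1 + N, fun y δ hδ hy h1 h2 => ?_⟩
        have hαδ : 0 < α * δ := by positivity
        by_cases hc : ∃ r, P < r ∧ r ≤ P + 1 + N ∧ v * (α * δ) ≤ dist (y P) (y r)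
        · obtain ⟨r, hr1, hr2, hr3⟩ := hc
          have hd : dist (y 0) (y r) ≤ R * (α * δ) := by
            have := h2 0 r (by omega) hr2
            have h3 : ((v+1 : ℕ) : ℝ) ≤ R := by exact_mod_cast hv
            nlinarith
          obtain ⟨j, hj, hjd⟩ := ph (fun i => dist (y i) (y r)) (α * δ) (R+1) N' (by omega) (by
            have : 0 ≤ dist (y ((R+1)*N')) (y r) := dist_nonneg
            push_cast
            nlinarith)
          have hjP : j * N' + N' ≤ P := by
            rw [hP]; calc j * N' + N' = (j+1) * N' := by ring
              _ ≤ _ := Nat.mul_le_mul_right _ (by omega)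
          obtain ⟨T, hT1, hT2, hT3⟩ := hN' (fun i => y (j * N' + i)) δ hδ
            (fun a b c hab hbc => hy _ _ _ (by omega) (by omega))
            (fun a b hab hb => h1 _ _ (by omega) (by omega))
            (fun a b ha hb => by
              refine (h2 _ _ (by omega) (by omega)).trans ?_
              have h3 : ((v+1 : ℕ) : ℝ) ≤ R := by exact_mod_cast hv
              nlinarith)
          have hTG : Good α y (fun _ => 0) (T.image (fun i => j * N' + i)) := by
            constructor
            · intro p hp q hq hpq
              rw [Finset.mem_image] at hp hq
              obtain ⟨p, hp, rfl⟩ := hp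
              obtain ⟨q, hq, rfl⟩ := hq
              exact hT3.1 p hp q hq (by omega)
            · intro p hp q hq s hs hpq hqs
              rw [Finset.mem_image] at hp hq hs
              obtain ⟨p, hp, rfl⟩ := hp
              obtain ⟨q, hq, rfl⟩ := hq
              obtain ⟨s, hs, rfl⟩ := hs
              exact hT3.2 p hp q hq s hs (by omega) (by omega)
          have hmem : ∀ p ∈ T.image (fun i => j * N' + i), j * N' ≤ p ∧ p ≤ j * N' + N' := by
            intro p hp
            rw [Finset.mem_image] at hp
            obtain ⟨p, hp, rfl⟩ := hp
            have := hT2 p hp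
            omega
          refine ⟨insert r (T.image (fun i => j * N' + i)), ?_, ?_, ?_⟩
          · rw [Finset.card_insert_of_notMem, Finset.card_image_of_injective, hT1]
            · intro a b hab
              simpa using hab
            · intro h
              have := hmem r h
              omega
          · intro p hp
            rw [Finset.mem_insert] at hp
            rcases hp with rfl | hp
            · exact hr2
            · have := hmem p hp; omega
          · refine good_insert hTG (fun p hp => by have := hmem p hp; omega) ?_ ?_
            · intro p hp
              have hp' := hmem p hp
              have := h1 p r (by omega) hr2
              refine ⟨by linarith, ?_⟩
              have : 0 ≤ α * dist (y p) (y r) := by positivity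
              simpa using this
            · intro p hp q hq hpq
              have hp' := hmem p hp
              have hq' := hmem q hq
              have e1 := h1 p q hpq (by omega)
              have e2 := h1 q r (by omega) hr2
              have e3 : α * δ ≤ α * dist (y p) (y q) := by gcongr
              have e4 : α * δ ≤ α * dist (y q) (y r) := by gcongr
              have e5 := hy (j * N') p r hp'.1 (by omega)
              have e6 := hy q ((j+1) * N') r (by linarith [hq'.2]) (by linarith [hjP])
              have e7 := hy p P r (by omega) (by omega)
              have e8 := h2 p q (by omega) (by omega)
              push_cast at e8
              refine ⟨?_, ?_, ?_⟩
              · simp; positivity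
              · linarith
              · linarith
        · push Not at hc
          obtain ⟨T, hT1, hT2, hT3⟩ := hN (fun i => y (P + 1 + i)) δ hδ
            (fun a b c hab hbc => hy _ _ _ (by omega) (by omega))
            (fun a b hab hb => h1 _ _ (by omega) (by omega))
            (by
              have hlt : ∀ a b, a < b → b ≤ N →
                  dist (y (P+1+a)) (y (P+1+b)) ≤ v * (α * δ) := by
                intro a b hab hb
                have e1 := hy P (P+1+a) (P+1+b) (by omega) (by omega)
                have e2 := hc (P+1+b) (by omega) (by omega)
                linarith
              intro a b ha hb
              rcases lt_trichotomy a b with h | h | h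
              · exact hlt a b h hb
              · subst h; simp; positivity
              · rw [dist_comm]; exact hlt b a h ha)
          refine ⟨T.image (fun i => P + 1 + i), ?_, ?_, ?_⟩
          · rw [Finset.card_image_of_injective, hT1]
            intro a b hab
            simpa using hab
          · intro p hp
            rw [Finset.mem_image] at hp
            obtain ⟨p, hp, rfl⟩ := hp
            have := hT2 p hp
            omega
          · constructor
            · intro p hp q hq hpq
              rw [Finset.mem_image] at hp hq
              obtain ⟨p, hp, rfl⟩ := hp
              obtain ⟨q, hq, rfl⟩ := hq
              exact hT3.1 p hp q hq (by omega)
            · intro p hp q hq s hs hpq hqs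
              rw [Finset.mem_image] at hp hq hs
              obtain ⟨p, hp, rfl⟩ := hp
              obtain ⟨q, hq, rfl⟩ := hq
              obtain ⟨s, hs, rfl⟩ := hs
              exact hT3.2 p hp q hq s hs (by omega) (by omega)
    exact key R le_rfl

/-- Greedy decomposition. -/
theorem greedy {X : Type*} [MetricSpace X] (x : ℕ → X) (f : ℕ → ℝ) (b : ℕ) (v B w : ℝ)
    (hv : 0 ≤ v) (hw : 0 ≤ w) (hB : 0 ≤ B) (m : ℕ) : ∀ a, a ≤ b →
    (∀ i j, a ≤ i → i ≤ b → a ≤ j → j ≤ b → dist (x i) (x j) ≤ w) →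
    (∀ c d, a ≤ c → c ≤ d → d ≤ b → Small x f c d v → len x c d ≤ B) →
    len x a b ≤ m * (B + w) ∨
    ∃ c : ℕ → ℕ, Monotone c ∧ c 0 = a ∧ (∀ j, c j ≤ b) ∧ ∀ j < m, ¬ Small x f (c j) (c (j+1)) v := by
  induction m with
  | zero =>
    intro a hab _ _
    exact Or.inr ⟨fun _ => a, monotone_const, rfl, fun _ => hab, by simp⟩
  | succ m ih =>
    intro a hab hd hl
    have hm : (0:ℝ) ≤ m * (B + w) := by positivity
    by_cases hs : ∀ e, a ≤ e → e ≤ b → Small x f a e v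
    · left
      have := hl a b le_rfl hab le_rfl (hs b hab le_rfl)
      push_cast
      linarith
    · have hs' : ∃ e, a ≤ e ∧ e ≤ b ∧ ¬ Small x f a e v := by
        push Not at hs; exact hs
      classical
      obtain ⟨h1, h2, h3⟩ := Nat.find_spec hs'
      have hmin := fun e (h : e < Nat.find hs') => Nat.find_min hs' h
      generalize Nat.find hs' = e at h1 h2 h3 hmin
      have hae : a < e := by
        rcases h1.lt_or_eq with h | h
        · exact h
        · subst h
          exfalso; apply h3
          constructor
          · intro i j hi hi' hj hj'
            have : i = j := by omega
            subst this; simpa using hv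
          · simpa using hv
      obtain ⟨e, rfl⟩ : ∃ e', e = e' + 1 := ⟨e - 1, by omega⟩
      have hse : Small x f a e v := by
        have := hmin e (by omega)
        by_contra hc
        exact this ⟨by omega, by omega, hc⟩
      have hl1 := hl a e le_rfl (by omega) (by omega) hse
      have hst := hd e (e+1) (by omega) (by omega) (by omega) h2
      rcases ih (e+1) h2 (fun i j hi hi' hj hj' => hd i j (by omega) hi' (by omega) hj')
        (fun c d hc hcd hdb => hl c d (by omega) hcd hdb) with h | ⟨c, hc1, hc2, hc3, hc4⟩
      · left
        rw [len_add x h1 h2, len_succ x (by omega)]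
        push_cast
        linarith
      · right
        refine ⟨fun j => Nat.casesOn j a c, ?_, rfl, ?_, ?_⟩
        · apply monotone_nat_of_le_succ
          intro n
          cases n with
          | zero => simp only [hc2]; omega
          | succ n => exact hc1 (Nat.le_succ n)
        · intro j
          cases j with
          | zero => exact hab
          | succ n => exact hc3 n
        · intro j hj
          cases j with
          | zero => simp only [hc2]; exact h3
          | succ n => exact hc4 n (by omega)

theorem factB {X : Type*} [MetricSpace X] (α : ℝ) (hα : 0 < α) (hα1 : α ≤ 1) (k : ℕ)
    (η : ℝ) (hη : 0 < η) (C : ℝ) (hC : 0 ≤ C) :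
    ∃ C' : ℝ, 0 ≤ C' ∧ ∀ (x : ℕ → X) (f : ℕ → ℝ) (a b : ℕ) (w : ℝ), SC x → a ≤ b → 0 < w →
      AntitoneOn f (Set.Icc a b) → Small x f a b w →
      (¬ ∃ T : Finset ℕ, T.card = k ∧ (∀ p ∈ T, a ≤ p ∧ p ≤ b) ∧ Good α x f T) →
      (∀ c d, a ≤ c → c ≤ d → d ≤ b → Small x f c d (η * w) → len x c d ≤ C * (η * w)) →
      len x a b ≤ C' * w := by
  obtain ⟨R, hR⟩ := exists_nat_ge (2 / (α * η))
  obtain ⟨N, hN⟩ := separated (X := X) α hα R k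
  have hRη : 1 ≤ R * (α * (η / 2)) := by
    rw [div_le_iff₀ (by positivity)] at hR
    linarith
  refine ⟨((R+1) * (N + 1) : ℕ) * (C * η + 1), by positivity, ?_⟩
  intro x f a b w hx hab hw hf hs hT hl
  rcases greedy x f b (η * w) (C * (η * w)) w (by positivity) hw.le (by positivity)
    ((R+1) * (N+1)) a hab hs.1 hl with h | ⟨c, hc1, hc2, hc3, hc4⟩
  · calc _ ≤ _ := h
      _ = _ := by ring
  · exfalso
    apply hT
    have hca : ∀ j, a ≤ c j := fun j => hc2 ▸ hc1 (Nat.zero_le j)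
    have hfc : ∀ i j, i ≤ j → f (c j) ≤ f (c i) := fun i j hij =>
      hf ⟨hca i, hc3 i⟩ ⟨hca j, hc3 j⟩ (hc1 hij)
    set δ := η * w / 2 with hδ
    have hδ0 : 0 < δ := by positivity
    have hwR : w ≤ R * (α * δ) := by
      calc w = 1 * w := by ring
        _ ≤ (R * (α * (η / 2))) * w := by gcongr
        _ = _ := by rw [hδ]; ring
    have hαδ : 0 < α * δ := by positivity
    obtain ⟨j, hj, hjd⟩ := ph (fun i => f (c i)) (α * δ) (R+1) (N+1) (by omega) (by
      have e1 : f b ≤ f (c ((R+1)*(N+1))) := hf ⟨hca _, hc3 _⟩ ⟨hab, le_rfl⟩ (hc3 _)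
      have e2 := hs.2
      simp only [hc2]
      push_cast
      linarith)
    have hjP : j * (N+1) + (N+1) ≤ (R+1) * (N+1) := by
      calc j * (N+1) + (N+1) = (j+1) * (N+1) := by ring
        _ ≤ _ := Nat.mul_le_mul_right _ (by omega)
    have hj1 : (j+1) * (N+1) = j * (N+1) + (N+1) := by ring
    simp only [hj1] at hjd
    set o := j * (N+1) with ho
    have hdrop : ∀ p q, o ≤ p → p ≤ q → q ≤ o + (N+1) → f (c p) - f (c q) ≤ α * δ := by
      intro p q h1 h2 h3
      have := hfc o p h1
      have := hfc q (o + (N+1)) h3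
      linarith
    have hsep : ∀ p q, o ≤ p → p < q → q ≤ o + N → δ ≤ dist (x (c p)) (x (c q)) := by
      intro p q h1 h2 h3
      by_contra hlt
      push Not at hlt
      apply hc4 p (by omega)
      have hle : c (p+1) ≤ c q := hc1 (by omega)
      constructor
      · intro i i' hi1 hi2 hi1' hi2'
        have e1 := hx (c p) i (c q) hi1 (by omega)
        have e2 := hx (c p) i' (c q) hi1' (by omega)
        have e3 := dist_triangle_right (x i) (x i') (x (c q))
        linarith
      · have := hdrop p (p+1) h1 (by omega) (by omega)
        nlinarith
    obtain ⟨T, hT1, hT2, hT3⟩ := hN (fun i => x (c (o + i))) δ hδ0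
      (fun p q r hpq hqr => hx _ _ _ (hc1 (by omega)) (hc1 (by omega)))
      (fun p q hpq hq => hsep _ _ (by omega) (by omega) (by omega))
      (fun p q hp hq => (hs.1 _ _ (hca _) (hc3 _) (hca _) (hc3 _)).trans hwR)
    have hlt : ∀ p ∈ T, ∀ q ∈ T, c (o + p) < c (o + q) → p < q := by
      intro p _ q _ h
      by_contra hc
      have := hc1 (show o + q ≤ o + p by omega)
      omega
    refine ⟨T.image (fun i => c (o + i)), ?_, ?_, ?_, ?_⟩
    · rw [Finset.card_image_of_injOn, hT1]
      have hne : ∀ p ∈ T, ∀ q ∈ T, p < q → c (o + p) ≠ c (o + q) := by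
        intro p hp q hq hpq h
        have := (hT3.1 p hp q hq hpq).1
        simp [h] at this
      intro p hp q hq hpq
      rcases lt_trichotomy p q with h | h | h
      · exact absurd hpq (hne p hp q hq h)
      · exact h
      · exact absurd hpq.symm (hne q hq p hp h)
    · intro p hp
      rw [Finset.mem_image] at hp
      obtain ⟨p, hp, rfl⟩ := hp
      exact ⟨hca _, hc3 _⟩
    · intro p hp q hq hpq
      rw [Finset.mem_image] at hp hq
      obtain ⟨p, hp, rfl⟩ := hp
      obtain ⟨q, hq, rfl⟩ := hq
      have hlt' := hlt p hp q hq hpq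
      have := hT2 q hq
      refine ⟨(hT3.1 p hp q hq hlt').1, (hdrop _ _ (by omega) (by omega) (by omega)).trans ?_⟩
      have := hsep (o+p) (o+q) (by omega) (by omega) (by omega)
      gcongr
    · intro p hp q hq s hs hpq hqs
      rw [Finset.mem_image] at hp hq hs
      obtain ⟨p, hp, rfl⟩ := hp
      obtain ⟨q, hq, rfl⟩ := hq
      obtain ⟨s, hs, rfl⟩ := hs
      exact hT3.2 p hp q hq s hs (hlt p hp q hq hpq) (hlt q hq s hs hqs)

theorem main {X : Type*} [MetricSpace X] (α : ℝ) (hα : 0 < α) (hα1 : α ≤ 1) (k : ℕ) :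
    ∃ C : ℝ, 0 ≤ C ∧ ∀ (x : ℕ → X) (f : ℕ → ℝ) (a b : ℕ) (w : ℝ), SC x → a ≤ b → 0 < w →
      AntitoneOn f (Set.Icc a b) → Small x f a b w →
      (¬ ∃ T : Finset ℕ, T.card = k ∧ (∀ p ∈ T, a ≤ p ∧ p ≤ b) ∧ Good α x f T) →
      len x a b ≤ C * w := by
  induction k with
  | zero =>
    refine ⟨0, le_rfl, fun x f a b w _ _ _ _ _ h => ?_⟩
    exact absurd ⟨∅, by simp, by simp, by simp [Good]⟩ h
  | succ k ih =>
    obtain ⟨C, hC0, hC⟩ := ih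
    obtain ⟨D, hD0, hD⟩ := factB (X := X) α hα hα1 (k+1) (α / 16) (by positivity) (2 * C)
      (by positivity)
    set A := 4 / α * (D + 1) with hA
    have hA0 : 0 ≤ A := by positivity
    refine ⟨4 * A, by positivity, ?_⟩
    intro x f a b w hx hab hw hf hs hT
    -- heavy intervals control the future
    have factA : ∀ c d v, a ≤ c → c ≤ d → d ≤ b → 0 < v → Small x f c d v →
        2 * C * v < len x c d → ∀ r, d ≤ r → r ≤ b →
        α * dist (x d) (x r) ≤ v + f d - f r := by
      intro c d v hac hcd hdb hv hsm hlen r hdr hrb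
      by_contra hlt
      push Not at hlt
      have hfr : f r ≤ f d := hf ⟨by omega, hdb⟩ ⟨by omega, hrb⟩ hdr
      have hdist : v < dist (x d) (x r) := by
        have : α * dist (x d) (x r) ≤ 1 * dist (x d) (x r) := by gcongr
        linarith
      have hdr' : d < r := by
        rcases hdr.lt_or_eq with h | h
        · exact h
        · subst h; simp at hdist; linarith
      have hfc : AntitoneOn f (Set.Icc c d) := hf.mono (Set.Icc_subset_Icc hac hdb)
      have hgc : AntitoneOn (fun i => dist (x i) (x r)) (Set.Icc c d) := by
        intro i hi j hj hij
        exact hx i j r hij (by have := hj.2; omega)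
      have hex : ∃ T : Finset ℕ, T.card = k ∧ (∀ p ∈ T, c ≤ p ∧ p ≤ d) ∧
          Good α x (fun i => f i + dist (x i) (x r)) T := by
        by_contra hno
        have := hC x (fun i => f i + dist (x i) (x r)) c d (2 * v) hx hcd (by positivity)
          (fun i hi j hj hij => add_le_add (hfc hi hj hij) (hgc hi hj hij))
          ⟨fun i j h1 h2 h3 h4 => (hsm.1 i j h1 h2 h3 h4).trans (by linarith), by
            have e1 := hsm.2
            have e2 := hsm.1 c d le_rfl hcd hcd le_rfl
            have e3 := dist_triangle (x c) (x d) (x r)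
            simp only
            linarith⟩ hno
        linarith
      obtain ⟨T, hT1, hT2, hT3⟩ := hex
      apply hT
      have hpd : ∀ p ∈ T, dist (x d) (x r) ≤ dist (x p) (x r) := fun p hp =>
        hx p d r (hT2 p hp).2 hdr
      refine ⟨insert r T, ?_, ?_, ?_⟩
      · rw [Finset.card_insert_of_notMem, hT1]
        intro h
        have := (hT2 r h).2
        omega
      · intro p hp
        rw [Finset.mem_insert] at hp
        rcases hp with rfl | hp
        · omega
        · have := hT2 p hp; omega
      · refine good_insert hT3 (fun p hp => by have := (hT2 p hp).2; omega) ?_ ?_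
        · intro p hp
          have e1 := hpd p hp
          refine ⟨by linarith, ?_⟩
          have e2 : α * dist (x d) (x r) ≤ α * dist (x p) (x r) := by gcongr
          have e3 := hsm.2
          have e4 := hfc ⟨le_rfl, hcd⟩ ⟨(hT2 p hp).1, (hT2 p hp).2⟩ (hT2 p hp).1
          linarith
        · intro p hp q hq hpq
          have e1 := (hT3.1 p hp q hq hpq).2
          simp only at e1
          have e2 := hfc (hT2 p hp) (hT2 q hq) hpq.le
          have e3 := hx p q r hpq.le (by have := (hT2 q hq).2; omega)
          refine ⟨by linarith, by linarith, ?_⟩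
          have e4 := hsm.1 p q (hT2 p hp).1 (hT2 p hp).2 (hT2 q hq).1 (hT2 q hq).2
          have e5 := hpd p hp
          have e6 : 0 ≤ α * dist (x q) (x r) := by positivity
          linarith
    -- the chain
    have chain : ∀ n a' : ℕ, ∀ u : ℝ, b - a' ≤ n → a ≤ a' → a' ≤ b → 0 < u →
        (∀ r, a' ≤ r → r ≤ b → α * dist (x a') (x r) ≤ u + f a' - f r) →
        len x a' b ≤ A * (u + 3 * (f a' - f b)) := by
      intro n
      induction n with
      | zero =>
        intro a' u h1 h2 h3 hu _
        have : a' = b := by omega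
        subst this
        rw [len_self]
        simp
        positivity
      | succ n ihn =>
        intro a' u h1 h2 h3 hu hctl
        have hfa : ∀ i j, a' ≤ i → i ≤ j → j ≤ b → f j ≤ f i := fun i j hi hij hj =>
          hf ⟨by omega, by omega⟩ ⟨by omega, hj⟩ hij
        let W : ℕ → ℝ := fun e => 2 / α * (u + (f a' - f e))
        have hWdef : ∀ e, W e = 2 / α * (u + (f a' - f e)) := fun _ => rfl
        have hαW : ∀ e, α * W e = 2 * (u + (f a' - f e)) := by
          intro e; rw [hWdef]; field_simp
        have hWpos : ∀ e, a' ≤ e → e ≤ b → 0 < W e := by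
          intro e he he'
          have := hfa a' e le_rfl he he'
          rw [hWdef]
          have : 0 < u + (f a' - f e) := by linarith
          positivity
        have hWsmall : ∀ e, a' ≤ e → e ≤ b → Small x f a' e (W e) := by
          intro e he he'
          constructor
          · intro i j hi hi' hj hj'
            have e1 := hctl i hi (by omega)
            have e2 := hctl j hj (by omega)
            have e3 := hfa i e hi hi' he'
            have e4 := hfa j e hj hj' he'
            have e5 := dist_triangle_left (x i) (x j) (x a')
            have e6 : α * dist (x i) (x j) ≤ α * W e := by
              rw [hαW]
              have : α * dist (x i) (x j) ≤ α * (dist (x a') (x i) + dist (x a') (x j)) := by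
                gcongr
              linarith
            exact le_of_mul_le_mul_left e6 hα
          · have e1 := hfa a' e le_rfl he he'
            have e2 : α * (f a' - f e) ≤ 1 * (f a' - f e) := by
              apply mul_le_mul_of_nonneg_right hα1; linarith
            have e6 : α * (f a' - f e) ≤ α * W e := by
              rw [hαW]; linarith
            exact le_of_mul_le_mul_left e6 hα
        have hlight : ∀ e, a' ≤ e → e ≤ b →
            (¬ ∃ c d, a' ≤ c ∧ c ≤ d ∧ d ≤ e ∧ Small x f c d (α / 16 * W e) ∧
              2 * C * (α / 16 * W e) < len x c d) → len x a' e ≤ D * W e := by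
          intro e he he' hno
          apply hD x f a' e (W e) hx he (hWpos e he he')
            (hf.mono (Set.Icc_subset_Icc h2 he')) (hWsmall e he he')
          · rintro ⟨T, hT1, hT2, hT3⟩
            exact hT ⟨T, hT1, fun p hp => by have := hT2 p hp; omega, hT3⟩
          · intro c d hc hcd hd hsm
            by_contra hlt
            push Not at hlt
            exact hno ⟨c, d, hc, hcd, hd, hsm, hlt⟩
        by_cases hh : ∃ e, a' ≤ e ∧ e ≤ b ∧ ∃ c d, a' ≤ c ∧ c ≤ d ∧ d ≤ e ∧
            Small x f c d (α / 16 * W e) ∧ 2 * C * (α / 16 * W e) < len x c d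
        · classical
          obtain ⟨g1, g2, c, d, g3, g4, g5, g6, g7⟩ := Nat.find_spec hh
          have hmin := fun e (h : e < Nat.find hh) => Nat.find_min hh h
          generalize Nat.find hh = e at g1 g2 g5 g6 g7 hmin
          have hWe := hWpos e g1 g2
          have hae : a' < e := by
            rcases g1.lt_or_eq with h | h
            · exact h
            · exfalso
              have : c = d := by omega
              rw [this, len_self] at g7
              have : 0 ≤ 2 * C * (α / 16 * W e) := by positivity
              linarith
          have hlen : len x a' e ≤ (D + 1) * W e := by
            obtain ⟨e', rfl⟩ : ∃ e', e = e' + 1 := ⟨e - 1, by omega⟩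
            have i1 := hlight e' (by omega) (by omega) (fun h => hmin e' (by omega)
              ⟨by omega, by omega, h⟩)
            have i2 : W e' ≤ W (e'+1) := by
              have := hfa e' (e'+1) (by omega) (by omega) g2
              rw [hWdef, hWdef]
              gcongr
            have i3 := (hWsmall (e'+1) g1 g2).1 e' (e'+1) (by omega) (by omega) (by omega) le_rfl
            rw [len_succ x (by omega)]
            have i4 : D * W e' ≤ D * W (e'+1) := by gcongr
            linarith
          have hv : 0 < α / 16 * W e := by positivity
          have hfut := factA c d _ (by omega) g4 (by omega) hv g6 g7
          have hvW : α / 16 * W e = (u + (f a' - f e)) / 8 := by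
            have := hαW e; linarith
          rw [hvW] at hfut
          have hφ := hfa a' e le_rfl g1 g2
          have hnext := ihn e (u / 4 + 9 / 4 * (f a' - f e)) (by omega) (by omega) g2
            (by linarith) (by
              intro r her hrb
              have i1 := hfut e g5 g2
              have i2 := hfut r (by omega) hrb
              have i3 : α * dist (x e) (x r) ≤ α * (dist (x d) (x e) + dist (x d) (x r)) := by
                have := dist_triangle_left (x e) (x r) (x d)
                gcongr
              have i4 := hfa a' d le_rfl (by omega) (by omega)
              linarith)
          rw [len_add x g1 g2]
          have hAW : (D + 1) * W e = A * ((u + (f a' - f e)) / 2) := by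
            rw [hWdef, hA]; ring
          have j1 : len x a' e + len x e b ≤ A * ((u + (f a' - f e)) / 2 +
              (u / 4 + 9 / 4 * (f a' - f e) + 3 * (f e - f b))) := by
            linarith
          exact j1.trans (mul_le_mul_of_nonneg_left (by linarith) hA0)
        · have i1 := hlight b h3 le_rfl (fun h => hh ⟨b, h3, le_rfl, h⟩)
          have i2 := hWpos b h3 le_rfl
          have hAW : (D + 1) * W b = A * ((u + (f a' - f b)) / 2) := by
            rw [hWdef, hA]; ring
          have i3 := hfa a' b le_rfl h3 le_rfl
          have j1 : len x a' b ≤ A * ((u + (f a' - f b)) / 2) := by linarith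
          exact j1.trans (mul_le_mul_of_nonneg_left (by linarith) hA0)
    have hfin := chain (b - a) a w le_rfl le_rfl hab hw (by
      intro r har hrb
      have e1 := hs.1 a r le_rfl hab har hrb
      have e2 := hf ⟨le_rfl, hab⟩ ⟨har, hrb⟩ har
      have e3 : α * dist (x a) (x r) ≤ 1 * dist (x a) (x r) := by gcongr
      linarith)
    refine hfin.trans ?_
    have := hs.2
    calc A * (w + 3 * (f a - f b)) ≤ A * (w + 3 * w) := by gcongr
      _ = _ := by ring

theorem good_sra {X : Type*} [MetricSpace X] {α : ℝ} (hα : 0 ≤ α) {x : ℕ → X} (hx : SC x)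
    {f : ℕ → ℝ} {T : Finset ℕ} (hT : Good α x f T) :
    ∀ i ∈ T, ∀ j ∈ T, ∀ l ∈ T, dist (x i) (x j) ≤
      max (dist (x i) (x l) + α * dist (x l) (x j)) (α * dist (x i) (x l) + dist (x l) (x j)) := by
  have key : ∀ i ∈ T, ∀ j ∈ T, ∀ l ∈ T, i < j → dist (x i) (x j) ≤
      max (dist (x i) (x l) + α * dist (x l) (x j)) (α * dist (x i) (x l) + dist (x l) (x j)) := by
    intro i hi j hj l hl hij
    rcases lt_trichotomy l i with h | h | h
    · apply le_max_of_le_right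
      have := hx l i j h.le hij.le
      have : 0 ≤ α * dist (x i) (x l) := by positivity
      linarith
    · subst h; apply le_max_of_le_right; simp
    rcases lt_trichotomy l j with h' | h' | h'
    · apply le_max_of_le_right
      have := (hT.2 i hi l hl j hj h h').1
      linarith
    · subst h'; apply le_max_of_le_left; simp
    · apply le_max_of_le_left
      have := (hT.2 i hi j hj l hl hij h').2
      rw [dist_comm (x l) (x j)]
      exact this
  intro i hi j hj l hl
  rcases lt_trichotomy i j with h | h | h
  · exact key i hi j hj l hl h
  · subst h
    rw [dist_self]
    apply le_max_of_le_left
    positivity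
  · have := key j hj i hi l hl h
    rw [dist_comm (x i) (x j), dist_comm (x i) (x l), dist_comm (x l) (x j), max_comm,
      add_comm (α * dist (x l) (x i)), add_comm (dist (x l) (x i))]
    exact this

end SCC

theorem sra_subsets_in_selfContracted_unrectifiable
    {X : Type*} [MetricSpace X] (γ : ℝ → X) (I : Set ℝ)
    (hI : I.OrdConnected)
    (hbdd : Bornology.IsBounded (γ '' I))
    (hsc : SelfContracted γ I)
    (hur : ¬ Rectifiable γ I) :
    ∀ α : ℝ, 1 / 2 < α → α < 1 → ∀ k : ℕ,
      ∃ Y : Finset X, ↑Y ⊆ γ '' I ∧ Y.card = k ∧ IsSRA α (↑Y : Set X) := by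
  intro α hα hα1 k
  have hα0 : 0 < α := by linarith
  obtain ⟨C, hC0, hC⟩ := SCC.main (X := X) α hα0 hα1.le k
  obtain ⟨w, hw⟩ := Metric.isBounded_iff.1 hbdd
  by_contra hno
  apply hur
  refine ⟨C * max w 1, ?_⟩
  intro n t ht htm
  let s : ℕ → Fin (n+1) := fun i => ⟨min i n, by omega⟩
  have hsm : ∀ i j, i ≤ j → t (s i) ≤ t (s j) := fun i j hij =>
    htm.monotone (by simp only [s, Fin.mk_le_mk]; omega)
  let x : ℕ → X := fun i => γ (t (s i))
  have hx : SCC.SC x := fun i j k hij hjk =>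
    hsc _ (ht _) _ (ht _) _ (ht _) (hsm _ _ hij) (hsm _ _ hjk)
  have hlen : ∑ i : Fin n, dist (γ (t i.castSucc)) (γ (t i.succ)) = SCC.len x 0 n := by
    unfold SCC.len
    rw [← Finset.range_eq_Ico, ← Fin.sum_univ_eq_sum_range (fun i => dist (x i) (x (i+1)))]
    apply Finset.sum_congr rfl
    intro i _
    have h1 : s i = i.castSucc := by
      ext; simp [s]
    have h2 : s (i+1) = i.succ := by
      ext; simp only [s, Fin.val_succ]; omega
    simp only [x, h1, h2]
  rw [hlen]
  apply hC x (fun _ => 0) 0 n (max w 1) hx (Nat.zero_le _) (by positivity)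
    (fun _ _ _ _ _ => le_rfl)
  · constructor
    · intro i j _ _ _ _
      exact (hw ⟨_, ht _, rfl⟩ ⟨_, ht _, rfl⟩).trans (le_max_left _ _)
    · simp
  · rintro ⟨T, hT1, -, hT3⟩
    apply hno
    classical
    refine ⟨T.image x, ?_, ?_, ?_⟩
    · intro y hy
      simp only [Finset.coe_image, Set.mem_image] at hy
      obtain ⟨i, _, rfl⟩ := hy
      exact ⟨_, ht _, rfl⟩
    · rw [Finset.card_image_of_injOn, hT1]
      have hne : ∀ p ∈ T, ∀ q ∈ T, p < q → x p ≠ x q := fun p hp q hq hpq =>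
        dist_pos.1 (hT3.1 p hp q hq hpq).1
      intro p hp q hq hpq
      rcases lt_trichotomy p q with h | h | h
      · exact absurd hpq (hne p hp q hq h)
      · exact h
      · exact absurd hpq.symm (hne q hq p hp h)
    · have := SCC.good_sra hα0.le hx hT3
      intro y hy z hz v hv
      simp only [Finset.coe_image, Set.mem_image] at hy hz hv
      obtain ⟨i, hi, rfl⟩ := hy
      obtain ⟨j, hj, rfl⟩ := hz
      obtain ⟨l, hl, rfl⟩ := hv
      exact this i hi j hj l hl
end

section
/- Let (X,d) be a metric space, 0 < α < 1, and ε := arccos(α)/2. Let x ∈ X and R > 0, and suppose there is L ∈ ℕ such that every p ∈ B_R(x) satisfies the ATB(ε) condition with constants L and 2R. Then there exists N ∈ ℕ, depending only on L, such that no N-point subset of B_R(x) satisfies the SRA(α) condition. -/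
/-- The Euclidean comparison angle `∠̃ x p y`. -/
noncomputable def compAngle {X : Type*} [MetricSpace X] (p x y : X) : ℝ :=
  Real.arccos ((dist x p ^ 2 + dist y p ^ 2 - dist x y ^ 2) / (2 * dist x p * dist y p))

/-- The point `p` satisfies the `ATB(ε)` condition with constants `L` and `R`:
for every `L` points in `B_R(p) \ {p}` two of them make comparison angle `< ε` at `p`. -/
def ATBPoint {X : Type*} [MetricSpace X] (ε : ℝ) (p : X) (L : ℕ) (R : ℝ) : Prop :=
  ∀ y : Fin L → X, (∀ i, y i ∈ Metric.ball p R ∧ y i ≠ p) →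
    ∃ i j, i ≠ j ∧ compAngle p (y i) (y j) < ε

theorem ramsey_aux : ∀ n a b : ℕ, a + b = n → ∃ N : ℕ, ∀ (X : Type) (r : X → X → Prop),
    (∀ x y, r x y → r y x) → ∀ s : Finset X, N ≤ s.card →
    (∃ t ⊆ s, t.card = a ∧ ∀ x ∈ t, ∀ y ∈ t, x ≠ y → r x y) ∨
    (∃ t ⊆ s, t.card = b ∧ ∀ x ∈ t, ∀ y ∈ t, x ≠ y → ¬ r x y) := by
  classical
  intro n
  induction n with
  | zero =>
    intro a b h
    obtain rfl : a = 0 := by omega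
    exact ⟨0, fun X r _ s _ => Or.inl ⟨∅, by simp, by simp, by simp⟩⟩
  | succ n ih =>
    intro a b h
    rcases a with _ | a
    · exact ⟨0, fun X r _ s _ => Or.inl ⟨∅, by simp, by simp, by simp⟩⟩
    rcases b with _ | b
    · exact ⟨0, fun X r _ s _ => Or.inr ⟨∅, by simp, by simp, by simp⟩⟩
    obtain ⟨N1, h1⟩ := ih a (b+1) (by omega)
    obtain ⟨N2, h2⟩ := ih (a+1) b (by omega)
    refine ⟨N1 + N2 + 1, fun X r hr s hs => ?_⟩
    obtain ⟨p, hp⟩ : s.Nonempty := Finset.card_pos.mp (by omega)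
    have hc := Finset.card_erase_of_mem hp
    have hsum := Finset.card_filter_add_card_filter_not (s := s.erase p) (fun x => r p x)
    have hsub : ∀ (q : X → Prop) [DecidablePred q], (s.erase p).filter q ⊆ s := fun q _ =>
      (Finset.filter_subset _ _).trans (Finset.erase_subset _ _)
    by_cases hN : N1 ≤ ((s.erase p).filter (fun x => r p x)).card
    · rcases h1 X r hr _ hN with ⟨t, ht, hta, htr⟩ | ⟨t, ht, hta, htr⟩
      · have hpt : p ∉ t := fun hh => by simpa using ht hh
        have hrt : ∀ x ∈ t, r p x := fun x hx => by simpa using (Finset.mem_filter.mp (ht hx)).2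
        refine Or.inl ⟨insert p t, ?_, ?_, ?_⟩
        · exact Finset.insert_subset hp (ht.trans (hsub _))
        · rw [Finset.card_insert_of_notMem hpt, hta]
        · intro x hx y hy hxy
          rcases Finset.mem_insert.mp hx with rfl | hx2
          · rcases Finset.mem_insert.mp hy with rfl | hy2
            · exact absurd rfl hxy
            · exact hrt y hy2
          · rcases Finset.mem_insert.mp hy with rfl | hy2
            · exact hr _ _ (hrt x hx2)
            · exact htr x hx2 y hy2 hxy
      · exact Or.inr ⟨t, ht.trans (hsub _), hta, htr⟩
    · have hN2 : N2 ≤ ((s.erase p).filter (fun x => ¬ r p x)).card := by omega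
      rcases h2 X r hr _ hN2 with ⟨t, ht, hta, htr⟩ | ⟨t, ht, hta, htr⟩
      · exact Or.inl ⟨t, ht.trans (hsub _), hta, htr⟩
      · have hpt : p ∉ t := fun hh => by simpa using ht hh
        have hrt : ∀ x ∈ t, ¬ r p x := fun x hx => (Finset.mem_filter.mp (ht hx)).2
        refine Or.inr ⟨insert p t, ?_, ?_, ?_⟩
        · exact Finset.insert_subset hp (ht.trans (hsub _))
        · rw [Finset.card_insert_of_notMem hpt, hta]
        · intro x hx y hy hxy
          rcases Finset.mem_insert.mp hx with rfl | hx2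
          · rcases Finset.mem_insert.mp hy with rfl | hy2
            · exact absurd rfl hxy
            · exact hrt y hy2
          · rcases Finset.mem_insert.mp hy with rfl | hy2
            · exact fun hh => hrt x hx2 (hr _ _ hh)
            · exact htr x hx2 y hy2 hxy

theorem iter_aux (L m : ℕ) : ∃ N : ℕ, ∀ (X : Type) (P : X → X → X → Prop),
    (∀ p x y, P p x y → P p y x) → ∀ s : Finset X, N ≤ s.card →
    (∀ p ∈ s, ∀ t ⊆ s, p ∉ t → t.card = L → ∃ x ∈ t, ∃ y ∈ t, x ≠ y ∧ P p x y) →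
    ∃ q ∈ s, ∃ t ⊆ s, q ∉ t ∧ t.card = m ∧
      ∀ x ∈ t, ∀ y ∈ t, x ≠ y → P x y q ∨ P y x q := by
  classical
  induction m with
  | zero =>
    refine ⟨1, fun X P _ s hs _ => ?_⟩
    obtain ⟨p, hp⟩ : s.Nonempty := Finset.card_pos.mp (by omega)
    exact ⟨p, hp, ∅, by simp, by simp, by simp, by simp⟩
  | succ m ih =>
    obtain ⟨N, hN⟩ := ih
    obtain ⟨M, hM⟩ := ramsey_aux _ N L rfl
    refine ⟨M + 1, fun X P hP s hs h => ?_⟩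
    obtain ⟨p, hp⟩ : s.Nonempty := Finset.card_pos.mp (by omega)
    have hc := Finset.card_erase_of_mem hp
    rcases hM X (P p) (hP p) (s.erase p) (by omega) with ⟨T, hT, hTc, hTr⟩ | ⟨T, hT, hTc, hTr⟩
    · have hTs : T ⊆ s := hT.trans (Finset.erase_subset _ _)
      have hpT : p ∉ T := fun hh => by simpa using hT hh
      obtain ⟨q, hq, t, ht, hqt, htc, htr⟩ := hN X P hP T hTc.ge
        (fun p' hp' t ht => h p' (hTs hp') t (ht.trans hTs))
      have hpt : p ∉ t := fun hh => hpT (ht hh)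
      refine ⟨q, hTs hq, insert p t, Finset.insert_subset hp (ht.trans hTs), ?_, ?_, ?_⟩
      · intro hh
        rcases Finset.mem_insert.mp hh with rfl | hh
        · exact hpT hq
        · exact hqt hh
      · rw [Finset.card_insert_of_notMem hpt, htc]
      · have key : ∀ x ∈ t, P p x q := fun x hx =>
          hTr x (ht hx) q hq (fun e => hqt (e ▸ hx))
        intro x hx y hy hxy
        rcases Finset.mem_insert.mp hx with rfl | hx2
        · rcases Finset.mem_insert.mp hy with rfl | hy2
          · exact absurd rfl hxy
          · exact Or.inl (key y hy2)
        · rcases Finset.mem_insert.mp hy with rfl | hy2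
          · exact Or.inr (key x hx2)
          · exact htr x hx2 y hy2 hxy
    · exfalso
      obtain ⟨x, hx, y, hy, hxy, hh⟩ := h p hp T (hT.trans (Finset.erase_subset _ _))
        (fun hh => by simpa using hT hh) hTc
      exact hTr x hx y hy hxy hh

theorem geom_aux (α a b c : ℝ) (h0 : 0 < α) (h1 : α < 1) (ha : 0 < a) (hb : 0 < b) (hc : 0 < c)
    (t1 : a ≤ b + c) (t2 : b ≤ a + c) (t3 : c ≤ a + b)
    (hs : c ≤ max (a + α * b) (α * a + b))
    (hA : Real.arccos ((b^2 + c^2 - a^2) / (2 * b * c)) < Real.arccos α / 2)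
    (hB : Real.arccos ((a^2 + c^2 - b^2) / (2 * a * c)) < Real.arccos α / 2) : False := by
  set u := (b^2 + c^2 - a^2) / (2 * b * c) with hu
  set v := (a^2 + c^2 - b^2) / (2 * a * c) with hv
  have u1 : -1 ≤ u := by
    rw [hu, le_div_iff₀ (by positivity)]
    nlinarith [mul_nonneg (by linarith : 0 ≤ b + c - a) (by linarith : 0 ≤ b + c + a)]
  have u2 : u ≤ 1 := by
    rw [hu, div_le_iff₀ (by positivity)]
    nlinarith [mul_nonneg (by linarith : 0 ≤ a + c - b) (by linarith : 0 ≤ a + b - c)]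
  have v1 : -1 ≤ v := by
    rw [hv, le_div_iff₀ (by positivity)]
    nlinarith [mul_nonneg (by linarith : 0 ≤ a + c - b) (by linarith : 0 ≤ b + c + a)]
  have v2 : v ≤ 1 := by
    rw [hv, div_le_iff₀ (by positivity)]
    nlinarith [mul_nonneg (by linarith : 0 ≤ b + c - a) (by linarith : 0 ≤ a + b - c)]
  have hcos : α < Real.cos (Real.arccos u + Real.arccos v) := by
    have := Real.cos_lt_cos_of_nonneg_of_le_pi
      (add_nonneg (Real.arccos_nonneg u) (Real.arccos_nonneg v)) (Real.arccos_le_pi α)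
      (by linarith)
    rwa [Real.cos_arccos (by linarith) h1.le] at this
  rw [Real.cos_add, Real.cos_arccos u1 u2, Real.cos_arccos v1 v2, Real.sin_arccos,
    Real.sin_arccos, ← Real.sqrt_mul (by nlinarith)] at hcos
  have e1 : 1 - u^2 = (4*b^2*c^2 - (b^2+c^2-a^2)^2) / (2*b*c)^2 := by
    rw [hu]; field_simp; ring
  have e2 : 1 - v^2 = (4*b^2*c^2 - (b^2+c^2-a^2)^2) / (2*a*c)^2 := by
    rw [hv]; field_simp; ring
  have hS : 0 ≤ 4*b^2*c^2 - (b^2+c^2-a^2)^2 := by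
    have : 0 ≤ (1 - u^2) * (2*b*c)^2 := mul_nonneg (by nlinarith) (by positivity)
    rwa [e1, div_mul_cancel₀ _ (by positivity)] at this
  have e3 : (1 - u^2) * (1 - v^2) = ((4*b^2*c^2 - (b^2+c^2-a^2)^2) / (4*a*b*c^2))^2 := by
    rw [e1, e2]; field_simp; ring
  rw [e3, Real.sqrt_sq (by positivity)] at hcos
  have e4 : u * v - (4*b^2*c^2 - (b^2+c^2-a^2)^2) / (4*a*b*c^2) = (c^2 - a^2 - b^2) / (2*a*b) := by
    rw [hu, hv]; field_simp; ring
  rw [e4, lt_div_iff₀ (by positivity)] at hcos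
  rcases le_max_iff.mp hs with h | h
  · have : c^2 ≤ (a + α*b)^2 := by gcongr
    have h3 := mul_pos (mul_pos hb hb) (by nlinarith : 0 < 1 - α^2)
    linarith [show (a + α*b)^2 = a^2 + α*(2*a*b) + b^2 - b*b*(1-α^2) by ring]
  · have : c^2 ≤ (α*a + b)^2 := by gcongr
    have h3 := mul_pos (mul_pos ha ha) (by nlinarith : 0 < 1 - α^2)
    linarith [show (α*a + b)^2 = a^2 + α*(2*a*b) + b^2 - a*a*(1-α^2) by ring]

theorem compAngle_comm_aux {X : Type*} [MetricSpace X] (p x y : X) :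
    compAngle p x y = compAngle p y x := by
  unfold compAngle
  rw [dist_comm x y]
  congr 1
  ring

theorem two_small_aux {X : Type*} [MetricSpace X] {α : ℝ} (h0 : 0 < α) (h1 : α < 1) {s : Set X}
    (hs : IsSRA α s) {q x y : X} (hq : q ∈ s) (hx : x ∈ s) (hy : y ∈ s)
    (hqx : q ≠ x) (hqy : q ≠ y) (hxy : x ≠ y)
    (hA : compAngle q x y < Real.arccos α / 2) (hB : compAngle x y q < Real.arccos α / 2) :
    False := by
  have key := hs q hq x hx y hy
  rw [compAngle_comm_aux] at hA
  unfold compAngle at hA hB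
  refine geom_aux α (dist x y) (dist q y) (dist q x) h0 h1 (dist_pos.mpr hxy) (dist_pos.mpr hqy)
    (dist_pos.mpr hqx) ?_ ?_ ?_ ?_ ?_ ?_
  · have := dist_triangle x q y; rw [dist_comm x q] at this; linarith
  · have := dist_triangle q x y; linarith
  · have := dist_triangle q y x; rw [dist_comm y x] at this; linarith
  · rw [dist_comm y x] at key
    rw [max_comm]
    rwa [add_comm (α * dist x y), add_comm (dist x y)]
  · rw [dist_comm y q, dist_comm x q, dist_comm y x] at hA; exact hA
  · rw [dist_comm y q, dist_comm y x] at hB; exact hB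

/-- If every point of `B_R(x)` satisfies `ATB(arccos α / 2)` with constants `L` and `2R`,
then there is `N`, depending only on `L`, such that `B_R(x)` contains no `N`-point
`SRA(α)`-subset. -/
theorem atb_prevents_large_sra :
    ∀ L : ℕ, ∃ N : ℕ,
      ∀ (X : Type) [MetricSpace X], ∀ α : ℝ, 0 < α → α < 1 →
        ∀ (x : X) (R : ℝ), 0 < R →
          (∀ p ∈ Metric.ball x R, ATBPoint (Real.arccos α / 2) p L (2 * R)) →
          ¬ ∃ s : Finset X, s.card = N ∧ (↑s : Set X) ⊆ Metric.ball x R ∧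
            IsSRA α (↑s : Set X) := by
  intro L
  obtain ⟨N, hN⟩ := iter_aux L L
  refine ⟨N, ?_⟩
  rintro X _ α h0 h1 x R hR hATB ⟨s, hsc, hsb, hs⟩
  have hP : ∀ p ∈ s, ∀ t ⊆ s, p ∉ t → t.card = L →
      ∃ x ∈ t, ∃ y ∈ t, x ≠ y ∧ compAngle p x y < Real.arccos α / 2 := by
    intro p hp t ht hpt htc
    let e := t.equivFinOfCardEq htc
    obtain ⟨i, j, hij, h⟩ := hATB p (hsb hp) (fun i => (e.symm i : X)) (fun i => by
      have hm : (e.symm i : X) ∈ t := (e.symm i).2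
      refine ⟨?_, fun hh => hpt (hh ▸ hm)⟩
      have a1 := Metric.mem_ball.mp (hsb (ht hm))
      have a2 := Metric.mem_ball.mp (hsb hp)
      rw [Metric.mem_ball]
      have := dist_triangle_right (e.symm i : X) p x
      linarith)
    exact ⟨_, (e.symm i).2, _, (e.symm j).2,
      fun hh => hij (e.symm.injective (Subtype.ext hh)), h⟩
  obtain ⟨q, hq, t, ht, hqt, htc, htr⟩ := hN X
    (fun p x y => compAngle p x y < Real.arccos α / 2)
    (fun p x y h => by rwa [compAngle_comm_aux]) s hsc.ge hP
  obtain ⟨y, hy, z, hz, hyz, h⟩ := hP q hq t ht hqt htc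
  have hqy : q ≠ y := fun e => hqt (e ▸ hy)
  have hqz : q ≠ z := fun e => hqt (e ▸ hz)
  rcases htr y hy z hz hyz with h' | h'
  · exact two_small_aux h0 h1 hs hq (ht hy) (ht hz) hqy hqz hyz h h'
  · rw [compAngle_comm_aux] at h
    exact two_small_aux h0 h1 hs hq (ht hz) (ht hy) hqz hqy hyz.symm h h'
end

section
/- Let 0 < ε < π/6. If a metric space (X,d) is semi-globally ATB(ε), then every bounded self-contracted curve in X is rectifiable. -/
/-- `X` is semi-globally `ATB(ε)`: for every `x` and `R > 0` there is `L` such that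
every `p ∈ B_R(x)` satisfies `ATB(ε)` with constants `L` and `R`. -/
def SemiGlobalATB (X : Type*) [MetricSpace X] (ε : ℝ) : Prop :=
  ∀ (x : X) (R : ℝ), 0 < R → ∃ L : ℕ, ∀ p ∈ Metric.ball x R, ATBPoint ε p L R


namespace SCProof

/-- total length of consecutive steps between indices -/
noncomputable def len {X : Type*} [MetricSpace X] (x : ℕ → X) (a b : ℕ) : ℝ :=
  ∑ i ∈ Finset.Ico a b, dist (x i) (x (i + 1))

theorem len_nonneg {X : Type*} [MetricSpace X] (x : ℕ → X) (a b : ℕ) : 0 ≤ len x a b :=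
  Finset.sum_nonneg fun _ _ => dist_nonneg

theorem len_add {X : Type*} [MetricSpace X] (x : ℕ → X) {a b c : ℕ} (h : a ≤ b) (h' : b ≤ c) :
    len x a b + len x b c = len x a c :=
  Finset.sum_Ico_consecutive _ h h'

theorem len_self {X : Type*} [MetricSpace X] (x : ℕ → X) (a : ℕ) : len x a a = 0 := by
  simp [len]

theorem len_succ {X : Type*} [MetricSpace X] (x : ℕ → X) (a : ℕ) :
    len x a (a + 1) = dist (x a) (x (a + 1)) := by
  simp [len]

/-- the self-contracted property for sequences -/
def SC {X : Type*} [MetricSpace X] (x : ℕ → X) : Prop :=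
  ∀ i j k : ℕ, i ≤ j → j ≤ k → dist (x j) (x k) ≤ dist (x i) (x k)

/-- uniform angle condition on a set -/
def AT {X : Type*} [MetricSpace X] (ε : ℝ) (L : ℕ) (S : Set X) : Prop :=
  ∀ p ∈ S, ∀ y : Fin L → X, (∀ i, y i ∈ S ∧ y i ≠ p) →
    ∃ i j, i ≠ j ∧ compAngle p (y i) (y j) < ε

theorem cos_eps {ε : ℝ} (hε0 : 0 < ε) (hε : ε < Real.pi / 6) : (86 / 100 : ℝ) < Real.cos ε := by
  have h1 : Real.cos (Real.pi / 6) < Real.cos ε :=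
    Real.cos_lt_cos_of_nonneg_of_le_pi hε0.le (by linarith [Real.pi_pos]) hε
  rw [Real.cos_pi_div_six] at h1
  have h2 : (1.72 : ℝ) < Real.sqrt 3 := by
    apply Real.lt_sqrt_of_sq_lt; norm_num
  linarith

theorem AT_finset {X : Type*} [MetricSpace X] {ε : ℝ} {L : ℕ} {S : Set X} (hS : AT ε L S)
    {p : X} (hp : p ∈ S) (T : Finset X) (hT : ∀ z ∈ T, z ∈ S ∧ z ≠ p) (hc : L ≤ T.card) :
    ∃ z ∈ T, ∃ w ∈ T, z ≠ w ∧ compAngle p z w < ε := by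
  obtain ⟨U, hU, hUc⟩ := Finset.exists_subset_card_eq hc
  let e := U.equivFinOfCardEq hUc
  obtain ⟨i, j, hij, h⟩ := hS p hp (fun i => (e.symm i : X)) (fun i => hT _ (hU (e.symm i).2))
  refine ⟨_, hU (e.symm i).2, _, hU (e.symm j).2, ?_, h⟩
  intro h'
  exact hij (e.symm.injective (Subtype.ext h'))

theorem small_angle_dist {X : Type*} [MetricSpace X] {ε : ℝ} (hε0 : 0 < ε)
    (hε : ε < Real.pi / 6) {p z w : X} (hz : z ≠ p) (hw : w ≠ p)
    (h : compAngle p z w < ε) :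
    dist z w ^ 2 < (dist z p - dist w p) ^ 2 + 28 / 100 * (dist z p * dist w p) := by
  have hzp := dist_pos.2 hz
  have hwp := dist_pos.2 hw
  have hc := cos_eps hε0 hε
  unfold compAngle at h
  have h1 : Real.cos ε < (dist z p ^ 2 + dist w p ^ 2 - dist z w ^ 2) / (2 * dist z p * dist w p) := by
    by_contra hcon
    push Not at hcon
    have := Real.arccos_le_arccos hcon
    rw [Real.arccos_cos hε0.le (by linarith [Real.pi_pos])] at this
    linarith
  have h2 := hc.trans h1
  rw [lt_div_iff₀ (by positivity)] at h2
  nlinarith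

theorem sep_base {X : Type*} [MetricSpace X] {ε : ℝ} (hε0 : 0 < ε)
    (hε : ε < Real.pi / 6) {L : ℕ} {S : Set X} (hS : AT ε L S) {p : X} (hp : p ∈ S)
    {σ : ℝ} (hσ : 0 < σ) (T : Finset X) (hT : ∀ z ∈ T, z ∈ S ∧ dist z p ≤ σ)
    (hsep : ∀ z ∈ T, ∀ w ∈ T, z ≠ w → 3 / 4 * σ < dist z w) : T.card ≤ 2 * L + 1 := by
  classical
  have key : ∀ U ⊆ T, (∀ z ∈ U, z ≠ p) →
      (∀ z ∈ U, ∀ w ∈ U, (dist z p - dist w p) ^ 2 ≤ σ ^ 2 / 4) → U.card < L := by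
    intro U hU hne hd
    by_contra hcon
    push Not at hcon
    obtain ⟨z, hz, w, hw, hzw, ha⟩ := AT_finset hS hp U (fun z hz => ⟨(hT z (hU hz)).1, hne z hz⟩) hcon
    have h1 := small_angle_dist hε0 hε (hne z hz) (hne w hw) ha
    have h2 := hsep z (hU hz) w (hU hw) hzw
    have h3 := hd z hz w hw
    have h4 := (hT z (hU hz)).2
    have h5 := (hT w (hU hw)).2
    have h6 : dist z p * dist w p ≤ σ * σ := mul_le_mul h4 h5 dist_nonneg hσ.le
    nlinarith
  set V := T.erase p
  have hV : T.card ≤ V.card + 1 := by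
    have := Finset.pred_card_le_card_erase (s := T) (a := p)
    change T.card ≤ (T.erase p).card + 1
    omega
  have h1 := key (V.filter (fun z => dist z p ≤ σ / 2))
    ((Finset.filter_subset _ _).trans (Finset.erase_subset _ _))
    (fun z hz => Finset.ne_of_mem_erase (Finset.mem_filter.1 hz).1) (by
      intro z hz w hw
      have a1 := (Finset.mem_filter.1 hz).2
      have a2 := (Finset.mem_filter.1 hw).2
      have a3 := dist_nonneg (x := z) (y := p)
      have a4 := dist_nonneg (x := w) (y := p)
      have : |dist z p - dist w p| ≤ σ / 2 := abs_le.2 ⟨by linarith, by linarith⟩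
      have := sq_le_sq' (abs_le.1 this).1 (abs_le.1 this).2
      nlinarith)
  have h2 := key (V.filter (fun z => ¬ dist z p ≤ σ / 2))
    ((Finset.filter_subset _ _).trans (Finset.erase_subset _ _))
    (fun z hz => Finset.ne_of_mem_erase (Finset.mem_filter.1 hz).1) (by
      intro z hz w hw
      have a1 := (Finset.mem_filter.1 hz).2
      have a2 := (Finset.mem_filter.1 hw).2
      push Not at a1 a2
      have a3 := (hT z (Finset.mem_of_mem_erase (Finset.mem_filter.1 hz).1)).2
      have a4 := (hT w (Finset.mem_of_mem_erase (Finset.mem_filter.1 hw).1)).2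
      have : |dist z p - dist w p| ≤ σ / 2 := abs_le.2 ⟨by linarith, by linarith⟩
      have := sq_le_sq' (abs_le.1 this).1 (abs_le.1 this).2
      nlinarith)
  have h3 := Finset.card_filter_add_card_filter_not (s := V) (fun z => dist z p ≤ σ / 2)
  omega

theorem exists_net {X : Type*} [MetricSpace X] (s : ℝ) (hs : 0 ≤ s) (T : Finset X) :
    ∃ Y ⊆ T, (∀ z ∈ Y, ∀ w ∈ Y, z ≠ w → s < dist z w) ∧ ∀ z ∈ T, ∃ y ∈ Y, dist z y ≤ s := by
  classical
  induction T using Finset.induction_on with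
  | empty => exact ⟨∅, by simp, by simp, by simp⟩
  | insert a T ha ih =>
    obtain ⟨Y, hY, h1, h2⟩ := ih
    by_cases h : ∃ y ∈ Y, dist a y ≤ s
    · refine ⟨Y, hY.trans (Finset.subset_insert _ _), h1, ?_⟩
      intro z hz
      rcases Finset.mem_insert.1 hz with rfl | hz
      · exact h
      · exact h2 z hz
    · push Not at h
      refine ⟨insert a Y, Finset.insert_subset_insert _ hY, ?_, ?_⟩
      · intro z hz w hw hzw
        rcases Finset.mem_insert.1 hz with rfl | hz <;> rcases Finset.mem_insert.1 hw with rfl | hw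
        · exact absurd rfl hzw
        · exact h w hw
        · rw [dist_comm]; exact h z (by assumption)
        · exact h1 z hz w hw hzw
      · intro z hz
        rcases Finset.mem_insert.1 hz with rfl | hz
        · exact ⟨z, by simp, by simpa using hs⟩
        · obtain ⟨y, hy, hd⟩ := h2 z hz
          exact ⟨y, by simp [hy], hd⟩

theorem sep_iter {X : Type*} [MetricSpace X] {ε : ℝ} (hε0 : 0 < ε)
    (hε : ε < Real.pi / 6) {L : ℕ} {S : Set X} (hS : AT ε L S) (n : ℕ) :
    ∃ M : ℕ, ∀ p ∈ S, ∀ σ : ℝ, 0 < σ → ∀ T : Finset X, (∀ z ∈ T, z ∈ S ∧ dist z p ≤ σ) →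
      (∀ z ∈ T, ∀ w ∈ T, z ≠ w → (3 / 4) ^ n * σ < dist z w) → T.card ≤ M := by
  classical
  induction n with
  | zero =>
    refine ⟨2 * L + 1, fun p hp σ hσ T hT hsep => sep_base hε0 hε hS hp hσ T hT ?_⟩
    intro z hz w hw hzw
    have := hsep z hz w hw hzw
    simp at this
    linarith
  | succ n ih =>
    obtain ⟨M, hM⟩ := ih
    refine ⟨(2 * L + 1) * M, fun p hp σ hσ T hT hsep => ?_⟩
    obtain ⟨Y, hY, h1, h2⟩ := exists_net (3 / 4 * σ) (by positivity) T
    have hYc := sep_base hε0 hε hS hp hσ Y (fun z hz => hT z (hY hz)) h1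
    have hsub : T ⊆ Y.biUnion (fun y => T.filter (fun z => dist z y ≤ 3 / 4 * σ)) := by
      intro z hz
      obtain ⟨y, hy, hd⟩ := h2 z hz
      exact Finset.mem_biUnion.2 ⟨y, hy, Finset.mem_filter.2 ⟨hz, hd⟩⟩
    refine (Finset.card_le_card hsub).trans ((Finset.card_biUnion_le_card_mul _ _ M ?_).trans
      (Nat.mul_le_mul_right _ hYc))
    intro y hy
    refine hM y (hT y (hY hy)).1 (3 / 4 * σ) (by positivity) _ ?_ ?_
    · intro z hz
      obtain ⟨a, b⟩ := Finset.mem_filter.1 hz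
      exact ⟨(hT z a).1, b⟩
    · intro z hz w hw hzw
      have := hsep z (Finset.mem_filter.1 hz).1 w (Finset.mem_filter.1 hw).1 hzw
      rw [pow_succ] at this
      linarith

theorem sep_bound {X : Type*} [MetricSpace X] {ε : ℝ} (hε0 : 0 < ε)
    (hε : ε < Real.pi / 6) {L : ℕ} {S : Set X} (hS : AT ε L S) :
    ∃ M : ℕ, ∀ p ∈ S, ∀ σ : ℝ, 0 < σ → ∀ T : Finset X, (∀ z ∈ T, z ∈ S ∧ dist z p ≤ σ) →
      (∀ z ∈ T, ∀ w ∈ T, z ≠ w → σ / 20 < dist z w) → T.card ≤ M := by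
  obtain ⟨M, hM⟩ := sep_iter hε0 hε hS 11
  refine ⟨M, fun p hp σ hσ T hT hsep => hM p hp σ hσ T hT fun z hz w hw hzw => ?_⟩
  have := hsep z hz w hw hzw
  norm_num
  linarith

theorem shell {X : Type*} [MetricSpace X] (x : ℕ → X) (ρ B τ : ℝ) (hB : 0 ≤ B) (hρ : 0 ≤ ρ) (hτ : 0 ≤ τ)
    (e : ℕ) (M : ℕ) : ∀ y : ℕ, e ≤ y →
    (∀ i, e ≤ i → i < y → dist (x i) (x (i + 1)) ≤ τ) →
    (∀ t i, e ≤ t → t ≤ i → i < y → dist (x t) (x i) ≤ ρ → len x t i ≤ B) →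
    (∀ T : Finset X, (∀ z ∈ T, ∃ i, e ≤ i ∧ i < y ∧ z = x i) →
      (∀ z ∈ T, ∀ w ∈ T, z ≠ w → ρ < dist z w) → T.card ≤ M) →
    len x e y ≤ M * (B + τ) := by
  classical
  induction M with
  | zero =>
    intro y hy _ _ h
    rcases hy.eq_or_lt with rfl | hlt
    · simp [len_self]
    · have := h {x e} (by simp; exact ⟨e, le_rfl, hlt, rfl⟩) (by simp)
      simp at this
  | succ M ih =>
    intro y hy hstep hcalm hsep
    rcases hy.eq_or_lt with rfl | hlt
    · rw [len_self]; positivity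
    · obtain ⟨f, rfl⟩ : ∃ f, y = f + 1 := ⟨y - 1, by omega⟩
      have hf : e ≤ f := by omega
      have hex : ∃ t, e ≤ t ∧ dist (x t) (x f) ≤ ρ := ⟨f, hf, by simpa using hρ⟩
      set t := Nat.find hex with ht
      obtain ⟨ht1, ht2⟩ := Nat.find_spec hex
      have ht3 : t ≤ f := Nat.find_min' hex ⟨hf, by simpa using hρ⟩
      have hmin : ∀ i, e ≤ i → i < t → ρ < dist (x i) (x f) := by
        intro i hi hit
        by_contra hcon
        exact Nat.find_min hex hit ⟨hi, not_lt.1 hcon⟩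
      have h1 : len x e t ≤ M * (B + τ) := by
        apply ih t ht1
        · intro i h1 h2; exact hstep i h1 (by omega)
        · intro s i h1 h2 h3; exact hcalm s i h1 h2 (by omega)
        · intro T hT hTs
          have hnot : x f ∉ T := by
            intro hm
            obtain ⟨i, hi1, hi2, hi3⟩ := hT _ hm
            have := hmin i hi1 hi2
            rw [← hi3, dist_self] at this
            linarith
          have := hsep (insert (x f) T) (by
            intro z hz
            rcases Finset.mem_insert.1 hz with rfl | hz
            · exact ⟨f, hf, by omega, rfl⟩
            · obtain ⟨i, hi1, hi2, hi3⟩ := hT _ hz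
              exact ⟨i, hi1, by omega, hi3⟩) (by
            have hh : ∀ z ∈ T, ρ < dist z (x f) := by
              intro z hz
              obtain ⟨i, hi1, hi2, rfl⟩ := hT _ hz
              exact hmin i hi1 hi2
            intro z hz w hw hzw
            rcases Finset.mem_insert.1 hz with rfl | hz <;>
              rcases Finset.mem_insert.1 hw with rfl | hw
            · exact absurd rfl hzw
            · rw [dist_comm]; exact hh w hw
            · exact hh z hz
            · exact hTs z hz w hw hzw)
          rw [Finset.card_insert_of_notMem hnot] at this
          omega
      have h2 := hcalm t f ht1 ht3 (by omega) ht2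
      have h3 := hstep f hf (by omega)
      rw [← len_add x ht1 (show t ≤ f + 1 by omega), ← len_add x ht3 (show f ≤ f + 1 by omega),
        len_succ]
      push_cast
      linarith

/-- calm runs are short -/
theorem calm_run {X : Type*} [MetricSpace X] {S : Set X} {M : ℕ}
    (hM : ∀ p ∈ S, ∀ σ : ℝ, 0 < σ → ∀ T : Finset X, (∀ z ∈ T, z ∈ S ∧ dist z p ≤ σ) →
      (∀ z ∈ T, ∀ w ∈ T, z ≠ w → σ / 20 < dist z w) → T.card ≤ M)
    (x : ℕ → X) (hx : SC x) (hxS : ∀ i, x i ∈ S) (K : ℝ) (hK : 0 ≤ K) (v : ℕ) :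
    ∀ n e : ℕ, e + n = v →
    (∀ t u, e ≤ t → t ≤ u → u < v → dist (x t) (x u) ≤ dist (x u) (x v) / 10 →
      len x t u ≤ K * dist (x t) (x u)) →
    len x e v ≤ 2 * (M * (K + 2)) * dist (x e) (x v) := by
  intro n
  induction n using Nat.strong_induction_on with
  | _ n ih =>
    intro e hev hcalm
    have hev' : e ≤ v := by omega
    set σ := dist (x e) (x v) with hσ
    have hstep : ∀ i, e ≤ i → i < v → dist (x i) (x (i + 1)) ≤ 2 * σ := by
      intro i h1 h2
      have a1 := hx e i v h1 h2.le
      have a2 := hx e (i + 1) v (by omega) (by omega)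
      have := dist_triangle_right (x i) (x (i + 1)) (x v)
      linarith
    rcases (dist_nonneg (x := x e) (y := x v)).eq_or_lt with h0 | hpos
    · have : len x e v ≤ 0 := by
        apply Finset.sum_nonpos
        intro i hi
        obtain ⟨a, b⟩ := Finset.mem_Ico.1 hi
        have := hstep i a b
        rw [hσ, ← h0] at this
        linarith
      rw [hσ, ← h0]; linarith
    · rw [← hσ] at hpos
      have hex : ∃ y, e ≤ y ∧ dist (x y) (x v) ≤ σ / 2 := ⟨v, hev', by simp; positivity⟩
      set y := Nat.find hex with hy
      obtain ⟨hy1, hy2⟩ := Nat.find_spec hex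
      have hy3 : y ≤ v := Nat.find_min' hex ⟨hev', by simp; positivity⟩
      have hmin : ∀ i, e ≤ i → i < y → σ / 2 < dist (x i) (x v) := by
        intro i hi hit
        by_contra hcon
        exact Nat.find_min hex hit ⟨hi, not_lt.1 hcon⟩
      rw [← hy] at hy1 hy2
      have hne : e ≠ y := by
        intro h
        rw [← h, ← hσ] at hy2
        linarith
      have h1 : len x e y ≤ M * (K * σ + 2 * σ) := by
        apply shell x (σ / 20) (K * σ) (2 * σ) (by positivity) (by positivity) (by positivity) e M y hy1
        · intro i a b; exact hstep i a (by omega)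
        · intro t i a b c d
          have := hmin i (by omega) c
          refine (hcalm t i a b (by omega) (by linarith)).trans ?_
          exact mul_le_mul_of_nonneg_left (by linarith) hK
        · intro T hT hs
          refine hM (x v) (hxS v) σ hpos T ?_ hs
          intro z hz
          obtain ⟨i, hi1, hi2, rfl⟩ := hT z hz
          exact ⟨hxS i, hx e i v hi1 (by omega)⟩
      have h2 := ih (v - y) (by omega) y (by omega)
        (fun t u a b c d => hcalm t u (by omega) b c d)
      rw [← len_add x hy1 hy3]
      have h3 : 2 * (M * (K + 2)) * dist (x y) (x v) ≤ 2 * (M * (K + 2)) * (σ / 2) :=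
        mul_le_mul_of_nonneg_left hy2 (by positivity)
      nlinarith

/-- key lemma: a long interval contains a step which is transversal to the anchors, and
just before which there is a long interval on a smaller scale -/
theorem key_lemma {X : Type*} [MetricSpace X] {S : Set X} {M : ℕ}
    (hM : ∀ p ∈ S, ∀ σ : ℝ, 0 < σ → ∀ T : Finset X, (∀ z ∈ T, z ∈ S ∧ dist z p ≤ σ) →
      (∀ z ∈ T, ∀ w ∈ T, z ≠ w → σ / 20 < dist z w) → T.card ≤ M)
    (K : ℝ) (hK : 0 ≤ K) (r : ℕ) : ∃ K' : ℝ, 0 ≤ K' ∧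
    ∀ (x : ℕ → X), SC x → (∀ i, x i ∈ S) → ∀ (a b : ℕ) (F : Finset ℕ), a ≤ b → F.card = r →
    (∀ k ∈ F, b ≤ k) → K' * dist (x a) (x b) < len x a b →
    ∃ t u v, a ≤ t ∧ t ≤ u ∧ u < v ∧ v ≤ b ∧ 0 < dist (x u) (x v) ∧
      dist (x t) (x u) ≤ dist (x u) (x v) / 10 ∧ K * dist (x t) (x u) < len x t u ∧
      ∀ k ∈ F, dist (x u) (x k) - dist (x v) (x k) < dist (x u) (x v) / 2 := by
  set A : ℝ := M * (K + 2) with hA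
  have hA0 : 0 ≤ A := by positivity
  refine ⟨(2 + 2 * A) * 2 * r + 4 * A, by positivity, ?_⟩
  intro x hx hxS a b F hab hFr hF hlen
  by_contra hcon
  push Not at hcon
  set Φ : ℕ → ℝ := fun i => ∑ k ∈ F, dist (x i) (x k) with hΦ
  have hbad : ∀ t u v, a ≤ t → t ≤ u → u < v → v ≤ b →
      dist (x t) (x u) ≤ dist (x u) (x v) / 10 → K * dist (x t) (x u) < len x t u →
      dist (x u) (x v) / 2 ≤ Φ u - Φ v := by
    intro t u v h1 h2 h3 h4 h5 h6
    have hnn : ∀ k ∈ F, 0 ≤ dist (x u) (x k) - dist (x v) (x k) := by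
      intro k hk
      have := hx u v k h3.le (h4.trans (hF k hk))
      linarith
    have hsum : Φ u - Φ v = ∑ k ∈ F, (dist (x u) (x k) - dist (x v) (x k)) := by
      simp [hΦ, Finset.sum_sub_distrib]
    rw [hsum]
    rcases (dist_nonneg (x := x u) (y := x v)).eq_or_lt with h0 | hpos
    · rw [← h0]; simpa using Finset.sum_nonneg hnn
    · obtain ⟨k, hk, hk'⟩ := hcon t u v h1 h2 h3 h4 hpos h5 h6
      exact hk'.trans (Finset.single_le_sum hnn hk)
  have claim : ∀ v, a ≤ v → v ≤ b →
      len x a v ≤ (2 + 2 * A) * (2 * (Φ a - Φ v)) + 4 * A * dist (x a) (x b) := by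
    intro v
    induction v using Nat.strong_induction_on with
    | _ v ih =>
      intro hav hvb
      by_cases h : ∃ u, a ≤ u ∧ u < v ∧ ∃ t, a ≤ t ∧ t ≤ u ∧
          dist (x t) (x u) ≤ dist (x u) (x v) / 10 ∧ K * dist (x t) (x u) < len x t u
      · obtain ⟨u, ⟨hau, huv, t, h1, h2, h3, h4⟩, hmax⟩ :
            ∃ u, (a ≤ u ∧ u < v ∧ ∃ t, a ≤ t ∧ t ≤ u ∧
              dist (x t) (x u) ≤ dist (x u) (x v) / 10 ∧ K * dist (x t) (x u) < len x t u) ∧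
            ∀ u', u < u' → ¬ (a ≤ u' ∧ u' < v ∧ ∃ t, a ≤ t ∧ t ≤ u' ∧
              dist (x t) (x u') ≤ dist (x u') (x v) / 10 ∧
              K * dist (x t) (x u') < len x t u') := by
          classical
          obtain ⟨u0, hu0⟩ := h
          refine ⟨_, Nat.findGreatest_spec (P := fun u => a ≤ u ∧ u < v ∧ ∃ t, a ≤ t ∧ t ≤ u ∧
              dist (x t) (x u) ≤ dist (x u) (x v) / 10 ∧ K * dist (x t) (x u) < len x t u)
              (n := v) hu0.2.1.le hu0, ?_⟩
          intro u' hu' hP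
          exact Nat.findGreatest_is_greatest hu' hP.2.1.le hP
        have hb := hbad t u v h1 h2 huv hvb h3 h4
        have hr := calm_run hM x hx hxS K hK v (v - (u + 1)) (u + 1) (by omega) (by
          intro s w b1 b2 b3 b4
          by_contra hc
          exact hmax w (by omega) ⟨by omega, b3, s, by omega, b2, b4, not_le.1 hc⟩)
        have hs1 := hx u (u + 1) v (by omega) (by omega)
        have hs2 := dist_triangle_right (x u) (x (u + 1)) (x v)
        have hi := ih u huv hau (by omega)
        rw [← len_add x hau huv.le, ← len_add x (show u ≤ u + 1 by omega) (show u + 1 ≤ v by omega),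
          len_succ]
        have e1 : 2 * A * dist (x (u + 1)) (x v) ≤ 2 * A * dist (x u) (x v) :=
          mul_le_mul_of_nonneg_left hs1 (by positivity)
        have e2 : (2 + 2 * A) * dist (x u) (x v) ≤ (2 + 2 * A) * (2 * (Φ u - Φ v)) :=
          mul_le_mul_of_nonneg_left (by linarith) (by positivity)
        nlinarith
      · push Not at h
        have hr := calm_run hM x hx hxS K hK v (v - a) a (by omega) (by
          intro s w b1 b2 b3 b4
          exact h w (by omega) b3 s b1 b2 b4)
        have hd : dist (x a) (x v) ≤ 2 * dist (x a) (x b) := by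
          have := dist_triangle_right (x a) (x v) (x b)
          have := hx a v b hav hvb
          linarith
        have hmono : 0 ≤ Φ a - Φ v := by
          have : Φ v ≤ Φ a := Finset.sum_le_sum fun k hk => hx a v k hav (hvb.trans (hF k hk))
          linarith
        have e1 : 2 * A * dist (x a) (x v) ≤ 2 * A * (2 * dist (x a) (x b)) :=
          mul_le_mul_of_nonneg_left hd (by positivity)
        have e2 : 0 ≤ (2 + 2 * A) * (2 * (Φ a - Φ v)) := by positivity
        linarith
  have hfin := claim b hab le_rfl
  have hdrop : Φ a - Φ b ≤ r * dist (x a) (x b) := by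
    have : Φ a - Φ b = ∑ k ∈ F, (dist (x a) (x k) - dist (x b) (x k)) := by
      simp [hΦ, Finset.sum_sub_distrib]
    rw [this, ← hFr, ← nsmul_eq_mul]
    apply Finset.sum_le_card_nsmul
    intro k _
    have := dist_triangle (x a) (x b) (x k)
    linarith
  have e2 : (2 + 2 * A) * (2 * (Φ a - Φ b)) ≤ (2 + 2 * A) * (2 * (r * dist (x a) (x b))) :=
    mul_le_mul_of_nonneg_left (by linarith) (by positivity)
  linarith

theorem angle_ge {X : Type*} [MetricSpace X] {ε : ℝ} (hε0 : 0 < ε)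
    (hε : ε < Real.pi / 6) {p v k : X} (hv : 0 < dist p v) (hk : 0 < dist p k)
    (h1 : dist p v ≤ 2 / 9 * dist p k) (h2 : dist v k ≤ dist p k)
    (h3 : dist p k - dist v k ≤ 2 / 3 * dist p v) :
    ε ≤ compAngle p v k := by
  have hc := cos_eps hε0 hε
  have h : (dist v p ^ 2 + dist k p ^ 2 - dist v k ^ 2) / (2 * dist v p * dist k p) ≤
      Real.cos ε := by
    rw [dist_comm v p, dist_comm k p, div_le_iff₀ (by positivity)]
    have e1 : (dist p k - dist v k) * (dist p k + dist v k) ≤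
        (2 / 3 * dist p v) * (2 * dist p k) :=
      mul_le_mul h3 (by linarith) (by positivity) (by positivity)
    have e2 : dist p v * dist p v ≤ dist p v * (2 / 9 * dist p k) :=
      mul_le_mul_of_nonneg_left h1 hv.le
    have e3 : 86 / 100 * (dist p v * dist p k) ≤ Real.cos ε * (dist p v * dist p k) :=
      mul_le_mul_of_nonneg_right hc.le (by positivity)
    have e4 : 0 < dist p v * dist p k := by positivity
    nlinarith
  have := Real.arccos_le_arccos h
  rwa [Real.arccos_cos hε0.le (by linarith [Real.pi_pos])] at this

theorem compAngle_comm {X : Type*} [MetricSpace X] (p v k : X) :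
    compAngle p v k = compAngle p k v := by
  unfold compAngle
  rw [dist_comm v k]
  congr 1
  ring

theorem chain {X : Type*} [MetricSpace X] {ε : ℝ} (hε0 : 0 < ε)
    (hε : ε < Real.pi / 6) {S : Set X} {M : ℕ}
    (hM : ∀ p ∈ S, ∀ σ : ℝ, 0 < σ → ∀ T : Finset X, (∀ z ∈ T, z ∈ S ∧ dist z p ≤ σ) →
      (∀ z ∈ T, ∀ w ∈ T, z ≠ w → σ / 20 < dist z w) → T.card ≤ M) (m : ℕ) :
    ∀ (K : ℝ), 0 ≤ K → ∃ K' : ℝ, 0 ≤ K' ∧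
    ∀ (x : ℕ → X), SC x → (∀ i, x i ∈ S) → ∀ (a b : ℕ), a ≤ b →
    K' * dist (x a) (x b) < len x a b →
    ∃ (t u : ℕ) (F : Finset ℕ), t ≤ u ∧ F.card = m ∧ K * dist (x t) (x u) < len x t u ∧
      (∀ k ∈ F, u < k) ∧
      ∀ p, t ≤ p → p ≤ u → (∀ k ∈ F, 0 < dist (x p) (x k) ∧
        dist (x t) (x u) ≤ 1 / 9 * dist (x p) (x k)) ∧
        ∀ j ∈ F, ∀ k ∈ F, j ≠ k → ε ≤ compAngle (x p) (x j) (x k) := by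
  classical
  induction m with
  | zero =>
    intro K hK
    refine ⟨K, hK, fun x hx hxS a b hab hl => ⟨a, b, ∅, hab, rfl, hl, by simp, ?_⟩⟩
    intro p _ _
    simp
  | succ m ih =>
    intro K hK
    obtain ⟨K1, hK1, hkey⟩ := key_lemma hM K hK m
    obtain ⟨K2, hK2, hih⟩ := ih K1 hK1
    refine ⟨K2, hK2, fun x hx hxS a b hab hl => ?_⟩
    obtain ⟨t1, u1, F, htu1, hFc, hl1, hF1, hinv⟩ := hih x hx hxS a b hab hl
    obtain ⟨t, u, v, h1, h2, h3, h4, hpos, hsmall, hl2, hgood⟩ :=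
      hkey x hx hxS t1 u1 F htu1 hFc (fun k hk => (hF1 k hk).le) hl1
    have hvF : v ∉ F := fun h => by have := hF1 v h; omega
    have hdiam : ∀ i j, t1 ≤ i → i ≤ u1 → t1 ≤ j → j ≤ u1 →
        dist (x i) (x j) ≤ 2 * dist (x t1) (x u1) := by
      intro i j a1 a2 a3 a4
      have b1 := hx t1 i u1 a1 a2
      have b2 := hx t1 j u1 a3 a4
      have b3 := dist_triangle_right (x i) (x j) (x u1)
      linarith
    refine ⟨t, u, insert v F, h2, by rw [Finset.card_insert_of_notMem hvF, hFc], hl2, ?_, ?_⟩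
    · intro k hk
      rcases Finset.mem_insert.1 hk with rfl | hk
      · exact h3
      · have := hF1 k hk; omega
    · intro p hp1 hp2
      obtain ⟨i1, i2⟩ := hinv p (by omega) (by omega)
      have hpu := hx t p u hp1 hp2
      have hpv : 9 / 10 * dist (x u) (x v) ≤ dist (x p) (x v) := by
        have := dist_triangle_left (x u) (x v) (x p)
        linarith
      have hpv0 : 0 < dist (x p) (x v) := by linarith
      have hnew : ∀ k ∈ F, ε ≤ compAngle (x p) (x v) (x k) := by
        intro k hk
        obtain ⟨j1, j2⟩ := i1 k hk
        have huk := hF1 k hk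
        refine angle_ge hε0 hε hpv0 j1 ?_ (hx p v k (by omega) (by omega)) ?_
        · have := hdiam p v (by omega) (by omega) (by omega) h4
          linarith
        · have g := hgood k hk
          have := dist_triangle (x p) (x u) (x k)
          linarith
      refine ⟨?_, ?_⟩
      · intro k hk
        rcases Finset.mem_insert.1 hk with rfl | hk
        · exact ⟨hpv0, by linarith⟩
        · obtain ⟨j1, j2⟩ := i1 k hk
          have := hdiam u v (by omega) (by omega) (by omega) h4
          have := dist_nonneg (x := x t1) (y := x u1)
          exact ⟨j1, by linarith⟩
      · intro j hj k hk hjk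
        rcases Finset.mem_insert.1 hj with rfl | hj' <;> rcases Finset.mem_insert.1 hk with rfl | hk'
        · exact absurd rfl hjk
        · exact hnew k hk'
        · rw [compAngle_comm]; exact hnew j hj'
        · exact i2 j hj' k hk' hjk

theorem main_seq {X : Type*} [MetricSpace X] {ε : ℝ} (hε0 : 0 < ε)
    (hε : ε < Real.pi / 6) {L : ℕ} {S : Set X} (hS : AT ε L S) :
    ∃ K : ℝ, 0 ≤ K ∧ ∀ (x : ℕ → X), SC x → (∀ i, x i ∈ S) → ∀ n, 
      len x 0 n ≤ K * dist (x 0) (x n) := by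
  obtain ⟨M, hM⟩ := sep_bound hε0 hε hS
  obtain ⟨K, hK, h⟩ := chain hε0 hε hM L 0 le_rfl
  refine ⟨K, hK, fun x hx hxS n => ?_⟩
  by_contra hcon
  obtain ⟨t, u, F, htu, hFc, -, -, hinv⟩ := h x hx hxS 0 n (Nat.zero_le _) (not_le.1 hcon)
  obtain ⟨i1, i2⟩ := hinv u htu le_rfl
  let e := F.equivFinOfCardEq hFc
  obtain ⟨i, j, hij, ha⟩ := hS (x u) (hxS u) (fun i => x (e.symm i : ℕ)) (fun i =>
    ⟨hxS _, fun h' => by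
      have := (i1 _ (e.symm i).2).1
      rw [h', dist_self] at this
      exact lt_irrefl _ this⟩)
  have := i2 _ (e.symm i).2 _ (e.symm j).2 (fun h' => hij (e.symm.injective (Subtype.ext h')))
  exact absurd ha (not_lt.2 this)

end SCProof

/-- In a semi-globally `ATB(ε)` metric space with `0 < ε < π/6`, every bounded
self-contracted curve is rectifiable. -/
theorem rectifiable_of_semiGlobalATB
    {X : Type*} [MetricSpace X] (ε : ℝ) (hε0 : 0 < ε) (hε : ε < Real.pi / 6)
    (hATB : SemiGlobalATB X ε)
    (γ : ℝ → X) (I : Set ℝ) (hI : I.OrdConnected)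
    (hbdd : Bornology.IsBounded (γ '' I))
    (hsc : SelfContracted γ I) :
    Rectifiable γ I := by
  obtain ⟨R, hR⟩ := Metric.isBounded_iff.1 hbdd
  rcases I.eq_empty_or_nonempty with rfl | ⟨t0, ht0⟩
  · exact ⟨0, fun k t ht _ => absurd (ht 0) (Set.notMem_empty _)⟩
  have hR0 : 0 ≤ R := dist_nonneg.trans (hR ⟨t0, ht0, rfl⟩ ⟨t0, ht0, rfl⟩)
  obtain ⟨L, hL⟩ := hATB (γ t0) (R + 1) (by linarith)
  have hS : SCProof.AT ε L (γ '' I) := by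
    intro p hp y hy
    refine hL p ?_ y ?_
    · rw [Metric.mem_ball]
      have := hR hp ⟨t0, ht0, rfl⟩
      linarith
    · intro i
      refine ⟨?_, (hy i).2⟩
      rw [Metric.mem_ball]
      have := hR (hy i).1 hp
      linarith
  obtain ⟨K, hK, h⟩ := SCProof.main_seq hε0 hε hS
  refine ⟨K * R, fun k t ht hmono => ?_⟩
  let x : ℕ → X := fun i => γ (t ⟨min i k, by omega⟩)
  have hx : SCProof.SC x := by
    intro i j l hij hjl
    refine hsc _ (ht _) _ (ht _) _ (ht _) (hmono.monotone ?_) (hmono.monotone ?_)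
    · rw [Fin.le_def]; simp only; omega
    · rw [Fin.le_def]; simp only; omega
  have hxS : ∀ i, x i ∈ γ '' I := fun i => ⟨_, ht _, rfl⟩
  have h1 := h x hx hxS k
  have h2 : ∑ i : Fin k, dist (γ (t i.castSucc)) (γ (t i.succ)) = SCProof.len x 0 k := by
    unfold SCProof.len
    rw [← Finset.range_eq_Ico, ← Fin.sum_univ_eq_sum_range (fun i => dist (x i) (x (i + 1))) k]
    refine Finset.sum_congr rfl fun i _ => ?_
    have e1 : x i = γ (t i.castSucc) := by
      simp only [x]; congr 2; ext; simp
    have e2 : x (i + 1) = γ (t i.succ) := by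
      simp only [x]; congr 2; ext; simp
    rw [e1, e2]
  rw [h2]
  exact h1.trans (mul_le_mul_of_nonneg_left (hR (hxS 0) (hxS k)) hK)
end

section
/- Let 0 < ε < π/6. If (X,d) is a proper metric space (every bounded closed set is compact) which is locally ATB(ε), then every bounded self-contracted curve in X is rectifiable. -/
/-- `X` is locally `ATB(ε)`: for every `x` there are `L ∈ ℕ` and `R > 0` such that
every `p ∈ B_R(x)` satisfies `ATB(ε)` with constants `L` and `R`. -/
def LocalATB (X : Type*) [MetricSpace X] (ε : ℝ) : Prop :=
  ∀ x : X, ∃ (L : ℕ) (R : ℝ), 0 < R ∧ ∀ p ∈ Metric.ball x R, ATBPoint ε p L R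

namespace SCC

variable {X : Type*} [MetricSpace X]

lemma cos_lt_of_compAngle_lt {ε : ℝ} (h0 : 0 < ε) (h1 : ε < Real.pi / 6) {p y z : X}
    (h : compAngle p y z < ε) :
    Real.cos ε < (dist y p ^ 2 + dist z p ^ 2 - dist y z ^ 2) / (2 * dist y p * dist z p) := by
  by_contra hc
  push Not at hc
  have := Real.arccos_le_arccos hc
  rw [Real.arccos_cos h0.le (by linarith [Real.pi_pos])] at this
  unfold compAngle at h
  linarith

lemma cos_big {ε : ℝ} (h0 : 0 < ε) (h1 : ε < Real.pi / 6) : (17 / 20 : ℝ) < Real.cos ε := by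
  have h := Real.cos_lt_cos_of_nonneg_of_le_pi_div_two h0.le (by linarith [Real.pi_pos]) h1
  rw [Real.cos_pi_div_six] at h
  have : (17 / 10 : ℝ) < √3 := by
    apply Real.lt_sqrt_of_sq_lt; norm_num
  linarith

/-- chain extraction -/
lemma chain_or (G : ℕ → ℕ → Prop) (n : ℕ) : ∀ (l : ℕ) (S : Finset ℕ), l * (n + 1) ≤ S.card →
    (∃ b ∈ S, ∃ T ⊆ S, n ≤ T.card ∧ ∀ c ∈ T, b < c ∧ G b c) ∨
    (∃ U ⊆ S, U.card = l ∧ ∀ b ∈ U, ∀ c ∈ U, b < c → ¬ G b c) := by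
  classical
  intro l
  induction l with
  | zero => intro S _; right; exact ⟨∅, by simp, by simp, by simp⟩
  | succ l ih =>
    intro S hS
    have hne : S.Nonempty := by
      rw [← Finset.card_pos]; nlinarith
    set b := S.min' hne with hb
    have hbS : b ∈ S := S.min'_mem hne
    by_cases hT : n ≤ ((S.erase b).filter (fun c => G b c)).card
    · left
      refine ⟨b, hbS, _, ?_, hT, ?_⟩
      · exact (Finset.filter_subset _ _).trans (Finset.erase_subset _ _)
      · intro c hc
        rw [Finset.mem_filter] at hc
        refine ⟨?_, hc.2⟩
        exact Finset.min'_lt_of_mem_erase_min' S hne hc.1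
    · have h1 := Finset.card_filter_add_card_filter_not (s := S.erase b) (fun c => G b c)
      have h2 := Finset.card_erase_add_one hbS
      rcases ih ((S.erase b).filter (fun c => ¬ G b c)) (by
        rw [Nat.succ_mul] at hS; omega) with ⟨b', hb', T, hT', h3⟩ | ⟨U, hU, hc, h3⟩
      · left
        have hsub : ((S.erase b).filter (fun c => ¬ G b c)) ⊆ S :=
          (Finset.filter_subset _ _).trans (Finset.erase_subset _ _)
        exact ⟨b', hsub hb', T, hT'.trans hsub, h3⟩
      · right
        have hsub : ((S.erase b).filter (fun c => ¬ G b c)) ⊆ S :=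
          (Finset.filter_subset _ _).trans (Finset.erase_subset _ _)
        have hbU : b ∉ U := fun h => by
          have := hU h
          simp at this
        refine ⟨insert b U, ?_, ?_, ?_⟩
        · intro y hy
          rcases Finset.mem_insert.1 hy with rfl | hy
          · exact hbS
          · exact hsub (hU hy)
        · rw [Finset.card_insert_of_notMem hbU, hc]
        · intro y hy z hz hyz
          rcases Finset.mem_insert.1 hy with rfl | hy
          · rcases Finset.mem_insert.1 hz with rfl | hz
            · exact absurd hyz (lt_irrefl _)
            · exact (Finset.mem_filter.1 (hU hz)).2
          · rcases Finset.mem_insert.1 hz with rfl | hz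
            · have := S.min'_le y (hsub (hU hy))
              omega
            · exact h3 y hy z hz hyz

lemma atb_finset {ε : ℝ} {p : X} {L : ℕ} {R : ℝ} (h : ATBPoint ε p L R) (x : ℕ → X)
    (U : Finset ℕ) (hU : L ≤ U.card) (hx : ∀ i ∈ U, dist (x i) p < R ∧ x i ≠ p) :
    ∃ i ∈ U, ∃ j ∈ U, i ≠ j ∧ compAngle p (x i) (x j) < ε := by
  obtain ⟨i, j, hij, ha⟩ := h (fun i => x (U.equivFin.symm (Fin.castLE hU i)))
    (fun i => by
      have := hx _ (U.equivFin.symm (Fin.castLE hU i)).2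
      exact ⟨by simpa using this.1, this.2⟩)
  refine ⟨_, (U.equivFin.symm (Fin.castLE hU i)).2, _, (U.equivFin.symm (Fin.castLE hU j)).2,
    ?_, ha⟩
  intro he
  apply hij
  have := U.equivFin.symm.injective (Subtype.ext he)
  exact Fin.castLE_injective hU this

lemma compAngle_comm (p y z : X) : compAngle p y z = compAngle p z y := by
  unfold compAngle
  rw [dist_comm y z]
  congr 1
  ring

/-- the key decrease -/
lemma decrease {ε : ℝ} (h0 : 0 < ε) (h1 : ε < Real.pi / 6) {p y z : X} {σ : ℝ} (hσ : 0 < σ)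
    (hy : σ ≤ dist p y) (hz : σ ≤ dist p z) (hyz : dist p y ≤ dist p z + σ / 2)
    (h : compAngle p y z < ε) : dist y z ≤ dist p z - σ / 10 := by
  have h2 := cos_lt_of_compAngle_lt h0 h1 h
  have h3 := cos_big h0 h1
  rw [dist_comm y p, dist_comm z p] at h2
  set s := dist p y
  set D := dist p z
  set t := dist y z
  have hs : 0 < s := by linarith
  have hD : 0 < D := by linarith
  have h4 : (17 / 20 : ℝ) < (s ^ 2 + D ^ 2 - t ^ 2) / (2 * s * D) := h3.trans h2
  rw [lt_div_iff₀ (by positivity)] at h4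
  have h5 : s ≤ 3 / 2 * D := by linarith
  have h6 : t ^ 2 ≤ (D - σ / 10) ^ 2 := by
    have : s ^ 2 ≤ s * (3 / 2 * D) := by nlinarith
    have : σ * D ≤ s * D := by nlinarith
    nlinarith
  exact abs_le_of_sq_le_sq' h6 (by linarith) |>.2

lemma good_pair {ε : ℝ} (h0 : 0 < ε) (h1 : ε < Real.pi / 6) {L : ℕ} {R : ℝ} (x : ℕ → X)
    (A : ℕ) (σ : ℝ) (hσ : 0 < σ) (p : X) (h : ATBPoint ε p L R) (U : Finset ℕ)
    (hU : (2 * A + 1) * L < U.card)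
    (hx : ∀ i ∈ U, dist p (x i) < R ∧ σ ≤ dist p (x i) ∧ dist p (x i) ≤ A * σ) :
    ∃ b ∈ U, ∃ c ∈ U, b < c ∧ dist (x b) (x c) ≤ dist p (x c) - σ / 10 := by
  classical
  have hmaps : ∀ i ∈ U, ⌊2 * dist p (x i) / σ⌋₊ ∈ Finset.range (2 * A + 1) := by
    intro i hi
    rw [Finset.mem_range, Nat.lt_succ_iff]
    apply Nat.floor_le_of_le
    rw [div_le_iff₀ hσ]
    push_cast
    linarith [(hx i hi).2.2]
  obtain ⟨k, -, hk⟩ := Finset.exists_lt_card_fiber_of_mul_lt_card_of_maps_to (n := L) hmaps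
    (by simpa using hU)
  have hclose : ∀ i ∈ U, ∀ j ∈ U, ⌊2 * dist p (x i) / σ⌋₊ = k → ⌊2 * dist p (x j) / σ⌋₊ = k →
      dist p (x i) ≤ dist p (x j) + σ / 2 := by
    intro i hi j hj hik hjk
    have e1 := Nat.lt_floor_add_one (2 * dist p (x i) / σ)
    have e2 := Nat.floor_le (a := 2 * dist p (x j) / σ) (by positivity)
    rw [hik, div_lt_iff₀ hσ] at e1
    rw [hjk, le_div_iff₀ hσ] at e2
    nlinarith
  obtain ⟨i, hi, j, hj, hij, ha⟩ := atb_finset h x _ hk.le (by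
    intro i hi
    have := hx i (Finset.mem_filter.1 hi).1
    refine ⟨by rw [dist_comm]; exact this.1, ?_⟩
    intro he
    rw [he, dist_self] at this
    linarith [this.2.1])
  rw [Finset.mem_filter] at hi hj
  rcases lt_or_gt_of_ne hij with hlt | hlt
  · exact ⟨i, hi.1, j, hj.1, hlt, decrease h0 h1 hσ (hx i hi.1).2.1 (hx j hj.1).2.1
      (hclose i hi.1 j hj.1 hi.2 hj.2) ha⟩
  · rw [compAngle_comm] at ha
    exact ⟨j, hj.1, i, hi.1, hlt, decrease h0 h1 hσ (hx j hj.1).2.1 (hx i hi.1).2.1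
      (hclose j hj.1 i hi.1 hj.2 hi.2) ha⟩

lemma packing_aux {ε : ℝ} (h0 : 0 < ε) (h1 : ε < Real.pi / 6) (L : ℕ) (A : ℕ) (k : ℕ) :
    ∃ M : ℕ, ∀ (R : ℝ) (x : ℕ → X) (σ : ℝ), 0 < σ → ∀ (a : ℕ) (T : Finset ℕ), M ≤ T.card →
    (∀ i ∈ T, a < i) → (∀ i, ATBPoint ε (x i) L R) →
    (∀ i ∈ insert a T, ∀ j ∈ insert a T, i < j → dist (x i) (x j) < R ∧ σ ≤ dist (x i) (x j) ∧
        dist (x i) (x j) ≤ A * σ) →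
    ∃ z ∈ T, (k + 1) * (σ / 10) ≤ dist (x a) (x z) := by
  classical
  induction k with
  | zero =>
    refine ⟨1, fun R x σ hσ a T hT haT hA hd => ?_⟩
    obtain ⟨z, hz⟩ := Finset.card_pos.1 hT
    refine ⟨z, hz, ?_⟩
    have := (hd a (Finset.mem_insert_self _ _) z (Finset.mem_insert_of_mem hz) (haT z hz)).2.1
    simp only [Nat.cast_zero, zero_add, one_mul]
    linarith
  | succ k ih =>
    obtain ⟨M, hM⟩ := ih
    refine ⟨((2 * A + 1) * L + 1) * (M + 1), fun R x σ hσ a T hT haT hA hd => ?_⟩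
    rcases chain_or (fun b c => dist (x b) (x c) ≤ dist (x a) (x c) - σ / 10) M _ T hT with
      ⟨b, hb, T', hT', hcard, hG⟩ | ⟨U, hU, hcard, hG⟩
    · have hsub : insert b T' ⊆ insert a T := by
        intro y hy
        rcases Finset.mem_insert.1 hy with rfl | hy
        · exact Finset.mem_insert_of_mem hb
        · exact Finset.mem_insert_of_mem (hT' hy)
      obtain ⟨z, hz, hd'⟩ := hM R x σ hσ b T' hcard (fun i hi => (hG i hi).1) hA
        (fun i hi j hj => hd i (hsub hi) j (hsub hj))
      refine ⟨z, hT' hz, ?_⟩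
      have := (hG z hz).2
      push_cast
      linarith
    · exfalso
      obtain ⟨b, hb, c, hc, hbc, hle⟩ := good_pair h0 h1 x A σ hσ (x a) (hA a) U (by omega)
        (fun i hi => hd a (Finset.mem_insert_self _ _) i (Finset.mem_insert_of_mem (hU hi))
          (haT i (hU hi)))
      exact hG b hb c hc hbc hle

lemma packing (X : Type*) [MetricSpace X] {ε : ℝ} (h0 : 0 < ε) (h1 : ε < Real.pi / 6) (L : ℕ) (A : ℕ) :
    ∃ M : ℕ, ∀ (R : ℝ) (x : ℕ → X) (σ : ℝ), 0 < σ → ∀ (T : Finset ℕ),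
    (∀ i, ATBPoint ε (x i) L R) →
    (∀ i ∈ T, ∀ j ∈ T, i < j → dist (x i) (x j) < R ∧ σ ≤ dist (x i) (x j) ∧
        dist (x i) (x j) ≤ A * σ) → T.card ≤ M := by
  classical
  obtain ⟨M, hM⟩ := packing_aux (X := X) h0 h1 L A (10 * A)
  refine ⟨M, fun R x σ hσ T hA hd => ?_⟩
  by_contra hc
  push Not at hc
  have hne : T.Nonempty := by
    rw [← Finset.card_pos]; omega
  have hins := Finset.insert_erase (T.min'_mem hne)
  have hlt : ∀ i ∈ T.erase (T.min' hne), T.min' hne < i :=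
    fun i hi => Finset.min'_lt_of_mem_erase_min' T hne hi
  have hcard := Finset.card_erase_add_one (T.min'_mem hne)
  obtain ⟨z, hz, hd'⟩ := hM R x σ hσ (T.min' hne) (T.erase (T.min' hne)) (by omega) hlt hA
    (by rw [hins]; exact hd)
  have := (hd _ (T.min'_mem hne) z (Finset.mem_of_mem_erase hz) (hlt z hz)).2.2
  push_cast at hd'
  nlinarith

/-- the backward selection -/
lemma selection (x : ℕ → X) (lo : ℕ) (E W : ℕ → ℝ) (κ C1 C2 : ℝ) (hC2 : 0 ≤ C2) (hκ : 0 ≤ κ) : ∀ hi, lo ≤ hi →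
    (∀ i, lo ≤ i → i ≤ hi → 0 ≤ E i) →
    (∀ i j, lo ≤ i → i ≤ j → j ≤ hi → W j ≤ W i) →
    (∀ a p, lo ≤ a → a ≤ p → p ≤ hi → dist (x a) (x p) ≤ κ * E p →
      ∑ i ∈ Finset.Ico a p, dist (x i) (x (i + 1)) ≤ C1 * E p) →
    (∀ i, lo ≤ i → i < hi → dist (x i) (x (i + 1)) ≤ C2 * (E i + W i - W (i + 1))) →
    ∃ (N : ℕ) (p : ℕ → ℕ), p 0 = hi ∧ (∀ s ≤ N, lo ≤ p s ∧ p s ≤ hi) ∧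
      (∀ s < N, p (s + 1) < p s ∧ κ * E (p s) < dist (x (p (s + 1))) (x (p s))) ∧
      ∑ i ∈ Finset.Ico lo hi, dist (x i) (x (i + 1)) ≤
        (C1 + C2) * ∑ s ∈ Finset.range (N + 1), E (p s) - C2 * E hi + C2 * (W (p N) - W hi) := by
  intro hi
  induction hi using Nat.strong_induction_on with
  | _ hi ih =>
    intro hlo hE hW hlen hstep
    by_cases hfar : ∃ i, lo ≤ i ∧ i < hi ∧ κ * E hi < dist (x i) (x hi)
    · -- largest such index
      obtain ⟨i, ⟨hi1, hi2, hi3⟩, hmax⟩ : ∃ i, (lo ≤ i ∧ i < hi ∧ κ * E hi < dist (x i) (x hi)) ∧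
          ∀ j, i < j → j ≤ hi → dist (x j) (x hi) ≤ κ * E hi := by
        classical
        let S := (Finset.range hi).filter (fun i => lo ≤ i ∧ i < hi ∧ κ * E hi < dist (x i) (x hi))
        have hS : S.Nonempty := by
          obtain ⟨i, h⟩ := hfar
          exact ⟨i, Finset.mem_filter.2 ⟨Finset.mem_range.2 h.2.1, h⟩⟩
        have hm := (Finset.mem_filter.1 (S.max'_mem hS)).2
        refine ⟨S.max' hS, hm, fun j hj hjhi => ?_⟩
        by_contra hc
        push Not at hc
        rcases hjhi.eq_or_lt with rfl | hlt
        · rw [dist_self] at hc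
          have := hE j hlo le_rfl
          have := mul_nonneg hκ this
          linarith
        · have : j ∈ S := Finset.mem_filter.2 ⟨Finset.mem_range.2 hlt, by omega, hlt, hc⟩
          have := S.le_max' j this
          omega
      obtain ⟨N, p, hp0, hpr, hpd, hsum⟩ := ih i hi2 hi1
        (fun j h1 h2 => hE j h1 (by omega)) (fun j k h1 h2 h3 => hW j k h1 h2 (by omega))
        (fun a p h1 h2 h3 => hlen a p h1 h2 (by omega)) (fun j h1 h2 => hstep j h1 (by omega))
      refine ⟨N + 1, fun s => if s = 0 then hi else p (s - 1), by simp, ?_, ?_, ?_⟩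
      · intro s hs
        rcases s with _ | s
        · simp [hlo]
        · have := hpr s (by omega)
          simp only [Nat.add_eq_zero_iff, one_ne_zero, and_false, if_false, Nat.add_sub_cancel]
          omega
      · intro s hs
        rcases s with _ | s
        · simp [hp0, hi2, hi3]
        · have := hpd s (by omega)
          simpa using this
      · rw [Finset.sum_range_succ']
        simp only [Nat.add_eq_zero_iff, one_ne_zero, and_false, if_false, Nat.add_sub_cancel,
          if_true]
        rw [← Finset.sum_Ico_consecutive _ hi1 hi2.le, Finset.sum_eq_sum_Ico_succ_bot hi2]
        have e1 := hlen (i + 1) hi (by omega) hi2 le_rfl (hmax (i + 1) (by omega) hi2)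
        have e2 := hstep i hi1 hi2
        have e3 := hW (i + 1) hi (by omega) hi2 le_rfl
        nlinarith [mul_le_mul_of_nonneg_left e3 hC2]
    · push Not at hfar
      refine ⟨0, fun _ => hi, rfl, fun s _ => ⟨hlo, le_rfl⟩, fun s hs => by omega, ?_⟩
      have hE' := hE hi hlo le_rfl
      have := hlen lo hi le_rfl hlo le_rfl (by
        rcases hlo.eq_or_lt with h | h
        · rw [h, dist_self]; exact mul_nonneg hκ hE'
        · exact hfar lo le_rfl h)
      simp only [zero_add, Finset.sum_range_one, sub_self, mul_zero, add_zero]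
      linarith

lemma tele (w : ℕ → ℝ) (A B : ℝ) (N n : ℕ) : ∀ h : ℕ, (∀ s ≤ N, A ≤ w s ∧ w s ≤ B) →
    n + h ≤ N + 1 → ∑ s ∈ Finset.range n, (w (s + h) - w s) ≤ h * (B - A) := by
  intro h hw
  induction h with
  | zero => intro _; simp
  | succ h ih =>
    intro hn
    have h1 := ih (by omega)
    have h2 : ∑ s ∈ Finset.range n, (w (s + 1 + h) - w (s + h)) = w (n + h) - w (0 + h) :=
      Finset.sum_range_sub (fun s => w (s + h)) n
    have h3 : ∑ s ∈ Finset.range n, (w (s + (h + 1)) - w s) =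
        ∑ s ∈ Finset.range n, (w (s + h) - w s) +
        ∑ s ∈ Finset.range n, (w (s + 1 + h) - w (s + h)) := by
      rw [← Finset.sum_add_distrib]
      apply Finset.sum_congr rfl
      intro s _
      rw [show s + (h + 1) = s + 1 + h by ring]
      ring
    rw [h3, h2]
    have h4 := hw (n + h) (by omega)
    have h5 := hw (0 + h) (by omega)
    push_cast
    linarith

lemma sum_pay (e w : ℕ → ℝ) (A B D : ℝ) (hD : 0 ≤ D) (hAB : A ≤ B) (N h : ℕ)
    (hw : ∀ s ≤ N, A ≤ w s ∧ w s ≤ B)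
    (he : ∀ s ≤ N, e s ≤ D) (hp : ∀ s, s + h ≤ N → e s ≤ 2 * (w (s + h) - w s)) :
    ∑ s ∈ Finset.range (N + 1), e s ≤ 2 * (h * (B - A)) + h * D := by
  have hh : (0 : ℝ) ≤ h := Nat.cast_nonneg h
  rcases le_or_gt (N + 1) h with hN | hN
  · have h1 : ∑ s ∈ Finset.range (N + 1), e s ≤ (Finset.range (N + 1)).card • D :=
      Finset.sum_le_card_nsmul _ _ _ (fun s hs => he s (by have := Finset.mem_range.1 hs; omega))
    rw [Finset.card_range, nsmul_eq_mul] at h1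
    have h2 : ((N + 1 : ℕ) : ℝ) ≤ h := by exact_mod_cast hN
    have h3 := mul_le_mul_of_nonneg_right h2 hD
    have h4 : 0 ≤ (h : ℝ) * (B - A) := mul_nonneg hh (by linarith)
    linarith
  · obtain ⟨n, hn⟩ : ∃ n, N + 1 = n + h := ⟨N + 1 - h, by omega⟩
    rw [hn, Finset.sum_range_add]
    have h1 := tele w A B N n h hw (by omega)
    have h2 : ∑ s ∈ Finset.range n, e s ≤ ∑ s ∈ Finset.range n, 2 * (w (s + h) - w s) :=
      Finset.sum_le_sum (fun s hs => hp s (by have := Finset.mem_range.1 hs; omega))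
    rw [← Finset.mul_sum] at h2
    have h3 : ∑ s ∈ Finset.range h, e (n + s) ≤ (Finset.range h).card • D :=
      Finset.sum_le_card_nsmul _ _ _ (fun s hs => he _ (by have := Finset.mem_range.1 hs; omega))
    rw [Finset.card_range, nsmul_eq_mul] at h3
    linarith

lemma angle_lower {ε : ℝ} (h0 : 0 < ε) (h1 : ε < Real.pi / 6) {p y z : X}
    (hs : 0 < dist p y) (hsD : dist p y ≤ 1 / 4 * dist p z) (ht : dist y z ≤ dist p z)
    (hd : dist p z - dist y z ≤ 1 / 4 * dist p y) : ε ≤ compAngle p y z := by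
  by_contra hc
  push Not at hc
  have h2 := cos_lt_of_compAngle_lt h0 h1 hc
  have h3 := cos_big h0 h1
  rw [dist_comm y p, dist_comm z p] at h2
  have ht0 : 0 ≤ dist y z := dist_nonneg
  set s := dist p y
  set D := dist p z
  set t := dist y z
  have hD : 0 < D := by linarith
  have h4 : (17 / 20 : ℝ) < (s ^ 2 + D ^ 2 - t ^ 2) / (2 * s * D) := h3.trans h2
  rw [lt_div_iff₀ (by positivity)] at h4
  have h5 : s ^ 2 ≤ s * (1 / 4 * D) := by nlinarith
  have h6 : (D - t) * (D + t) ≤ (1 / 4 * s) * (2 * D) :=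
    mul_le_mul hd (by linarith) (by linarith) (by linarith)
  have h7 : 0 < s * D := by positivity
  nlinarith

/-- The potential. -/
lemma exists_H (x : ℕ → X) (F : ℕ → ℝ) (hi : ℕ) : ∃ H : ℕ → ℝ,
    (∀ i ≤ hi, ∃ q, i ≤ q ∧ q ≤ hi ∧ H i = 1 / 4 * dist (x i) (x q) + F q) ∧
    (∀ i q, i ≤ q → q ≤ hi → 1 / 4 * dist (x i) (x q) + F q ≤ H i) := by
  have : ∀ i, ∃ v : ℝ, (i ≤ hi → ∃ q, i ≤ q ∧ q ≤ hi ∧ v = 1 / 4 * dist (x i) (x q) + F q) ∧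
    (∀ q, i ≤ q → q ≤ hi → 1 / 4 * dist (x i) (x q) + F q ≤ v) := by
    intro i
    by_cases h : i ≤ hi
    · obtain ⟨q, hq, hm⟩ := Finset.exists_max_image (Finset.Icc i hi)
        (fun q => 1 / 4 * dist (x i) (x q) + F q) ⟨i, by simp [h]⟩
      rw [Finset.mem_Icc] at hq
      exact ⟨_, fun _ => ⟨q, hq.1, hq.2, rfl⟩, fun q' h1 h2 => hm q' (by simp [h1, h2])⟩
    · exact ⟨0, fun h' => absurd h' h, fun q h1 h2 => by omega⟩
  choose H hH using this
  exact ⟨H, fun i h => (hH i).1 h, fun i q h1 h2 => (hH i).2 q h1 h2⟩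

/-- The statement proved by downward induction on the number of directions. -/
def Stmt (X : Type*) [MetricSpace X] (ε : ℝ) (L m : ℕ) : Prop :=
  ∃ C : ℝ, 0 ≤ C ∧ ∀ (R : ℝ) (x : ℕ → X),
    (∀ i j k, i ≤ j → j ≤ k → dist (x j) (x k) ≤ dist (x i) (x k)) →
    (∀ i, ATBPoint ε (x i) L R) → ∀ (lo hi : ℕ), lo ≤ hi → ∀ (Y : Fin m → X) (D : ℝ),
    (∀ i j, lo ≤ i → i ≤ j → j ≤ hi → dist (x i) (x j) ≤ D) →
    (∀ i j, lo ≤ i → i ≤ j → j ≤ hi → dist (x i) (x j) < R) →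
    (∀ i j, lo ≤ i → i ≤ j → j ≤ hi → ∀ u, dist (x j) (Y u) ≤ dist (x i) (Y u)) →
    (∀ i j, lo ≤ i → i ≤ j → j ≤ hi → ∀ u, dist (x i) (x j) ≤ 1 / 4 * dist (x i) (Y u)) →
    (∀ i, lo ≤ i → i ≤ hi → ∀ u, 0 < dist (x i) (Y u) ∧ dist (x i) (Y u) < R) →
    (∀ i, lo ≤ i → i ≤ hi → ∀ u v, u ≠ v → ε ≤ compAngle (x i) (Y u) (Y v)) →
    ∑ i ∈ Finset.Ico lo hi, dist (x i) (x (i + 1)) ≤ C * D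

lemma stmt_base (ε : ℝ) (L : ℕ) : Stmt X ε L L := by
  refine ⟨0, le_rfl, ?_⟩
  intro R x hsc hA lo hi hlo Y D hD hR hmono hfar hpos hang
  exfalso
  obtain ⟨i, j, hij, h⟩ := hA lo Y (fun i => by
    have := hpos lo le_rfl hlo i
    refine ⟨by rw [Metric.mem_ball, dist_comm]; exact this.2, ?_⟩
    intro he
    rw [he, dist_self] at this
    exact lt_irrefl _ this.1)
  have := hang lo le_rfl hlo i j hij
  linarith

lemma stmt_step {ε : ℝ} (h0 : 0 < ε) (h1 : ε < Real.pi / 6) (L m : ℕ) (hm : m < L)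
    (hS : Stmt X ε L (m + 1)) : Stmt X ε L m := by
  classical
  obtain ⟨C', hC', hS⟩ := hS
  obtain ⟨M, hM⟩ := packing X h0 h1 L (128 * (L + 1))
  set κ : ℝ := 1 / (8 * ((L : ℝ) + 1)) with hκdef
  have hLpos : (0 : ℝ) < (L : ℝ) + 1 := by positivity
  have hκ : 0 < κ := by positivity
  have hκL : κ * ((L : ℝ) + 1) = 1 / 8 := by rw [hκdef]; field_simp
  have hmL : (m : ℝ) ≤ (L : ℝ) := by exact_mod_cast hm.le
  have hmκ : (m : ℝ) * κ ≤ 1 / 8 := by nlinarith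
  have hκ8 : κ ≤ 1 / 8 := by
    have : (0 : ℝ) ≤ L := Nat.cast_nonneg L
    nlinarith
  refine ⟨(C' + 4) * (2 * (M * (2 * m + 1)) + M) + 4 * (2 * m + 1), by positivity, ?_⟩
  intro R x hsc hA lo hi hlo Y D hD hR hmono hfar hpos hang
  have hD0 : 0 ≤ D := dist_nonneg.trans (hD lo lo le_rfl le_rfl hlo)
  set F : ℕ → ℝ := fun i => ∑ u, dist (x i) (Y u) with hF
  have hFmono : ∀ i j, lo ≤ i → i ≤ j → j ≤ hi → F j ≤ F i := fun i j a b c =>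
    Finset.sum_le_sum (fun u _ => hmono i j a b c u)
  have hFlip : ∀ i j, F i - F j ≤ m * dist (x i) (x j) := by
    intro i j
    rw [hF]
    simp only
    rw [← Finset.sum_sub_distrib]
    calc ∑ u, (dist (x i) (Y u) - dist (x j) (Y u)) ≤ ∑ _u : Fin m, dist (x i) (x j) :=
          Finset.sum_le_sum (fun u _ => by linarith [dist_triangle (x i) (x j) (Y u)])
      _ = _ := by simp
  have hFone : ∀ i j, lo ≤ i → i ≤ j → j ≤ hi → ∀ u,
      dist (x i) (Y u) - dist (x j) (Y u) ≤ F i - F j := by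
    intro i j a b c u
    rw [hF]
    simp only
    rw [← Finset.sum_sub_distrib]
    exact Finset.single_le_sum (f := fun u => dist (x i) (Y u) - dist (x j) (Y u))
      (fun u _ => by linarith [hmono i j a b c u]) (Finset.mem_univ u)
  obtain ⟨H, hHex, hHle⟩ := exists_H x F hi
  have hHmono : ∀ i j, lo ≤ i → i ≤ j → j ≤ hi → H j ≤ H i := by
    intro i j a b c
    obtain ⟨q, q1, q2, q3⟩ := hHex j c
    have := hHle i q (by omega) q2
    have := hsc i j q b q1
    linarith
  set E : ℕ → ℝ := fun i => H i - F i with hE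
  set W : ℕ → ℝ := fun i => F i + H i with hW
  have hE0 : ∀ i, lo ≤ i → i ≤ hi → 0 ≤ E i := by
    intro i a b
    have := hHle i i le_rfl b
    rw [dist_self] at this
    simp only [hE]
    linarith
  have hED : ∀ i, lo ≤ i → i ≤ hi → E i ≤ D := by
    intro i a b
    obtain ⟨q, q1, q2, q3⟩ := hHex i b
    have := hFmono i q a q1 q2
    have := hD i q a q1 q2
    simp only [hE]
    linarith
  have hWmono : ∀ i j, lo ≤ i → i ≤ j → j ≤ hi → W j ≤ W i := fun i j a b c =>
    add_le_add (hFmono i j a b c) (hHmono i j a b c)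
  have hstep : ∀ i, lo ≤ i → i < hi → dist (x i) (x (i + 1)) ≤ 4 * (E i + W i - W (i + 1)) := by
    intro i a b
    have e1 := hHle i (i + 1) (by omega) b
    have e2 := hHmono i (i + 1) a (by omega) b
    simp only [hE, hW]
    linarith
  have hlen : ∀ a p, lo ≤ a → a ≤ p → p ≤ hi → dist (x a) (x p) ≤ κ * E p →
      ∑ i ∈ Finset.Ico a p, dist (x i) (x (i + 1)) ≤ C' * E p := by
    intro a p ha hap hp hd
    have hep := hE0 p (by omega) hp
    have hnear : ∀ i, a ≤ i → i ≤ p → dist (x i) (x p) ≤ κ * E p := fun i i1 i2 =>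
      (hsc a i p i1 i2).trans hd
    rcases hep.eq_or_lt with he | he
    · rw [← he, mul_zero]
      apply le_of_eq
      apply Finset.sum_eq_zero
      intro i hi'
      rw [Finset.mem_Ico] at hi'
      have z : ∀ i, a ≤ i → i ≤ p → x i = x p := fun i i1 i2 => by
        have := hnear i i1 i2
        rw [← he, mul_zero] at this
        exact dist_le_zero.1 this
      rw [z i (by omega) (by omega), z (i + 1) (by omega) (by omega), dist_self]
    · obtain ⟨q, q1, q2, q3⟩ := hHex p hp
      have hEp : E p = 1 / 4 * dist (x p) (x q) + F q - F p := by simp only [hE]; linarith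
      have hFpq := hFmono p q (by omega) q1 q2
      have hiq : ∀ i, a ≤ i → i ≤ p → 4 * E p ≤ dist (x i) (x q) := by
        intro i i1 i2
        have := hsc i p q i2 q1
        linarith
      have hdiam : ∀ i j, a ≤ i → i ≤ j → j ≤ p → dist (x i) (x j) ≤ 2 * (κ * E p) := by
        intro i j a1 a2 a3
        have e1 := hnear i a1 (by omega)
        have e2 := hnear j (by omega) a3
        linarith [dist_triangle_right (x i) (x j) (x p)]
      have hκE : κ * E p ≤ 1 / 8 * E p := mul_le_mul_of_nonneg_right hκ8 hep
      have key : ∀ i, a ≤ i → i ≤ p → ∀ u, ε ≤ compAngle (x i) (x q) (Y u) := by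
        intro i i1 i2 u
        have e1 := hiq i i1 i2
        apply angle_lower h0 h1
        · linarith
        · exact hfar i q (by omega) (by omega) q2 u
        · exact hmono i q (by omega) (by omega) q2 u
        · have e2 := hFone i q (by omega) (by omega) q2 u
          have e3 := hFlip i p
          have e4 := hnear i i1 i2
          have e5 : (m : ℝ) * dist (x i) (x p) ≤ m * (κ * E p) :=
            mul_le_mul_of_nonneg_left e4 (Nat.cast_nonneg m)
          have e6 : (m : ℝ) * (κ * E p) ≤ 1 / 8 * E p := by
            rw [← mul_assoc]; exact mul_le_mul_of_nonneg_right hmκ hep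
          have e7 := hsc i p q i2 q1
          linarith
      refine hS R x hsc hA a p hap (Fin.cons (x q) Y) (E p) ?_ ?_ ?_ ?_ ?_ ?_
      · intro i j a1 a2 a3
        linarith [hdiam i j a1 a2 a3]
      · intro i j a1 a2 a3
        exact hR i j (by omega) a2 (by omega)
      · intro i j a1 a2 a3 u
        refine Fin.cases ?_ (fun u => ?_) u
        · simpa using hsc i j q a2 (by omega)
        · simpa using hmono i j (by omega) a2 (by omega) u
      · intro i j a1 a2 a3 u
        refine Fin.cases ?_ (fun u => ?_) u
        · rw [Fin.cons_zero]
          linarith [hdiam i j a1 a2 a3, hiq i a1 (by omega)]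
        · rw [Fin.cons_succ]; exact hfar i j (by omega) a2 (by omega) u
      · intro i a1 a2 u
        refine Fin.cases ?_ (fun u => ?_) u
        · rw [Fin.cons_zero]
          exact ⟨by linarith [hiq i a1 a2], hR i q (by omega) (by omega) q2⟩
        · rw [Fin.cons_succ]; exact hpos i (by omega) (by omega) u
      · intro i a1 a2 u v
        refine Fin.cases ?_ (fun u => ?_) u <;> refine Fin.cases ?_ (fun v => ?_) v
        · intro h; exact absurd rfl h
        · intro _
          rw [Fin.cons_zero, Fin.cons_succ]; exact key i a1 a2 v
        · intro _
          rw [Fin.cons_zero, Fin.cons_succ, compAngle_comm]; exact key i a1 a2 u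
        · intro h
          rw [Fin.cons_succ, Fin.cons_succ]
          exact hang i (by omega) (by omega) u v (fun h' => h (by rw [h']))
  obtain ⟨N, p, hp0, hpr, hpd, hsum⟩ := selection x lo E W κ C' 4 (by norm_num) hκ.le hi hlo
    hE0 hWmono hlen hstep
  have hanti : ∀ s t, s ≤ t → t ≤ N → p t ≤ p s := by
    intro s t hst
    induction t, hst using Nat.le_induction with
    | base => intro _; exact le_rfl
    | succ t _ ih =>
      intro ht
      have := ih (by omega)
      have := (hpd t (by omega)).1
      omega
  have hanti' : ∀ s t, s < t → t ≤ N → p t < p s := by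
    intro s t hst ht
    have := hanti (s + 1) t hst ht
    have := (hpd s (by omega)).1
    omega
  have hpay : ∀ s, s + M ≤ N → E (p s) ≤ 2 * (W (p (s + M)) - W (p s)) := by
    intro s hs
    by_contra hc
    push Not at hc
    have hr := hpr s (by omega)
    have hr' := hpr (s + M) hs
    have hw := hWmono (p (s + M)) (p s) hr'.1 (hanti _ _ (by omega) hs) hr.2
    have he : 0 < E (p s) := by linarith
    -- all intermediate values
    have hmid : ∀ t, s ≤ t → t ≤ s + M → F (p t) - F (p s) ≤ E (p s) / 2 ∧
        E (p s) / 2 ≤ E (p t) ∧ E (p t) ≤ 3 / 2 * E (p s) := by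
      intro t t1 t2
      have hrt := hpr t (by omega)
      have f1 := hFmono (p t) (p s) hrt.1 (hanti _ _ t1 (by omega)) hr.2
      have f2 := hFmono (p (s + M)) (p t) hr'.1 (hanti _ _ t2 hs) hrt.2
      have g1 := hHmono (p t) (p s) hrt.1 (hanti _ _ t1 (by omega)) hr.2
      have g2 := hHmono (p (s + M)) (p t) hr'.1 (hanti _ _ t2 hs) hrt.2
      simp only [hE, hW] at hc ⊢
      refine ⟨?_, ?_, ?_⟩ <;> linarith
    have hinj : Set.InjOn p (Finset.Icc s (s + M)) := by
      intro t ht t' ht' h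
      simp only [Finset.coe_Icc, Set.mem_Icc] at ht ht'
      rcases lt_trichotomy t t' with h' | h' | h'
      · have := hanti' t t' h' (by omega); omega
      · exact h'
      · have := hanti' t' t h' (by omega); omega
    have hcard := hM R x (κ * E (p s) / 2) (by positivity) ((Finset.Icc s (s + M)).image p) hA (by
      intro i hi' j hj hij
      obtain ⟨t, ht, rfl⟩ := Finset.mem_image.1 hi'
      obtain ⟨t', ht', rfl⟩ := Finset.mem_image.1 hj
      rw [Finset.mem_Icc] at ht ht'
      have htt : t' < t := by
        by_contra hh
        have := hanti t t' (by omega) (by omega)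
        omega
      have hrt := hpr t (by omega)
      have hrt' := hpr t' (by omega)
      have m1 := hmid t ht.1 ht.2
      have m2 := hmid t' ht'.1 ht'.2
      have d1 := (hpd t' (by omega)).2
      have d2 := hsc (p t) (p (t' + 1)) (p t') (hanti _ _ htt (by omega))
        (hanti _ _ (by omega) (by omega))
      have d3 := hHle (p t) (p t') hij.le hrt'.2
      have d4 := hFmono (p t') (p s) hrt'.1 (hanti _ _ ht'.1 (by omega)) hr.2
      refine ⟨hR _ _ hrt.1 hij.le hrt'.2, ?_, ?_⟩
      · have := mul_le_mul_of_nonneg_left m2.2.1 hκ.le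
        linarith
      · have e1 : E (p t) = H (p t) - F (p t) := rfl
        have e2 : ((128 * (L + 1) : ℕ) : ℝ) * (κ * E (p s) / 2) = 8 * E (p s) := by
          push_cast
          calc 128 * ((L : ℝ) + 1) * (κ * E (p s) / 2) = 64 * (κ * (L + 1)) * E (p s) := by ring
            _ = _ := by rw [hκL]; ring
        rw [e2]
        linarith)
    rw [Finset.card_image_of_injOn hinj, Nat.card_Icc] at hcard
    omega
  have hWtot : W lo - W hi ≤ (2 * m + 1) * D := by
    have e1 := hFlip lo hi
    have e2 : (m : ℝ) * dist (x lo) (x hi) ≤ m * D :=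
      mul_le_mul_of_nonneg_left (hD lo hi le_rfl hlo le_rfl) (Nat.cast_nonneg m)
    have e3 := hE0 hi hlo le_rfl
    have e4 := hED lo le_rfl hlo
    simp only [hE] at e3 e4
    simp only [hW]
    linarith
  have hsumE := sum_pay (fun s => E (p s)) (fun s => W (p s)) (W hi) (W lo) D hD0
    (hWmono lo hi le_rfl hlo le_rfl) N M
    (fun s hs => ⟨hWmono _ _ (hpr s hs).1 (hpr s hs).2 le_rfl,
      hWmono _ _ le_rfl (hpr s hs).1 (hpr s hs).2⟩)
    (fun s hs => hED _ (hpr s hs).1 (hpr s hs).2) hpay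
  have hM0 : (0 : ℝ) ≤ M := Nat.cast_nonneg M
  have k1 := mul_le_mul_of_nonneg_left hWtot hM0
  have k2 : ∑ s ∈ Finset.range (N + 1), E (p s) ≤ (2 * (M * (2 * m + 1)) + M) * D := by
    linarith
  have k3 := mul_le_mul_of_nonneg_left k2 (show 0 ≤ C' + 4 by linarith)
  have k4 : W (p N) ≤ W lo := hWmono _ _ le_rfl (hpr N le_rfl).1 (hpr N le_rfl).2
  have k5 := hE0 hi hlo le_rfl
  linarith

lemma stmt_all {ε : ℝ} (h0 : 0 < ε) (h1 : ε < Real.pi / 6) (L : ℕ) :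
    ∀ k m, m + k = L → Stmt X ε L m := by
  intro k
  induction k with
  | zero => intro m hm; obtain rfl : m = L := by omega
            exact stmt_base ε m
  | succ k ih => intro m hm; exact stmt_step h0 h1 L m (by omega) (ih (m + 1) (by omega))

lemma local_bound (X : Type*) [MetricSpace X] {ε : ℝ} (h0 : 0 < ε) (h1 : ε < Real.pi / 6) (L : ℕ) :
    ∃ C : ℝ, 0 ≤ C ∧ ∀ (R : ℝ) (x : ℕ → X),
    (∀ i j k, i ≤ j → j ≤ k → dist (x j) (x k) ≤ dist (x i) (x k)) →
    (∀ i, ATBPoint ε (x i) L R) → ∀ (lo hi : ℕ), lo ≤ hi →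
    (∀ i j, lo ≤ i → i ≤ j → j ≤ hi → dist (x i) (x j) < R) →
    ∑ i ∈ Finset.Ico lo hi, dist (x i) (x (i + 1)) ≤ C * R := by
  obtain ⟨C, hC, h⟩ := stmt_all (X := X) h0 h1 L L 0 (by omega)
  exact ⟨C, hC, fun R x hsc hA lo hi hlo hR => h R x hsc hA lo hi hlo Fin.elim0 R
    (fun i j a b c => (hR i j a b c).le) hR (fun _ _ _ _ _ u => u.elim0)
    (fun _ _ _ _ _ u => u.elim0) (fun _ _ _ u => u.elim0) (fun _ _ _ u => u.elim0)⟩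

lemma colour_bound (x : ℕ → X) (B D : ℝ) (hB : 0 ≤ B) (hD : 0 ≤ D) (n : ℕ) {ι : Type*}
    (col : ℕ → ι)
    (hcol : ∀ i j, i ≤ j → j ≤ n → col i = col j →
      ∑ k ∈ Finset.Ico i j, dist (x k) (x (k + 1)) ≤ B)
    (hstep : ∀ i, dist (x i) (x (i + 1)) ≤ D) :
    ∀ (c : ℕ) (T : Finset ι), T.card = c → ∀ i ≤ n, (∀ j, i ≤ j → j ≤ n → col j ∈ T) →
      ∑ k ∈ Finset.Ico i n, dist (x k) (x (k + 1)) ≤ c * (B + D) := by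
  classical
  intro c
  induction c with
  | zero =>
    intro T hT i hi h
    rw [Finset.card_eq_zero] at hT
    have := h i le_rfl hi
    simp [hT] at this
  | succ c ih =>
    intro T hT i hi h
    let S := (Finset.Icc i n).filter (fun j => col i = col j)
    have hS : S.Nonempty := ⟨i, by simp [S, hi]⟩
    have hm := S.max'_mem hS
    have hmax : ∀ j, S.max' hS < j → j ≤ n → col i ≠ col j := by
      intro j hj hjn he
      have hmem := Finset.mem_filter.1 hm
      rw [Finset.mem_Icc] at hmem
      have := S.le_max' j (Finset.mem_filter.2 ⟨Finset.mem_Icc.2 ⟨by omega, hjn⟩, he⟩)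
      omega
    generalize S.max' hS = j at hm hmax
    simp only [S, Finset.mem_filter, Finset.mem_Icc] at hm
    have e1 := hcol i j hm.1.1 hm.1.2 hm.2
    have hc : (0 : ℝ) ≤ c := Nat.cast_nonneg c
    have hcBD : 0 ≤ (c : ℝ) * (B + D) := mul_nonneg hc (by linarith)
    rw [← Finset.sum_Ico_consecutive _ hm.1.1 hm.1.2]
    push_cast
    rcases hm.1.2.eq_or_lt with rfl | hlt
    · simp only [Finset.Ico_self, Finset.sum_empty]
      linarith
    · rw [Finset.sum_eq_sum_Ico_succ_bot hlt]
      have e2 := ih (T.erase (col i)) (by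
        rw [Finset.card_erase_of_mem (h i le_rfl hi), hT]; rfl) (j + 1) hlt (by
        intro k k1 k2
        exact Finset.mem_erase.2 ⟨(hmax k k1 k2).symm, h k (by omega) k2⟩)
      have e3 := hstep j
      linarith

lemma atb_mono {ε : ℝ} {p : X} {L L' : ℕ} {R R' : ℝ} (h : ATBPoint ε p L R) (hL : L ≤ L')
    (hR : R' ≤ R) : ATBPoint ε p L' R' := by
  intro y hy
  obtain ⟨i, j, hij, ha⟩ := h (fun i => y (Fin.castLE hL i))
    (fun i => ⟨Metric.ball_subset_ball hR (hy _).1, (hy _).2⟩)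
  exact ⟨_, _, fun he => hij (Fin.castLE_injective hL he), ha⟩

lemma uniform_atb {ε : ℝ} (h : LocalATB X ε) (K : Set X) (hK : IsCompact K) :
    ∃ (L : ℕ) (R : ℝ), 0 < R ∧ ∀ p ∈ K, ATBPoint ε p L R := by
  refine hK.induction_on (p := fun s => ∃ (L : ℕ) (R : ℝ), 0 < R ∧ ∀ p ∈ s, ATBPoint ε p L R)
    ⟨0, 1, one_pos, by simp⟩ ?_ ?_ ?_
  · rintro s t hst ⟨L, R, hR, h⟩
    exact ⟨L, R, hR, fun p hp => h p (hst hp)⟩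
  · rintro s t ⟨L, R, hR, h⟩ ⟨L', R', hR', h'⟩
    refine ⟨max L L', min R R', lt_min hR hR', ?_⟩
    rintro p (hp | hp)
    · exact atb_mono (h p hp) (le_max_left _ _) (min_le_left _ _)
    · exact atb_mono (h' p hp) (le_max_right _ _) (min_le_right _ _)
  · intro x _
    obtain ⟨L, R, hR, h⟩ := h x
    exact ⟨Metric.ball x R, mem_nhdsWithin_of_mem_nhds (Metric.ball_mem_nhds x hR), L, R, hR, h⟩

end SCC

/-- In a proper, locally `ATB(ε)` metric space with `0 < ε < π/6`, every bounded
self-contracted curve is rectifiable. -/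
theorem rectifiable_of_properLocalATB
    {X : Type*} [MetricSpace X] [ProperSpace X]
    (ε : ℝ) (hε0 : 0 < ε) (hε : ε < Real.pi / 6)
    (hATB : LocalATB X ε)
    (γ : ℝ → X) (I : Set ℝ) (hI : I.OrdConnected)
    (hbdd : Bornology.IsBounded (γ '' I))
    (hsc : SelfContracted γ I) :
    Rectifiable γ I := by
  classical
  have hK : IsCompact (closure (γ '' I)) := hbdd.isCompact_closure
  obtain ⟨L, R, hR, hA⟩ := SCC.uniform_atb hATB _ hK
  obtain ⟨C, hC, hloc⟩ := SCC.local_bound X hε0 hε L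
  obtain ⟨D, hD⟩ := Metric.isBounded_iff.1 hbdd
  obtain ⟨T, hTK, hTfin, hT⟩ := hK.finite_cover_balls (e := R / 8) (by linarith)
  refine ⟨(hTfin.toFinset.card : ℝ) * (C * R + max D 0), ?_⟩
  intro k t ht hmono
  -- the extended sequence
  let s : ℕ → ℝ := fun i => t ⟨min i k, by omega⟩
  have hs : ∀ i, s i ∈ I := fun i => ht _
  have hsmono : ∀ i j, i ≤ j → s i ≤ s j := fun i j hij =>
    hmono.monotone (by simp only [Fin.mk_le_mk]; omega)
  let x : ℕ → X := fun i => γ (s i)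
  have hxI : ∀ i, x i ∈ γ '' I := fun i => ⟨_, hs i, rfl⟩
  have hxsc : ∀ i j k, i ≤ j → j ≤ k → dist (x j) (x k) ≤ dist (x i) (x k) := fun i j k a b =>
    hsc _ (hs i) _ (hs j) _ (hs k) (hsmono i j a) (hsmono j k b)
  have hxA : ∀ i, ATBPoint ε (x i) L R := fun i => hA _ (subset_closure (hxI i))
  have hcov : ∀ i, ∃ c ∈ T, dist (x i) c < R / 8 := by
    intro i
    have := hT (subset_closure (hxI i))
    simpa using this
  choose col hcol hcold using hcov
  have hsum : ∑ i : Fin k, dist (γ (t i.castSucc)) (γ (t i.succ)) =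
      ∑ i ∈ Finset.Ico 0 k, dist (x i) (x (i + 1)) := by
    rw [← Finset.range_eq_Ico, Finset.sum_range]
    apply Finset.sum_congr rfl
    intro i _
    have e1 : t i.castSucc = s i := by
      simp only [s]; congr 1; ext; simp only [Fin.val_castSucc]; omega
    have e2 : t i.succ = s (i + 1) := by
      simp only [s]; congr 1; ext; simp only [Fin.val_succ]; omega
    rw [e1, e2]
  rw [hsum]
  refine SCC.colour_bound x (C * R) (max D 0) (by positivity) (le_max_right _ _) k col ?_ ?_ _
    hTfin.toFinset rfl 0 (Nat.zero_le k) (fun j _ _ => by simpa using hcol j)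
  · intro i j hij hjk hc
    apply hloc R x hxsc hxA i j hij
    have hd : dist (x i) (x j) < R / 4 := by
      have e1 := hcold i
      have e2 := hcold j
      rw [← hc] at e2
      linarith [dist_triangle_right (x i) (x j) (col i)]
    intro a b h1 h2 h3
    have e1 := hxsc i a j h1 (by omega)
    have e2 := hxsc i b j (by omega) h3
    linarith [dist_triangle_right (x a) (x b) (x j)]
  · intro i
    exact (hD (hxI i) (hxI (i + 1))).trans (le_max_left _ _)
end

section
/- For every metric space (Y,d) and every 0 < α < 1, the α-snowflake (Y, d^α) satisfies the SRA(α) condition; that is, for all x,y,z ∈ Y: d(x,y)^α ≤ max{d(x,z)^α + α·d(z,y)^α, α·d(x,z)^α + d(z,y)^α}. -/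
theorem snow_aux (α : ℝ) (hα0 : 0 < α) (hα1 : α < 1) (a b : ℝ) (hb : 0 ≤ b) (hab : b ≤ a) :
    (a + b) ^ α ≤ a ^ α + α * b ^ α := by
  rcases (hb.trans hab).eq_or_lt with h | h
  · have hb0 : b = 0 := by linarith
    subst hb0
    rw [← h]
    simp [Real.zero_rpow hα0.ne']
  · have ht0 : 0 ≤ b / a := by positivity
    have ht1 : b / a ≤ 1 := (div_le_one h).2 hab
    have h1 : (1 + b / a) ^ α ≤ 1 + α * (b / a) :=
      rpow_one_add_le_one_add_mul_self (by linarith) hα0.le hα1.le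
    have h2 : b / a ≤ (b / a) ^ α := by
      rcases ht0.eq_or_lt with h0 | h0
      · rw [← h0]; simp [Real.zero_rpow hα0.ne']
      · simpa using Real.rpow_le_rpow_of_exponent_ge h0 ht1 hα1.le
    have e1 : a + b = a * (1 + b / a) := by field_simp
    have e2 : b ^ α = a ^ α * (b / a) ^ α := by
      rw [← Real.mul_rpow h.le ht0]; congr 1; field_simp
    rw [e1, Real.mul_rpow h.le (by linarith), e2]
    have h3 : 0 ≤ a ^ α := by positivity
    have h4 : (1 + b / a) ^ α ≤ 1 + α * (b / a) ^ α :=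
      h1.trans (by gcongr)
    calc _ ≤ a ^ α * (1 + α * (b / a) ^ α) := by gcongr
      _ = _ := by ring

/-- For any metric space `(Y, d)` and `0 < α < 1`, the `α`-snowflake `(Y, d^α)`
satisfies the `SRA(α)` condition. -/
theorem snowflake_satisfies_sra
    {Y : Type*} [MetricSpace Y] (α : ℝ) (hα0 : 0 < α) (hα1 : α < 1) (x y z : Y) :
    dist x y ^ α ≤
      max (dist x z ^ α + α * dist z y ^ α) (α * dist x z ^ α + dist z y ^ α) := by
  have h : dist x y ^ α ≤ (dist x z + dist z y) ^ α :=
    Real.rpow_le_rpow dist_nonneg (dist_triangle x z y) hα0.le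
  rcases le_total (dist z y) (dist x z) with h' | h'
  · exact le_max_of_le_left (h.trans (snow_aux α hα0 hα1 _ _ dist_nonneg h'))
  · apply le_max_of_le_right
    have := snow_aux α hα0 hα1 _ _ dist_nonneg h'
    rw [add_comm (dist z y)] at this
    linarith
end

section
/- Let (X,d) be a metric space, 0 < α < 1 and ε := arccos(α)/2. Let x ∈ X and R > 0, and suppose there is L ∈ ℕ such that every p ∈ B_R(x) satisfies the ATB(ε) condition with constants L and 2R. Then there exists N ∈ ℕ, depending only on L, such that if a metric space (Y,d_Y) has cardinality at least N, then its α-snowflake (Y, d_Y^α) admits no isometric embedding into B_R(x). -/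
theorem aux_ramsey : ∀ k l : ℕ, ∃ n : ℕ, ∀ (Y : Type) (G : Y → Y → Prop),
    (∀ a b, G a b → G b a) → ∀ s : Finset Y, n ≤ s.card →
      (∃ t ⊆ s, t.card = k ∧ ∀ a ∈ t, ∀ b ∈ t, a ≠ b → G a b) ∨
      (∃ t ⊆ s, t.card = l ∧ ∀ a ∈ t, ∀ b ∈ t, a ≠ b → ¬ G a b) := by
  classical
  intro k
  induction k with
  | zero => exact fun l => ⟨0, fun Y G _ s _ => Or.inl ⟨∅, by simp⟩⟩
  | succ k ihk =>
    intro l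
    induction l with
    | zero => exact ⟨0, fun Y G _ s _ => Or.inr ⟨∅, by simp⟩⟩
    | succ l ihl =>
      obtain ⟨n1, h1⟩ := ihk (l + 1)
      obtain ⟨n2, h2⟩ := ihl
      refine ⟨n1 + n2 + 1, fun Y G hG s hs => ?_⟩
      obtain ⟨p, hp⟩ : s.Nonempty := Finset.card_pos.mp (by omega)
      have hc : (s.erase p).card = s.card - 1 := Finset.card_erase_of_mem hp
      have hsum := Finset.card_filter_add_card_filter_not (s := s.erase p) (fun a => G p a)
      have hsub : s.erase p ⊆ s := Finset.erase_subset _ _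
      rcases (by omega : n1 ≤ ((s.erase p).filter (fun a => G p a)).card ∨
        n2 ≤ ((s.erase p).filter (fun a => ¬ G p a)).card) with h | h
      · rcases h1 Y G hG _ h with ⟨t, ht, hk, hcl⟩ | ⟨t, ht, hk, hcl⟩
        · left
          have hpt : p ∉ t := fun hh => by simpa using ht hh
          refine ⟨insert p t, ?_, by rw [Finset.card_insert_of_notMem hpt, hk], ?_⟩
          · exact Finset.insert_subset hp (ht.trans ((Finset.filter_subset _ _).trans hsub))
          · have hg : ∀ a ∈ t, G p a := fun a ha => (Finset.mem_filter.mp (ht ha)).2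
            intro a ha b hb hab
            rcases Finset.mem_insert.mp ha with rfl | ha2
            · rcases Finset.mem_insert.mp hb with rfl | hb
              · exact absurd rfl hab
              · exact hg b hb
            · rcases Finset.mem_insert.mp hb with rfl | hb
              · exact hG _ _ (hg a ha2)
              · exact hcl a ha2 b hb hab
        · right
          exact ⟨t, ht.trans ((Finset.filter_subset _ _).trans hsub), hk, hcl⟩
      · rcases h2 Y G hG _ h with ⟨t, ht, hk, hcl⟩ | ⟨t, ht, hk, hcl⟩
        · left
          exact ⟨t, ht.trans ((Finset.filter_subset _ _).trans hsub), hk, hcl⟩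
        · right
          have hpt : p ∉ t := fun hh => by simpa using ht hh
          refine ⟨insert p t, ?_, by rw [Finset.card_insert_of_notMem hpt, hk], ?_⟩
          · exact Finset.insert_subset hp (ht.trans ((Finset.filter_subset _ _).trans hsub))
          · have hg : ∀ a ∈ t, ¬ G p a := fun a ha => (Finset.mem_filter.mp (ht ha)).2
            intro a ha b hb hab
            rcases Finset.mem_insert.mp ha with rfl | ha2
            · rcases Finset.mem_insert.mp hb with rfl | hb
              · exact absurd rfl hab
              · exact hg b hb
            · rcases Finset.mem_insert.mp hb with rfl | hb
              · exact fun hh => (hg a ha2) (hG _ _ hh)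
              · exact hcl a ha2 b hb hab

theorem aux_comb (L : ℕ) : ∀ m : ℕ, ∃ n : ℕ, ∀ (Y : Type) (G : Y → Y → Y → Prop),
    (∀ p a b, G p a b → G p b a) →
    (∀ p a b, p ≠ a → p ≠ b → a ≠ b → G p a b → ¬ G a p b) →
    (∀ p, ∀ t : Finset Y, p ∉ t → t.card = L → ∃ a ∈ t, ∃ b ∈ t, a ≠ b ∧ G p a b) →
    ∀ s : Finset Y, n ≤ s.card →
      ∃ q ∈ s, ∃ t ⊆ s, q ∉ t ∧ t.card = m ∧ ∀ a ∈ t, ∀ b ∈ t, a ≠ b → ¬ G q a b := by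
  classical
  intro m
  induction m with
  | zero =>
    refine ⟨1, fun Y G _ _ _ s hs => ?_⟩
    obtain ⟨p, hp⟩ : s.Nonempty := Finset.card_pos.mp (by omega)
    exact ⟨p, hp, ∅, by simp⟩
  | succ m ih =>
    obtain ⟨n, hn⟩ := ih
    obtain ⟨r, hr⟩ := aux_ramsey n L
    refine ⟨r + 1, fun Y G hs hx hL s hsc => ?_⟩
    obtain ⟨p, hp⟩ : s.Nonempty := Finset.card_pos.mp (by omega)
    have hc : (s.erase p).card = s.card - 1 := Finset.card_erase_of_mem hp
    have hsub : s.erase p ⊆ s := Finset.erase_subset _ _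
    rcases hr Y (G p) (hs p) (s.erase p) (by omega) with ⟨K, hK, hk, hcl⟩ | ⟨K, hK, hk, hcl⟩
    · have hpK : p ∉ K := fun hh => by simpa using hK hh
      obtain ⟨q, hq, t, ht, hqt, htm, hi⟩ := hn Y G hs hx hL K hk.ge
      have hpq : p ≠ q := fun h => hpK (h ▸ hq)
      have hpt : p ∉ t := fun h => hpK (ht h)
      have hg : ∀ a ∈ t, ¬ G q p a := fun a ha => by
        have hqa : q ≠ a := fun h => hqt (h ▸ ha)
        exact hx p q a hpq (fun h => hpt (h ▸ ha)) hqa (hcl q hq a (ht ha) hqa)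
      refine ⟨q, hsub (hK hq), insert p t, Finset.insert_subset hp (ht.trans (hK.trans hsub)),
        ?_, by rw [Finset.card_insert_of_notMem hpt, htm], ?_⟩
      · simp [hqt, hpq.symm]
      · intro a ha b hb hab
        rcases Finset.mem_insert.mp ha with rfl | ha2
        · rcases Finset.mem_insert.mp hb with rfl | hb
          · exact absurd rfl hab
          · exact hg b hb
        · rcases Finset.mem_insert.mp hb with rfl | hb
          · exact fun hh => (hg a ha2) (hs _ _ _ hh)
          · exact hi a ha2 b hb hab
    · have hpK : p ∉ K := fun hh => by simpa using hK hh
      obtain ⟨a, ha, b, hb, hab, h⟩ := hL p K hpK hk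
      exact absurd h (hcl a ha b hb hab)

theorem aux_ineq1 (α t : ℝ) (h0 : 0 < α) (h1 : α < 1) (ht : 0 < t) (ht1 : t ≤ 1) :
    ((1 + t) ^ α) ^ 2 ≤ 1 + (t ^ α) ^ 2 + 2 * α * t ^ α := by
  have hta : t ≤ t ^ α := by
    simpa using Real.rpow_le_rpow_of_exponent_ge ht ht1 h1.le
  have e1 : ∀ z : ℝ, 0 < z → (z ^ α) ^ 2 = z ^ (2 * α) := fun z hz => by
    rw [mul_comm, Real.rpow_mul hz.le]; norm_num
  rw [e1 _ ht, e1 _ (by linarith)]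
  have hpos : 0 < t ^ α := Real.rpow_pos_of_pos ht _
  rcases le_total (2 * α) 1 with h | h
  · have := Real.rpow_add_le_add_rpow (p := 2 * α) zero_le_one ht.le (by linarith) h
    rw [Real.one_rpow] at this
    nlinarith
  · have hb := rpow_one_add_le_one_add_mul_self (s := t) (p := 2 * α - 1) (by linarith)
      (by linarith) (by linarith)
    have h2 : t ^ (2:ℝ) ≤ t ^ (2 * α) :=
      Real.rpow_le_rpow_of_exponent_ge ht ht1 (by linarith)
    have e2 : t ^ (2:ℝ) = t ^ 2 := by norm_num
    have e3 : (1 + t) ^ (2 * α) = (1 + t) * (1 + t) ^ (2 * α - 1) := by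
      rw [Real.rpow_sub_one (by linarith)]; field_simp
    rw [e3]
    rw [e2] at h2
    have : (1 + t) * (1 + t) ^ (2 * α - 1) ≤ (1 + t) * (1 + (2 * α - 1) * t) := by gcongr
    nlinarith [mul_le_mul_of_nonneg_left hta h0.le, mul_nonneg (by linarith : 0 ≤ 2 - 2 * α) (sq_nonneg t)]

theorem aux_ineq2 (α u v : ℝ) (h0 : 0 < α) (h1 : α < 1) (hu : 0 < u) (hv : 0 < v) (huv : v ≤ u) :
    ((u + v) ^ α) ^ 2 ≤ (u ^ α) ^ 2 + (v ^ α) ^ 2 + 2 * α * (u ^ α * v ^ α) := by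
  have h := aux_ineq1 α (v / u) h0 h1 (by positivity) (by rw [div_le_one hu]; exact huv)
  have e1 : u + v = u * (1 + v / u) := by field_simp
  have e2 : v ^ α = u ^ α * (v / u) ^ α := by
    rw [← Real.mul_rpow hu.le (by positivity)]; congr 1; field_simp
  rw [e1, e2, Real.mul_rpow hu.le (by positivity)]
  have := mul_le_mul_of_nonneg_left h (sq_nonneg (u ^ α))
  nlinarith

theorem aux_ineq (α u v w : ℝ) (h0 : 0 < α) (h1 : α < 1) (hu : 0 < u) (hv : 0 < v) (hw : 0 < w)
    (h : w ≤ u + v) :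
    (w ^ α) ^ 2 ≤ (u ^ α) ^ 2 + (v ^ α) ^ 2 + 2 * α * (u ^ α * v ^ α) := by
  have : (w ^ α) ^ 2 ≤ ((u + v) ^ α) ^ 2 := by gcongr
  refine this.trans ?_
  rcases le_total v u with h' | h'
  · exact aux_ineq2 α u v h0 h1 hu hv h'
  · have := aux_ineq2 α v u h0 h1 hv hu h'
    rw [add_comm v u] at this
    linarith [mul_comm (u ^ α) (v ^ α)]

theorem aux_angle (p x y α : ℝ) (h0 : 0 < α) (hp : 0 < p) (hx : 0 < x) (hy : 0 < y)
    (t1 : p ≤ x + y) (t2 : x ≤ p + y) (t3 : y ≤ p + x)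
    (hα : y ^ 2 ≤ x ^ 2 + p ^ 2 + 2 * α * (x * p))
    (hA : Real.arccos ((x ^ 2 + y ^ 2 - p ^ 2) / (2 * x * y)) < Real.arccos α / 2)
    (hB : Real.arccos ((p ^ 2 + y ^ 2 - x ^ 2) / (2 * p * y)) < Real.arccos α / 2)
    (h1 : α < 1) : False := by
  set A := (x ^ 2 + y ^ 2 - p ^ 2) / (2 * x * y) with hAd
  set B := (p ^ 2 + y ^ 2 - x ^ 2) / (2 * p * y) with hBd
  have hA1 : -1 ≤ A := by rw [hAd, le_div_iff₀ (by positivity)]; nlinarith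
  have hA2 : A ≤ 1 := by rw [hAd, div_le_iff₀ (by positivity)]; nlinarith
  have hB1 : -1 ≤ B := by rw [hBd, le_div_iff₀ (by positivity)]; nlinarith
  have hB2 : B ≤ 1 := by rw [hBd, div_le_iff₀ (by positivity)]; nlinarith
  have hlt : Real.arccos A + Real.arccos B < Real.arccos α := by linarith
  have hcos := Real.cos_lt_cos_of_nonneg_of_le_pi
    (add_nonneg (Real.arccos_nonneg A) (Real.arccos_nonneg B)) (Real.arccos_le_pi α) hlt
  rw [Real.cos_arccos (by linarith) h1.le, Real.cos_add, Real.cos_arccos hA1 hA2,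
    Real.cos_arccos hB1 hB2, Real.sin_arccos, Real.sin_arccos,
    ← Real.sqrt_mul (by nlinarith)] at hcos
  have hH : 0 ≤ 4 * x ^ 2 * y ^ 2 - (x ^ 2 + y ^ 2 - p ^ 2) ^ 2 := by
    have : 4 * x ^ 2 * y ^ 2 - (x ^ 2 + y ^ 2 - p ^ 2) ^ 2 =
      ((x + y + p) * (x + y - p)) * ((p + x - y) * (p + y - x)) := by ring
    rw [this]
    have a1 : 0 ≤ x + y - p := by linarith
    have a2 : 0 ≤ p + x - y := by linarith
    have a3 : 0 ≤ p + y - x := by linarith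
    positivity
  have e : (1 - A ^ 2) * (1 - B ^ 2) =
      ((4 * x ^ 2 * y ^ 2 - (x ^ 2 + y ^ 2 - p ^ 2) ^ 2) / (4 * x * p * y ^ 2)) ^ 2 := by
    rw [hAd, hBd]; field_simp; ring
  rw [e, Real.sqrt_sq (by positivity)] at hcos
  have e2 : A * B - (4 * x ^ 2 * y ^ 2 - (x ^ 2 + y ^ 2 - p ^ 2) ^ 2) / (4 * x * p * y ^ 2)
      = (y ^ 2 - x ^ 2 - p ^ 2) / (2 * x * p) := by
    rw [hAd, hBd]; field_simp; ring
  rw [e2, lt_div_iff₀ (by positivity)] at hcos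
  nlinarith

/-- If every point of `B_R(x)` satisfies `ATB(arccos α / 2)` with constants `L` and `2R`,
then there is `N`, depending only on `L`, such that for any metric space `Y` of
cardinality at least `N`, the `α`-snowflake `(Y, d_Y^α)` admits no isometric embedding
into `B_R(x)`. -/
theorem atb_prevents_large_snowflakes :
    ∀ L : ℕ, ∃ N : ℕ,
      ∀ (X : Type) [MetricSpace X], ∀ α : ℝ, 0 < α → α < 1 →
        ∀ (x : X) (R : ℝ), 0 < R →
          (∀ p ∈ Metric.ball x R, ATBPoint (Real.arccos α / 2) p L (2 * R)) →
          ∀ (Y : Type) [MetricSpace Y], (∃ s : Finset Y, s.card = N) →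
            ¬ ∃ f : Y → X, (∀ a b : Y, dist (f a) (f b) = dist a b ^ α) ∧
              ∀ a : Y, f a ∈ Metric.ball x R := by
  intro L
  obtain ⟨N, hN⟩ := aux_comb L L
  refine ⟨N, ?_⟩
  rintro X _ α h0 h1 x R hR hatb Y _ ⟨s, hs⟩ ⟨f, hf, hfb⟩
  have hinj : ∀ a b, a ≠ b → f a ≠ f b := fun a b hab h => by
    have h2 := hf a b
    rw [h, dist_self] at h2
    exact (Real.rpow_pos_of_pos (dist_pos.mpr hab) α).ne h2
  have hL : ∀ p, ∀ t : Finset Y, p ∉ t → t.card = L →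
      ∃ a ∈ t, ∃ b ∈ t, a ≠ b ∧ compAngle (f p) (f a) (f b) < Real.arccos α / 2 := by
    intro p t hpt htL
    let e := (Finset.equivFinOfCardEq htL).symm
    obtain ⟨i, j, hij, h⟩ := hatb (f p) (hfb p) (fun i => f (e i)) (fun i => by
      refine ⟨?_, hinj _ _ fun h => hpt (h ▸ (e i).2)⟩
      have a1 := Metric.mem_ball.mp (hfb (e i))
      have a2 := Metric.mem_ball'.mp (hfb p)
      have := dist_triangle (f (e i)) x (f p)
      rw [Metric.mem_ball]; linarith)
    exact ⟨e i, (e i).2, e j, (e j).2, fun h => hij (e.injective (Subtype.ext h)), h⟩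
  have key0 := hN Y (fun p a b => compAngle (f p) (f a) (f b) < Real.arccos α / 2)
  have key1 := fun A B => key0 A B hL s hs.ge
  clear key0
  refine absurd (key1 ?_ ?_) ?_
  · intro p a b h
    have : compAngle (f p) (f b) (f a) = compAngle (f p) (f a) (f b) := by
      unfold compAngle
      rw [dist_comm (f b) (f a)]; congr 1; ring
    exact this ▸ h
  · intro p a b hpa hpb hab hA hB
    have key := aux_ineq α (dist b p) (dist b a) (dist a p) h0 h1 (dist_pos.mpr hpb.symm)
      (dist_pos.mpr hab.symm) (dist_pos.mpr hpa.symm)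
      (by rw [dist_comm b a, add_comm]; exact dist_triangle _ _ _)
    rw [← hf, ← hf, ← hf] at key
    unfold compAngle at hA hB
    rw [dist_comm (f p) (f a), dist_comm (f p) (f b)] at hB
    rw [dist_comm (f a) (f b)] at hA
    have T1 := dist_triangle (f b) (f p) (f a)
    have T2 := dist_triangle (f b) (f a) (f p)
    have T3 := dist_triangle (f a) (f b) (f p)
    rw [dist_comm (f p) (f a)] at T1
    rw [dist_comm (f a) (f b)] at T3
    refine aux_angle (dist (f b) (f a)) (dist (f b) (f p)) (dist (f a) (f p)) α h0
      (dist_pos.mpr (hinj _ _ hab.symm)) (dist_pos.mpr (hinj _ _ hpb.symm))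
      (dist_pos.mpr (hinj _ _ hpa.symm)) T1 T2 T3 key ?_ ?_ h1
    · convert hA using 2; ring
    · convert hB using 2; ring
  · rintro ⟨q, -, t, -, hqt, htL, hi⟩
    obtain ⟨a, ha, b, hb, hab, h⟩ := hL q t hqt htL
    exact hi a ha b hb hab h
end

section
/- Let (X,d) be a metric space, 0 < ε < π/2, p ∈ X and x,y ∈ X∖{p}. If there exists x' ∈ X such that d(p,y) = d(p,x') + d(x',y) and d(x,x') ≤ β(ε)·d(p,x), then the Euclidean comparison angle satisfies ∠̃xpy < ε. -/
/-- The constant `β(ε) = (1 - cos ε) sin ε / (2 (1 + sin ε))`. -/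
noncomputable def beta (ε : ℝ) : ℝ :=
  (1 - Real.cos ε) * Real.sin ε / (2 * (1 + Real.sin ε))

/-- If `x'` lies on a "geodesic" from `p` to `y` (in the sense that
`d(p,y) = d(p,x') + d(x',y)`) and `d(x,x') ≤ β(ε) d(p,x)`, then the comparison
angle `∠̃ x p y` is less than `ε`. -/
theorem compAngle_lt_of_near_geodesic
    {X : Type*} [MetricSpace X] (ε : ℝ) (hε0 : 0 < ε) (hε : ε < Real.pi / 2)
    (p x y : X) (hx : x ≠ p) (hy : y ≠ p) (x' : X)
    (h1 : dist p y = dist p x' + dist x' y)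
    (h2 : dist x x' ≤ beta ε * dist p x) :
    compAngle p x y < ε := by
  have ha : 0 < dist p x := dist_pos.mpr hx.symm
  have hb : 0 < dist p y := dist_pos.mpr hy.symm
  have hS : 0 < Real.sin ε := Real.sin_pos_of_pos_of_lt_pi hε0 (by linarith)
  have hC : 0 < Real.cos ε := Real.cos_pos_of_mem_Ioo ⟨by linarith, hε⟩
  have hC1 : Real.cos ε < 1 := by
    nlinarith [Real.sin_sq_add_cos_sq ε]
  obtain ⟨t, ht0, ht1, hbt⟩ : ∃ t : ℝ, 0 < t ∧ t < 1 ∧ beta ε = (1 - Real.cos ε) * t / 2 := by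
    refine ⟨Real.sin ε / (1 + Real.sin ε), by positivity, ?_, ?_⟩
    · rw [div_lt_one (by positivity)]; linarith
    · unfold beta; field_simp
  have t1 : dist x y ≤ dist x x' + dist x' y := dist_triangle _ _ _
  have t2 : dist p x ≤ dist p x' + dist x x' := by
    rw [dist_comm x x']; exact dist_triangle _ _ _
  have hd0 : 0 ≤ dist x x' := dist_nonneg
  have hc0 : 0 ≤ dist x y := dist_nonneg
  have he0 : 0 ≤ dist x' y := dist_nonneg
  unfold compAngle
  rw [hbt] at h2
  rw [dist_comm x p, dist_comm y p]
  generalize dist p x = a at *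
  generalize dist p y = b at *
  generalize dist x y = c at *
  generalize dist x x' = δ at *
  generalize dist p x' = f at *
  generalize dist x' y = e at *
  set k := 1 - Real.cos ε with hk
  have hk0 : 0 < k := by linarith
  have hk1 : k < 1 := by linarith
  have hkt : k * t < 1 := by nlinarith
  have hδa : δ < a := by nlinarith
  have hm : 0 ≤ b - a + δ := by linarith
  have hcc : c ^ 2 ≤ (b - a + 2 * δ) ^ 2 := pow_le_pow_left₀ hc0 (by linarith) 2
  have h3 : 2 * δ * (b - a + δ) ≤ (k * t * a) * (b - a + δ) :=
    mul_le_mul_of_nonneg_right (by linarith) hm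
  have h4 : (k * t * a) * (b - a + δ) ≤ (k * t * a) * b :=
    mul_le_mul_of_nonneg_left (by linarith) (by positivity)
  have h5 : (k * a * b) * t < (k * a * b) * 1 := mul_lt_mul_of_pos_left ht1 (by positivity)
  have hlt : Real.cos ε < (a ^ 2 + b ^ 2 - c ^ 2) / (2 * a * b) := by
    rw [lt_div_iff₀ (by positivity)]
    have : Real.cos ε = 1 - k := by linarith
    rw [this]
    nlinarith
  have hpi := Real.pi_pos
  rcases le_or_gt ((a ^ 2 + b ^ 2 - c ^ 2) / (2 * a * b)) 1 with h | h
  · calc _ < Real.arccos (Real.cos ε) :=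
        Real.strictAntiOn_arccos ⟨by linarith, hC1.le⟩ ⟨by linarith, h⟩ hlt
      _ = ε := Real.arccos_cos hε0.le (by linarith)
  · rw [Real.arccos_of_one_le h.le]; exact hε0
end

section
/- Let (X,d_X) and (Y,d_Y) be metric spaces, p ∈ X, q ∈ Y, R > 0, and Φ : B_R(q) → X a map with Φ(q) = p such that (a) d_X(p, Φ(y)) = d_Y(q, y) for every y ∈ B_R(q), and (b) d_X(Φ(y), Φ(y')) ≥ d_Y(y, y') for every y, y' ∈ B_R(q). If there are L ∈ ℕ and 0 < ε < π/2 such that p satisfies the ATB(ε) condition with constants L and R, then q also satisfies the ATB(ε) condition with constants L and R. -/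
/-- The simple lifting lemma: if `Φ : B_R(q) → X` preserves distances to the center
and does not decrease mutual distances, then the `ATB(ε)` condition transfers from
`p = Φ(q)` to `q`. -/
theorem atb_transfer_simple
    {X Y : Type*} [MetricSpace X] [MetricSpace Y]
    (p : X) (q : Y) (R : ℝ) (hR : 0 < R) (Φ : Y → X) (hΦq : Φ q = p)
    (ha : ∀ y ∈ Metric.ball q R, dist p (Φ y) = dist q y)
    (hb : ∀ y ∈ Metric.ball q R, ∀ y' ∈ Metric.ball q R,
      dist y y' ≤ dist (Φ y) (Φ y'))
    (L : ℕ) (ε : ℝ) (hε0 : 0 < ε) (hε : ε < Real.pi / 2)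
    (hATB : ATBPoint ε p L R) :
    ATBPoint ε q L R := by
  intro y hy
  have ha' : ∀ i, dist (Φ (y i)) p = dist (y i) q := fun i => by
    rw [dist_comm, ha _ (hy i).1, dist_comm]
  obtain ⟨i, j, hij, h⟩ := hATB (fun i => Φ (y i)) (fun i => by
    refine ⟨?_, ?_⟩
    · rw [Metric.mem_ball, ha' i]
      exact (hy i).1
    · intro h
      apply (hy i).2
      rw [← dist_eq_zero, ← ha' i, h, dist_self])
  refine ⟨i, j, hij, lt_of_le_of_lt ?_ h⟩
  unfold compAngle
  simp only [ha']
  apply Real.arccos_le_arccos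
  have h1 := hb _ (hy i).1 _ (hy j).1
  gcongr
end

section
/- Let (X,d_X) and (Y,d_Y) be metric spaces with quasi-bicombings Γ_X and Γ_Y, p ∈ X, q ∈ Y, R > 0, K₁, K₂ > 0, and Φ : B_R(q) → X a map with Φ(q) = p such that (a) d_X(p, Φ(y)) ≤ K₁·d_Y(q, y) for every y ∈ B_R(q), (b) d_X(Φ(y), Φ(y')) ≥ K₂·d_Y(y, y') for every y, y' ∈ B_R(q), and (c) for every γ ∈ Γ_Y having q as an endpoint and contained in B_R(q), the image Φ(γ) is a member of Γ_X. Let 0 < ε < π/2 and 0 < ε' < π/2 satisfy β(ε') ≤ (K₂/K₁)·β(ε). If p satisfies the ATB*(ε') condition with respect to Γ_X with constants L ∈ ℕ and K₁R, then q satisfies the ATB*(ε) condition with respect to Γ_Y with constants L and R. -/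
/-- A minimizing geodesic in a metric space, parametrized by arc length on `[0, len]`. -/
structure MinGeodesic (X : Type*) [MetricSpace X] where
  len : ℝ
  len_nonneg : 0 ≤ len
  toFun : ℝ → X
  isom : ∀ s ∈ Set.Icc (0 : ℝ) len, ∀ t ∈ Set.Icc (0 : ℝ) len,
    dist (toFun s) (toFun t) = |s - t|

/-- The image (trace) of a minimizing geodesic. -/
def MinGeodesic.image {X : Type*} [MetricSpace X] (γ : MinGeodesic X) : Set X :=
  γ.toFun '' Set.Icc 0 γ.len

/-- A quasi-bicombing: a set of minimizing geodesics joining every pair of points. -/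
def IsQuasiBicombing {X : Type*} [MetricSpace X] (Γ : Set (MinGeodesic X)) : Prop :=
  ∀ x y : X, ∃ γ ∈ Γ, γ.toFun 0 = x ∧ γ.toFun γ.len = y

/-- The point `p` satisfies the `ATB*(ε)` condition with respect to the
quasi-bicombing `Γ`, with constants `L` and `R`. -/
def ATBStar {X : Type*} [MetricSpace X] (ε : ℝ) (Γ : Set (MinGeodesic X))
    (p : X) (L : ℕ) (R : ℝ) : Prop :=
  ∀ (y : Fin L → X) (g : Fin L → MinGeodesic X),
    (∀ i, y i ∈ Metric.ball p R ∧ y i ≠ p) →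
    (∀ i, g i ∈ Γ ∧ (g i).toFun 0 = p ∧ (g i).toFun (g i).len = y i) →
    ∃ i j, i ≠ j ∧ ∃ x ∈ (g j).image, dist (y i) x ≤ beta ε * dist p (y i)

/-- The `ATB*`-version of the lifting lemma: via a map `Φ : B_R(q) → X` that is
Lipschitz-radial, expanding, and maps geodesics of `Γ_Y` issuing from `q` to
geodesics of `Γ_X`, the `ATB*` condition transfers from `p = Φ(q)` to `q`. -/
theorem atbStar_transfer
    {X Y : Type*} [MetricSpace X] [MetricSpace Y]
    (ΓX : Set (MinGeodesic X)) (ΓY : Set (MinGeodesic Y))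
    (hΓX : IsQuasiBicombing ΓX) (hΓY : IsQuasiBicombing ΓY)
    (p : X) (q : Y) (R K₁ K₂ : ℝ) (hR : 0 < R) (hK₁ : 0 < K₁) (hK₂ : 0 < K₂)
    (Φ : Y → X) (hΦq : Φ q = p)
    (ha : ∀ y ∈ Metric.ball q R, dist p (Φ y) ≤ K₁ * dist q y)
    (hb : ∀ y ∈ Metric.ball q R, ∀ y' ∈ Metric.ball q R,
      K₂ * dist y y' ≤ dist (Φ y) (Φ y'))
    (hc : ∀ γ ∈ ΓY, γ.toFun 0 = q → γ.image ⊆ Metric.ball q R →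
      ∃ γ' ∈ ΓX, γ'.toFun 0 = p ∧ γ'.toFun γ'.len = Φ (γ.toFun γ.len) ∧
        γ'.image = Φ '' γ.image)
    (ε ε' : ℝ) (hε0 : 0 < ε) (hε : ε < Real.pi / 2)
    (hε'0 : 0 < ε') (hε' : ε' < Real.pi / 2)
    (hβ : beta ε' ≤ (K₂ / K₁) * beta ε)
    (L : ℕ) (hATB : ATBStar ε' ΓX p L (K₁ * R)) :
    ATBStar ε ΓY q L R := by
  intro y g hy hg
  have him : ∀ i, (g i).image ⊆ Metric.ball q R := by
    rintro i _ ⟨s, hs, rfl⟩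
    have h0 : (0 : ℝ) ∈ Set.Icc (0 : ℝ) (g i).len := ⟨le_rfl, (g i).len_nonneg⟩
    have hl : (g i).len ∈ Set.Icc (0 : ℝ) (g i).len := ⟨(g i).len_nonneg, le_rfl⟩
    have h1 := (g i).isom s hs 0 h0
    have h2 := (g i).isom _ hl 0 h0
    have h3 := (hy i).1
    rw [(hg i).2.1, sub_zero, abs_of_nonneg hs.1] at h1
    rw [(hg i).2.1, (hg i).2.2, sub_zero, abs_of_nonneg (g i).len_nonneg] at h2
    rw [Metric.mem_ball] at h3 ⊢
    linarith [hs.2]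
  choose g' hg'Γ hg'0 hg'l hg'im using
    fun i => hc (g i) (hg i).1 (hg i).2.1 (him i)
  have hq : q ∈ Metric.ball q R := Metric.mem_ball_self hR
  obtain ⟨i, j, hij, x, hx, hd⟩ := hATB (fun i => Φ (y i)) g'
    (by
      intro i
      constructor
      · have h1 := ha _ (hy i).1
        have h2 := (hy i).1
        rw [Metric.mem_ball, dist_comm] at h2 ⊢
        exact lt_of_le_of_lt h1 (mul_lt_mul_of_pos_left h2 hK₁)
      · intro h
        have h1 := hb _ (hy i).1 q hq
        rw [hΦq, show Φ (y i) = p from h, dist_self] at h1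
        have h2 : 0 < dist (y i) q := dist_pos.2 (hy i).2
        have := mul_pos hK₂ h2
        linarith)
    (fun i => ⟨hg'Γ i, hg'0 i, by rw [hg'l, (hg i).2.2]⟩)
  rw [hg'im] at hx
  obtain ⟨z, hz, rfl⟩ := hx
  refine ⟨i, j, hij, z, hz, ?_⟩
  have hβ0 : 0 ≤ beta ε' := by
    have hs : 0 ≤ Real.sin ε' :=
      Real.sin_nonneg_of_nonneg_of_le_pi hε'0.le (by linarith [Real.pi_pos])
    have hcos := Real.cos_le_one ε'
    unfold beta
    exact div_nonneg (mul_nonneg (by linarith) hs) (by linarith)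
  have h1 := hb _ (hy i).1 z (him j hz)
  have h2 := mul_le_mul_of_nonneg_left (ha _ (hy i).1) hβ0
  have h3 := mul_le_mul_of_nonneg_right hβ
    (mul_nonneg hK₁.le (dist_nonneg (x := q) (y := y i)))
  have h4 : K₂ / K₁ * beta ε * (K₁ * dist q (y i)) = K₂ * (beta ε * dist q (y i)) := by
    field_simp
  have hd' : dist (Φ (y i)) (Φ z) ≤ beta ε' * dist p (Φ (y i)) := hd
  exact le_of_mul_le_mul_left (by linarith) hK₂
end

section
/- Let (X,d) be a geodesic metric space, R > 0, and p ∈ X a point satisfying the locally extendable geodesics condition with parameter δ = R and the local rough Busemann (LRB) condition with parameters H = R and some K > 0. Let 0 < ε < π/2 and suppose that every (β(ε)R/K)-separated subset of the sphere S_R(p) = {y : d(p,y) = R} has cardinality less than L ∈ ℕ. Then p satisfies the ATB*(ε) condition with respect to any quasi-bicombing Γ on X, with constants L and R. -/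
/-- In a geodesic space, a point with locally extendable geodesics (parameter `δ = R`)
satisfying the local rough Busemann condition (`H = R`, constant `K`), and for which
every `(β(ε)R/K)`-separated subset of the sphere `S_R(p)` has fewer than `L` points,
satisfies `ATB*(ε)` with respect to any quasi-bicombing, with constants `L` and `R`. -/
theorem atbStar_of_extendable_LRB
    {X : Type*} [MetricSpace X]
    (hgeo : ∀ x y : X, ∃ γ : MinGeodesic X, γ.toFun 0 = x ∧ γ.toFun γ.len = y)
    (p : X) (R : ℝ) (hR : 0 < R)
    (hext : ∀ γ : MinGeodesic X, γ.image ⊆ Metric.closedBall p R →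
      ∃ γ' : MinGeodesic X, γ'.len = γ.len + R ∧
        ∀ t ∈ Set.Icc (0 : ℝ) γ.len, γ'.toFun t = γ.toFun t)
    (K : ℝ) (hK : 0 < K)
    (hLRB : ∀ γ₁ γ₂ : MinGeodesic X, γ₁.image ⊆ Metric.closedBall p R →
      γ₂.image ⊆ Metric.closedBall p R → γ₁.toFun 0 = γ₂.toFun 0 →
      ∀ t ∈ Set.Icc (0 : ℝ) 1,
        dist (γ₁.toFun (t * γ₁.len)) (γ₂.toFun (t * γ₂.len)) ≤
          K * t * dist (γ₁.toFun γ₁.len) (γ₂.toFun γ₂.len))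
    (ε : ℝ) (hε0 : 0 < ε) (hε : ε < Real.pi / 2) (L : ℕ)
    (hsep : ∀ s : Finset X, (↑s : Set X) ⊆ Metric.sphere p R →
      (∀ a ∈ s, ∀ b ∈ s, a ≠ b → beta ε * R / K ≤ dist a b) → s.card < L)
    (Γ : Set (MinGeodesic X)) (hΓ : IsQuasiBicombing Γ) :
    ATBStar ε Γ p L R := by
  classical
  have hβ : 0 < beta ε := by
    have hs : 0 < Real.sin ε := Real.sin_pos_of_pos_of_lt_pi hε0 (by linarith [Real.pi_pos])
    have hc : Real.cos ε < 1 := by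
      have h := Real.sin_sq_add_cos_sq ε
      have h2 := Real.cos_le_one ε
      rcases h2.lt_or_eq with h3 | h3
      · exact h3
      · rw [h3] at h
        nlinarith
    unfold beta
    have : 0 < 1 - Real.cos ε := by linarith
    positivity
  intro y g hy hg
  have hlen : ∀ i, dist p (y i) = (g i).len := by
    intro i
    have h0 := (g i).len_nonneg
    have h := (g i).isom 0 ⟨le_rfl, h0⟩ (g i).len ⟨h0, le_rfl⟩
    rw [(hg i).2.1, (hg i).2.2, zero_sub, abs_neg, abs_of_nonneg h0] at h
    exact h
  have hlt : ∀ i, (g i).len < R := by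
    intro i
    have h := (hy i).1
    rw [Metric.mem_ball, dist_comm, hlen] at h
    exact h
  have key : ∀ i, ∃ γ : MinGeodesic X, γ.len = R ∧ γ.image ⊆ Metric.closedBall p R ∧
      γ.toFun 0 = p ∧ dist (γ.toFun R) p = R ∧
      ∀ t ∈ Set.Icc (0 : ℝ) (g i).len, γ.toFun t = (g i).toFun t := by
    intro i
    have h0 := (g i).len_nonneg
    obtain ⟨γ', hl, he⟩ := hext (g i) (by
      rintro _ ⟨t, ht, rfl⟩
      have h := (g i).isom t ht 0 ⟨le_rfl, h0⟩
      rw [(hg i).2.1, sub_zero, abs_of_nonneg ht.1] at h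
      rw [Metric.mem_closedBall, h]
      exact ht.2.trans (hlt i).le)
    have hp : γ'.toFun 0 = p := by rw [he 0 ⟨le_rfl, h0⟩, (hg i).2.1]
    have hd : ∀ t ∈ Set.Icc (0 : ℝ) R, dist (γ'.toFun t) p = t := by
      intro t ht
      have h := γ'.isom t ⟨ht.1, by rw [hl]; linarith [ht.2]⟩ 0 ⟨le_rfl, by rw [hl]; linarith⟩
      rwa [hp, sub_zero, abs_of_nonneg ht.1] at h
    refine ⟨⟨R, hR.le, γ'.toFun, fun s hs t ht => γ'.isom s ⟨hs.1, by rw [hl]; linarith [hs.2]⟩ t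
      ⟨ht.1, by rw [hl]; linarith [ht.2]⟩⟩, rfl, ?_, hp, hd R ⟨hR.le, le_rfl⟩, he⟩
    rintro _ ⟨t, ht, rfl⟩
    rw [Metric.mem_closedBall]
    exact (hd t ht).trans_le ht.2
  choose γ hγl hγb hγ0 hγR hγe using key
  have hclose : ∃ i j, i ≠ j ∧ dist ((γ i).toFun R) ((γ j).toFun R) < beta ε * R / K := by
    by_contra! hcon
    have hpos : 0 < beta ε * R / K := by positivity
    have hinj : Function.Injective (fun i => (γ i).toFun R) := by
      intro i j hij
      by_contra hne
      have h := hcon i j hne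
      simp only at hij
      rw [hij, dist_self] at h
      linarith
    have h := hsep (Finset.univ.image fun i => (γ i).toFun R) (by
      intro x hx
      simp only [Finset.coe_image, Finset.coe_univ, Set.image_univ, Set.mem_range] at hx
      obtain ⟨i, rfl⟩ := hx
      exact hγR i) (by
      intro a ha b hb hab
      simp only [Finset.mem_image, Finset.mem_univ, true_and] at ha hb
      obtain ⟨i, rfl⟩ := ha
      obtain ⟨j, rfl⟩ := hb
      exact hcon i j (fun h => hab (by rw [h])))
    rw [Finset.card_image_of_injective _ hinj, Finset.card_univ, Fintype.card_fin] at h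
    exact lt_irrefl _ h
  have fin : ∀ i j, i ≠ j → dist ((γ i).toFun R) ((γ j).toFun R) < beta ε * R / K →
      (g i).len ≤ (g j).len →
      ∃ i j, i ≠ j ∧ ∃ x ∈ (g j).image, dist (y i) x ≤ beta ε * dist p (y i) := by
    intro i j hij hd hle
    have h0 := (g i).len_nonneg
    refine ⟨i, j, hij, (g j).toFun (g i).len, ⟨_, ⟨h0, hle⟩, rfl⟩, ?_⟩
    have ht0 : 0 ≤ (g i).len / R := by positivity
    have h := hLRB (γ i) (γ j) (hγb i) (hγb j) (by rw [hγ0, hγ0]) ((g i).len / R)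
      ⟨ht0, (div_le_one hR).2 (hlt i).le⟩
    rw [hγl, hγl, div_mul_cancel₀ _ hR.ne', hγe i _ ⟨h0, le_rfl⟩, hγe j _ ⟨h0, hle⟩,
      (hg i).2.2] at h
    rw [hlen]
    refine h.trans ((mul_le_mul_of_nonneg_left hd.le (by positivity)).trans_eq ?_)
    field_simp
  obtain ⟨i, j, hij, hd⟩ := hclose
  rcases le_total (g i).len (g j).len with h | h
  · exact fin i j hij hd h
  · exact fin j i hij.symm (by rwa [dist_comm]) h
end

section
/- Let (X,d) be a complete, locally compact geodesic metric space with locally extendable geodesics which is Busemann nonpositively curved, i.e., for any two minimizing geodesics γ₁, γ₂ : [0,1] → X parametrized proportionally to arc length with γ₁(0) = γ₂(0), one has d(γ₁(t), γ₂(t)) ≤ t·d(γ₁(1), γ₂(1)) for all t ∈ [0,1]. Then for every 0 < ε < π/2, X is semi-globally ATB(ε). -/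
/-- A map `ξ : [0,1] → X` is a minimizing geodesic parametrized proportionally
to arc length. -/
def IsPropGeodesic {X : Type*} [MetricSpace X] (ξ : ℝ → X) : Prop :=
  ∀ s ∈ Set.Icc (0 : ℝ) 1, ∀ t ∈ Set.Icc (0 : ℝ) 1,
    dist (ξ s) (ξ t) = |s - t| * dist (ξ 0) (ξ 1)

def GeoHyp (X : Type*) [MetricSpace X] : Prop :=
  ∀ x y : X, ∃ γ : MinGeodesic X, γ.toFun 0 = x ∧ γ.toFun γ.len = y

def BusHyp (X : Type*) [MetricSpace X] : Prop :=
  ∀ γ₁ γ₂ : ℝ → X, IsPropGeodesic γ₁ → IsPropGeodesic γ₂ →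
      γ₁ 0 = γ₂ 0 → ∀ t ∈ Set.Icc (0 : ℝ) 1,
        dist (γ₁ t) (γ₂ t) ≤ t * dist (γ₁ 1) (γ₂ 1)

theorem geo_exists {X : Type*} [MetricSpace X] (hgeo : GeoHyp X) (x y : X) :
    ∃ c : ℝ → X, c 0 = x ∧ c (dist x y) = y ∧ ∀ s ∈ Set.Icc (0 : ℝ) (dist x y),
      ∀ t ∈ Set.Icc (0 : ℝ) (dist x y), dist (c s) (c t) = |s - t| := by
  obtain ⟨γ, h0, h1⟩ := hgeo x y
  have hl : dist x y = γ.len := by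
    have := γ.isom 0 ⟨le_rfl, γ.len_nonneg⟩ γ.len ⟨γ.len_nonneg, le_rfl⟩
    rw [h0, h1] at this
    rw [this, zero_sub, abs_neg, abs_of_nonneg γ.len_nonneg]
  refine ⟨γ.toFun, h0, ?_, ?_⟩
  · rw [hl, h1]
  · rw [hl]; exact γ.isom

theorem prop_of_isom {X : Type*} [MetricSpace X] (c : ℝ → X) (l : ℝ) (hl : 0 ≤ l)
    (h : ∀ s ∈ Set.Icc (0 : ℝ) l, ∀ t ∈ Set.Icc (0 : ℝ) l, dist (c s) (c t) = |s - t|) :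
    IsPropGeodesic (fun t => c (t * l)) := by
  have key : ∀ s ∈ Set.Icc (0 : ℝ) 1, s * l ∈ Set.Icc (0 : ℝ) l := fun s hs =>
    ⟨mul_nonneg hs.1 hl, by nlinarith [hs.2]⟩
  intro s hs t ht
  have e := h _ (key s hs) _ (key t ht)
  have e' := h _ (key 0 (by simp)) _ (key 1 (by simp))
  simp only at e e' ⊢
  rw [e, e', ← sub_mul, abs_mul, abs_of_nonneg hl]
  simp [abs_of_nonneg hl]

/-- convexity of the distance to a point along a geodesic -/
theorem dist_convex {X : Type*} [MetricSpace X] (hgeo : GeoHyp X) (hB : BusHyp X)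
    (p : X) (c : ℝ → X) (l : ℝ) (hl : 0 ≤ l)
    (h : ∀ s ∈ Set.Icc (0 : ℝ) l, ∀ t ∈ Set.Icc (0 : ℝ) l, dist (c s) (c t) = |s - t|)
    (t : ℝ) (ht : t ∈ Set.Icc (0 : ℝ) 1) :
    dist p (c (t * l)) ≤ (1 - t) * dist p (c 0) + t * dist p (c l) := by
  obtain ⟨g, g0, g1, hg⟩ := geo_exists hgeo (c 0) p
  have P1 := prop_of_isom c l hl h
  have P2 := prop_of_isom g _ dist_nonneg hg
  have k := hB _ _ P1 P2 (by simp [g0]) t ht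
  simp only [one_mul, g1] at k
  have k2 := P2 t ht 1 (by simp)
  simp only [one_mul, zero_mul, g1, g0] at k2
  rw [abs_of_nonpos (by linarith [ht.2])] at k2
  have := dist_triangle p (g (t * dist (c 0) p)) (c (t * l))
  rw [dist_comm p (g _), dist_comm (g _) (c _), k2] at this
  rw [dist_comm p (c 0), dist_comm p (c l)]
  linarith

theorem geo_through {X : Type*} [MetricSpace X] (hgeo : GeoHyp X) (p y z : X)
    (hb : dist p z = dist p y + dist y z) :
    ∃ c : ℝ → X, c 0 = p ∧ c (dist p y) = y ∧ c (dist p z) = z ∧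
      ∀ s ∈ Set.Icc (0 : ℝ) (dist p z),
      ∀ t ∈ Set.Icc (0 : ℝ) (dist p z), dist (c s) (c t) = |s - t| := by
  obtain ⟨f, f0, f1, hf⟩ := geo_exists hgeo p y
  obtain ⟨g, g0, g1, hg⟩ := geo_exists hgeo y z
  have py := dist_nonneg (x := p) (y := y)
  have yz := dist_nonneg (x := y) (y := z)
  set c : ℝ → X := fun s => if s ≤ dist p y then f s else g (s - dist p y) with hc
  have cz : c (dist p z) = z := by
    simp only [hc]
    split_ifs with h
    · have h0 : dist y z = 0 := by linarith
      have : dist p z = dist p y := by linarith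
      rw [this, f1]; exact dist_eq_zero.1 h0
    · rw [hb, add_sub_cancel_left, g1]
  have c0 : c 0 = p := by simp [hc, f0]
  have cy : c (dist p y) = y := by simp [hc, f1]
  have A : ∀ s ∈ Set.Icc (0 : ℝ) (dist p y), c s = f s := fun s hs => by simp [hc, hs.2]
  have B : ∀ s, dist p y ≤ s → c s = g (s - dist p y) := fun s hs => by
    rcases hs.eq_or_lt with h | h
    · rw [← h, cy, sub_self, g0]
    · simp [hc, not_le.2 h]
  have main : ∀ s ∈ Set.Icc (0 : ℝ) (dist p z), ∀ t ∈ Set.Icc (0 : ℝ) (dist p z), s ≤ t →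
      dist (c s) (c t) = t - s := by
    intro s hs t ht hst
    rcases le_total t (dist p y) with h | h
    · rw [A s ⟨hs.1, hst.trans h⟩, A t ⟨ht.1, h⟩, hf s ⟨hs.1, hst.trans h⟩ t ⟨ht.1, h⟩,
        abs_of_nonpos (by linarith)]; ring
    rcases le_total (dist p y) s with h' | h'
    · rw [B s h', B t h, hg _ ⟨by linarith, by linarith [hs.2]⟩ _ ⟨by linarith, by linarith [ht.2]⟩,
        abs_of_nonpos (by linarith)]; ring
    · have e1 : dist p (f s) = s := by
        rw [← f0, hf 0 ⟨le_rfl, py⟩ s ⟨hs.1, h'⟩, abs_of_nonpos (by linarith [hs.1])]; ring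
      have e2 : dist (f s) y = dist p y - s := by
        conv_lhs => rw [← f1]
        rw [hf s ⟨hs.1, h'⟩ _ ⟨py, le_rfl⟩, abs_of_nonpos (by linarith)]; ring
      have m : t - dist p y ∈ Set.Icc 0 (dist y z) := ⟨by linarith, by linarith [ht.2]⟩
      have e3 : dist y (g (t - dist p y)) = t - dist p y := by
        have h3 := hg 0 ⟨le_rfl, yz⟩ _ m
        rw [g0, abs_of_nonpos (by linarith)] at h3
        rw [h3]; ring
      have e4 : dist (g (t - dist p y)) z = dist p z - t := by
        conv_lhs => rw [← g1]
        rw [hg _ m _ ⟨yz, le_rfl⟩, abs_of_nonpos (by linarith [m.2])]; linarith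
      rw [A s ⟨hs.1, h'⟩, B t h]
      have t1 := dist_triangle (f s) y (g (t - dist p y))
      have t2 := dist_triangle4 p (f s) (g (t - dist p y)) z
      linarith
  refine ⟨c, c0, cy, cz, ?_⟩
  intro s hs t ht
  rcases le_total s t with h | h
  · rw [main s hs t ht h, abs_of_nonpos (by linarith)]; ring
  · rw [dist_comm, main t ht s hs h, abs_of_nonneg (by linarith)]

/-- local extension step -/
theorem ext_step {X : Type*} [MetricSpace X] (hgeo : GeoHyp X) (hB : BusHyp X)
    (p y : X) (hpy : p ≠ y) (δ : ℝ) (hδ : 0 < δ)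
    (H : ∀ γ : MinGeodesic X, γ.image ⊆ Metric.closedBall y δ →
        ∃ γ' : MinGeodesic X, γ'.len = γ.len + δ ∧
          ∀ t ∈ Set.Icc (0 : ℝ) γ.len, γ'.toFun t = γ.toFun t)
    (e : ℝ) (he0 : 0 < e) (he : e ≤ δ) :
    ∃ z, dist y z = e ∧ dist p z = dist p y + dist y z := by
  obtain ⟨f, f0, f1, hf⟩ := geo_exists hgeo p y
  have hT : 0 < dist p y := dist_pos.2 hpy
  set T := dist p y with hTdef
  set a := min T δ with ha
  have a0 : 0 < a := lt_min hT hδ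
  have aT : a ≤ T := min_le_left _ _
  have aδ : a ≤ δ := min_le_right _ _
  let γ : MinGeodesic X := ⟨a, a0.le, fun s => f (s + (T - a)), by
    intro s hs t ht
    rw [hf _ ⟨by linarith [hs.1], by linarith [hs.2]⟩ _ ⟨by linarith [ht.1], by linarith [ht.2]⟩]
    congr 1; ring⟩
  obtain ⟨γ', hl, hE⟩ := H γ (by
    rintro _ ⟨s, hs, rfl⟩
    have hs1 : 0 ≤ s := hs.1
    have hs2 : s ≤ a := hs.2
    change dist (f (s + (T - a))) y ≤ δ
    conv_lhs => rw [← f1]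
    rw [hf _ ⟨by linarith, by linarith⟩ _ ⟨hT.le, le_rfl⟩, abs_of_nonpos (by linarith)]
    linarith)
  change γ'.len = a + δ at hl
  have E0 : γ'.toFun 0 = f (T - a) := by
    rw [hE 0 ⟨le_rfl, a0.le⟩]; change f (0 + (T - a)) = _; rw [zero_add]
  have E1 : γ'.toFun a = y := by
    rw [hE a ⟨a0.le, le_rfl⟩]; change f (a + (T - a)) = _; rw [add_sub_cancel, f1]
  have iso : ∀ s ∈ Set.Icc (0 : ℝ) (a + e), ∀ t ∈ Set.Icc (0 : ℝ) (a + e),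
      dist (γ'.toFun s) (γ'.toFun t) = |s - t| := fun s hs t ht =>
    γ'.isom s ⟨hs.1, by linarith [hs.2]⟩ t ⟨ht.1, by linarith [ht.2]⟩
  have dyz : dist y (γ'.toFun (a + e)) = e := by
    conv_lhs => rw [← E1]
    rw [iso a ⟨a0.le, by linarith⟩ _ ⟨by linarith, le_rfl⟩, abs_of_nonpos (by linarith)]; ring
  have du : dist p (γ'.toFun 0) = T - a := by
    rw [E0, ← f0, hf 0 ⟨le_rfl, hT.le⟩ _ ⟨by linarith, by linarith⟩, abs_of_nonpos (by linarith)]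
    ring
  have ae : 0 < a + e := by linarith
  have conv := dist_convex hgeo hB p γ'.toFun (a + e) ae.le iso (a / (a + e))
    ⟨by positivity, by rw [div_le_one ae]; linarith⟩
  rw [div_mul_cancel₀ _ ae.ne', E1, du, ← hTdef] at conv
  have tri := dist_triangle p y (γ'.toFun (a + e))
  refine ⟨γ'.toFun (a + e), dyz, le_antisymm tri ?_⟩
  rw [dyz]
  set D := dist p (γ'.toFun (a + e))
  have : (1 - a / (a + e)) * (T - a) + a / (a + e) * D = (e * (T - a) + a * D) / (a + e) := by
    field_simp; ring
  rw [this, le_div_iff₀ ae] at conv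
  have : a * (T + e) ≤ a * D := by linarith
  exact le_of_mul_le_mul_left this a0

theorem hopf_rinow {X : Type*} [MetricSpace X] [CompleteSpace X] [LocallyCompactSpace X]
    (hgeo : GeoHyp X) (x : X) (r : ℝ) : IsCompact (Metric.closedBall x r) := by
  have near : ∀ s e : ℝ, 0 ≤ s → 0 ≤ e → ∀ y ∈ Metric.closedBall x (s + e),
      ∃ w ∈ Metric.closedBall x s, dist y w ≤ e := by
    intro s e hs he y hy
    rw [Metric.mem_closedBall, dist_comm] at hy
    by_cases h : dist x y ≤ s
    · exact ⟨y, by rwa [Metric.mem_closedBall, dist_comm], by simpa⟩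
    push Not at h
    obtain ⟨f, f0, f1, hf⟩ := geo_exists hgeo x y
    refine ⟨f s, ?_, ?_⟩
    · rw [Metric.mem_closedBall, dist_comm]
      conv_lhs => rw [← f0]
      rw [hf 0 ⟨le_rfl, dist_nonneg⟩ s ⟨hs, h.le⟩, abs_of_nonpos (by linarith)]; linarith
    · conv_lhs => rw [← f1]
      rw [hf _ ⟨dist_nonneg, le_rfl⟩ s ⟨hs, h.le⟩, abs_of_nonneg (by linarith)]; linarith
  by_contra hr
  set S := {r : ℝ | ¬ IsCompact (Metric.closedBall x r)} with hS
  have hSne : S.Nonempty := ⟨r, hr⟩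
  have hS0 : ∀ s ∈ S, 0 ≤ s := by
    intro s hs
    by_contra h
    push Not at h
    exact hs (by rw [Metric.closedBall_eq_empty.2 h]; exact isCompact_empty)
  have hbd : BddBelow S := ⟨0, hS0⟩
  have hρ0 : 0 ≤ sInf S := le_csInf hSne hS0
  have hlt : ∀ s < sInf S, IsCompact (Metric.closedBall x s) := by
    intro s hs
    by_contra h
    exact absurd (csInf_le hbd h) (not_le.2 hs)
  have hρ : IsCompact (Metric.closedBall x (sInf S)) := by
    rcases hρ0.eq_or_lt with h | h
    · rw [← h, Metric.closedBall_zero]; exact isCompact_singleton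
    refine isCompact_iff_totallyBounded_isComplete.2 ⟨?_, Metric.isClosed_closedBall.isComplete⟩
    rw [Metric.totallyBounded_iff]
    intro e he
    set e' := min (e / 2) (sInf S) with he'
    have e'0 : 0 < e' := lt_min (by linarith) h
    have e'1 : e' ≤ e / 2 := min_le_left _ _
    have e'2 : e' ≤ sInf S := min_le_right _ _
    obtain ⟨t, ht, hcov⟩ := Metric.totallyBounded_iff.1
      (hlt (sInf S - e') (by linarith)).totallyBounded (e / 2) (by linarith)
    refine ⟨t, ht, fun y hy => ?_⟩
    obtain ⟨w, hw, hyw⟩ := near (sInf S - e') e' (by linarith) e'0.le y (by simpa using hy)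
    obtain ⟨q, hq, hwq⟩ := Set.mem_iUnion₂.1 (hcov hw)
    refine Set.mem_iUnion₂.2 ⟨q, hq, ?_⟩
    rw [Metric.mem_ball] at hwq ⊢
    linarith [dist_triangle y w q]
  obtain ⟨δ, hδ, hc⟩ := hρ.exists_isCompact_cthickening
  have hbig : IsCompact (Metric.closedBall x (sInf S + δ)) := by
    refine hc.of_isClosed_subset Metric.isClosed_closedBall fun y hy => ?_
    obtain ⟨w, hw, hyw⟩ := near (sInf S) δ hρ0 hδ.le y hy
    exact Metric.mem_cthickening_of_dist_le y w δ _ hw hyw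
  obtain ⟨s, hs, hs'⟩ := exists_lt_of_csInf_lt hSne (show sInf S < sInf S + δ by linarith)
  exact hs (hbig.of_isClosed_subset Metric.isClosed_closedBall
    (Metric.closedBall_subset_closedBall hs'.le))

theorem ext_global {X : Type*} [MetricSpace X] [CompleteSpace X] [LocallyCompactSpace X]
    (hgeo : GeoHyp X) (hB : BusHyp X)
    (hext : ∀ p : X, ∃ δ : ℝ, 0 < δ ∧
      ∀ γ : MinGeodesic X, γ.image ⊆ Metric.closedBall p δ →
        ∃ γ' : MinGeodesic X, γ'.len = γ.len + δ ∧
          ∀ t ∈ Set.Icc (0 : ℝ) γ.len, γ'.toFun t = γ.toFun t)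
    (p y : X) (hpy : p ≠ y) (R : ℝ) (hR : dist p y ≤ R) :
    ∃ z, dist p z = R ∧ dist p z = dist p y + dist y z := by
  have hK : IsCompact (Metric.closedBall p R ∩ {z | dist p z = dist p y + dist y z}) :=
    (hopf_rinow hgeo p R).inter_right (isClosed_eq (by fun_prop) (by fun_prop))
  obtain ⟨z, ⟨hz1, hz2⟩, hmax⟩ := hK.exists_isMaxOn
    ⟨y, by rwa [Metric.mem_closedBall, dist_comm], by simp⟩
    (f := fun z => dist p z) (by fun_prop)
  simp only [Set.mem_ofPred_eq] at hz2
  rw [Metric.mem_closedBall, dist_comm] at hz1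
  refine ⟨z, ?_, hz2⟩
  by_contra hne
  have hlt : dist p z < R := lt_of_le_of_ne hz1 hne
  have hpz : p ≠ z := by
    intro h
    have h1 := dist_pos.2 hpy
    have h2 := dist_nonneg (x := y) (y := z)
    rw [← h, dist_self] at hz2
    rw [← h] at h2
    linarith
  obtain ⟨δ, hδ, H⟩ := hext z
  have e0 : 0 < min δ (R - dist p z) := lt_min hδ (by linarith)
  obtain ⟨w, hw1, hw2⟩ := ext_step hgeo hB p z hpz δ hδ H _ e0 (min_le_left _ _)
  have := min_le_right δ (R - dist p z)
  have hm := hmax (a := w) ⟨by rw [Metric.mem_closedBall, dist_comm]; linarith, by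
    have t1 := dist_triangle p y w
    have t2 := dist_triangle y z w
    simp only [Set.mem_ofPred_eq]
    linarith⟩
  simp only [Set.mem_ofPred_eq] at hm
  linarith

theorem angle_est {a b d η ε : ℝ} (ha : 0 < a) (hab : a ≤ b) (hd0 : 0 ≤ d) (hη : 0 < η)
    (hη2 : η ≤ 2) (hd : d ≤ (b - a) + η * a) (hc : Real.cos ε < 1 - η) (hε0 : 0 < ε)
    (hε : ε < Real.pi / 2) :
    Real.arccos ((a ^ 2 + b ^ 2 - d ^ 2) / (2 * a * b)) < ε := by
  have hb : 0 < b := by linarith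
  set v := (a ^ 2 + b ^ 2 - d ^ 2) / (2 * a * b) with hv
  have h1 : 1 - η ≤ v := by
    rw [hv, le_div_iff₀ (by positivity)]
    have h2 : d ^ 2 ≤ ((b - a) + η * a) ^ 2 := by gcongr
    nlinarith [mul_nonneg (mul_nonneg hη.le (sub_nonneg.2 hη2)) (sq_nonneg a)]
  have hcp : 0 < Real.cos ε := Real.cos_pos_of_mem_Ioo ⟨by linarith, hε⟩
  by_contra h
  push Not at h
  have h3 := Real.cos_le_cos_of_nonneg_of_le_pi hε0.le (Real.arccos_le_pi v) h
  rcases le_total v 1 with hv1 | hv1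
  · rw [Real.cos_arccos (by linarith) hv1] at h3; linarith
  · rw [Real.arccos_of_one_le hv1] at h; linarith

theorem pair_est {X : Type*} [MetricSpace X] (hgeo : GeoHyp X) (hB : BusHyp X)
    (p y₁ y₂ z₁ z₂ : X) (R η : ℝ) (hR : 0 < R) (h1 : dist p z₁ = R) (h2 : dist p z₂ = R)
    (b1 : dist p z₁ = dist p y₁ + dist y₁ z₁) (b2 : dist p z₂ = dist p y₂ + dist y₂ z₂)
    (hle : dist p y₁ ≤ dist p y₂) (hz : dist z₁ z₂ ≤ η * R) :
    dist y₁ y₂ ≤ (dist p y₂ - dist p y₁) + η * dist p y₁ := by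
  obtain ⟨f, f0, fy, fz, hf⟩ := geo_through hgeo p y₁ z₁ b1
  obtain ⟨g, g0, gy, gz, hg⟩ := geo_through hgeo p y₂ z₂ b2
  rw [h1] at fz hf
  rw [h2] at gz hg
  have a0 := dist_nonneg (x := p) (y := y₁)
  have y1R : dist p y₁ ≤ R := by linarith [dist_nonneg (x := y₁) (y := z₁)]
  have y2R : dist p y₂ ≤ R := by linarith [dist_nonneg (x := y₂) (y := z₂)]
  have k := hB _ _ (prop_of_isom f R hR.le hf) (prop_of_isom g R hR.le hg) (by simp [f0, g0])
    (dist p y₁ / R) ⟨by positivity, by rwa [div_le_one hR]⟩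
  simp only [one_mul, div_mul_cancel₀ _ hR.ne', fz, gz, fy] at k
  have e : dist (g (dist p y₁)) y₂ = dist p y₂ - dist p y₁ := by
    conv_lhs => rw [← gy]
    rw [hg _ ⟨a0, y1R⟩ _ ⟨dist_nonneg, y2R⟩, abs_of_nonpos (by linarith)]; ring
  have k2 : dist p y₁ / R * dist z₁ z₂ ≤ η * dist p y₁ := by
    rw [div_mul_eq_mul_div, div_le_iff₀ hR]; nlinarith
  linarith [dist_triangle y₁ (g (dist p y₁)) y₂]

/-- A complete, locally compact geodesic metric space with locally extendable
geodesics which is Busemann nonpositively curved is semi-globally `ATB(ε)` for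
every `0 < ε < π/2`. -/
theorem busemannNPC_semiGlobalATB
    {X : Type*} [MetricSpace X] [CompleteSpace X] [LocallyCompactSpace X]
    (hgeo : ∀ x y : X, ∃ γ : MinGeodesic X, γ.toFun 0 = x ∧ γ.toFun γ.len = y)
    (hext : ∀ p : X, ∃ δ : ℝ, 0 < δ ∧
      ∀ γ : MinGeodesic X, γ.image ⊆ Metric.closedBall p δ →
        ∃ γ' : MinGeodesic X, γ'.len = γ.len + δ ∧
          ∀ t ∈ Set.Icc (0 : ℝ) γ.len, γ'.toFun t = γ.toFun t)
    (hBNPC : ∀ γ₁ γ₂ : ℝ → X, IsPropGeodesic γ₁ → IsPropGeodesic γ₂ →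
      γ₁ 0 = γ₂ 0 → ∀ t ∈ Set.Icc (0 : ℝ) 1,
        dist (γ₁ t) (γ₂ t) ≤ t * dist (γ₁ 1) (γ₂ 1))
    (ε : ℝ) (hε0 : 0 < ε) (hε : ε < Real.pi / 2) :
    ∀ (x : X) (R : ℝ), 0 < R → ∃ L : ℕ, ∀ p ∈ Metric.ball x R, ATBPoint ε p L R := by
  have hgeo' : GeoHyp X := hgeo
  have hB : BusHyp X := hBNPC
  intro x R hR
  have hc1 : Real.cos ε < 1 := by
    have := Real.cos_lt_cos_of_nonneg_of_le_pi_div_two le_rfl hε.le hε0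
    rwa [Real.cos_zero] at this
  have hc0 : 0 < Real.cos ε := Real.cos_pos_of_mem_Ioo ⟨by linarith, hε⟩
  set η := (1 - Real.cos ε) / 2 with hη
  have η0 : 0 < η := by linarith
  obtain ⟨t, ht, hcov⟩ := Metric.totallyBounded_iff.1
    (hopf_rinow hgeo' x (2 * R)).totallyBounded (η * R / 2) (by positivity)
  refine ⟨ht.toFinset.card + 1, fun p hp y hy => ?_⟩
  have hz : ∀ i, ∃ z, dist p z = R ∧ dist p z = dist p (y i) + dist (y i) z := fun i =>
    ext_global hgeo' hB hext p (y i) (hy i).2.symm R (by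
      have := (hy i).1
      rw [Metric.mem_ball, dist_comm] at this
      exact this.le)
  choose z hzR hzb using hz
  have hq : ∀ i, ∃ q ∈ t, dist (z i) q < η * R / 2 := fun i => by
    have hm : z i ∈ Metric.closedBall x (2 * R) := by
      rw [Metric.mem_closedBall]
      have h1 := dist_triangle (z i) p x
      rw [Metric.mem_ball] at hp
      have h2 := hzR i
      rw [dist_comm] at h2
      linarith
    obtain ⟨q, hq, h⟩ := Set.mem_iUnion₂.1 (hcov hm)
    exact ⟨q, hq, h⟩
  choose q hqt hqd using hq
  obtain ⟨i, -, j, -, hij, hqe⟩ := Finset.exists_ne_map_eq_of_card_lt_of_maps_to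
    (s := (Finset.univ : Finset (Fin (ht.toFinset.card + 1)))) (t := ht.toFinset) (f := q)
    (by simp) (fun i _ => by simpa using hqt i)
  have fin : ∀ i j, q i = q j → dist p (y i) ≤ dist p (y j) → compAngle p (y i) (y j) < ε := by
    intro i j hqe hle
    have hzz : dist (z i) (z j) ≤ η * R := by
      have h1 := hqd i
      have h2 := hqd j
      rw [hqe] at h1
      linarith [dist_triangle_right (z i) (z j) (q j)]
    have k := pair_est hgeo' hB p (y i) (y j) (z i) (z j) R η hR (hzR i) (hzR j) (hzb i) (hzb j)
      hle hzz
    unfold compAngle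
    rw [dist_comm (y i) p, dist_comm (y j) p]
    exact angle_est (dist_pos.2 (hy i).2.symm) hle dist_nonneg η0 (by linarith) k
      (by linarith) hε0 hε
  rcases le_total (dist p (y i)) (dist p (y j)) with h | h
  · exact ⟨i, j, hij, fin i j hqe h⟩
  · exact ⟨j, i, hij.symm, fin j i hqe.symm h⟩
end

section
/- For every n ∈ ℕ and 0 < ε < π/2, there exists L = L(n, ε) ∈ ℕ such that every point p of the Euclidean space ℝⁿ has the following property: for any points y₁, …, y_L ∈ ℝⁿ∖{p}, there exist i ≠ j such that the minimum over points x on the line segment from p to yⱼ of the Euclidean distance |yᵢ − x| is at most β(ε)·|p − yᵢ|. -/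
/-- For every `n` and `0 < ε < π/2` there is `L = L(n, ε)` such that every point `p`
of Euclidean `n`-space satisfies the `ATB*(ε)` condition with respect to the linear
quasi-bicombing, with constants `L` and `R = ∞`: among any `L` points `yᵢ ≠ p`, some
`yᵢ` is within distance `β(ε)·dist p yᵢ` of the segment from `p` to `yⱼ` for some `j ≠ i`. -/
theorem euclidean_atbStar (n : ℕ) (ε : ℝ) (hε0 : 0 < ε) (hε : ε < Real.pi / 2) :
    ∃ L : ℕ, ∀ p : EuclideanSpace ℝ (Fin n), ∀ y : Fin L → EuclideanSpace ℝ (Fin n),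
      (∀ i, y i ≠ p) →
      ∃ i j, i ≠ j ∧ ∃ t ∈ Set.Icc (0 : ℝ) 1,
        dist (y i) ((1 - t) • p + t • y j) ≤ beta ε * dist p (y i) := by
  have hb : 0 < beta ε := by
    have h1 : 0 < Real.sin ε := Real.sin_pos_of_pos_of_lt_pi hε0 (by linarith [Real.pi_pos])
    have h2 : Real.cos ε < 1 := by
      have := Real.cos_lt_cos_of_nonneg_of_le_pi_div_two (le_refl 0) hε.le hε0
      simpa using this
    unfold beta
    have h3 : 0 < 1 - Real.cos ε := by linarith
    positivity
  obtain ⟨s, hs, hcov⟩ := Metric.totallyBounded_iff.1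
    (isCompact_closedBall (0 : EuclideanSpace ℝ (Fin n)) 1).totallyBounded
    (beta ε / 2) (by positivity)
  refine ⟨hs.toFinset.card + 1, fun p y hy => ?_⟩
  have hpos : ∀ i, 0 < ‖y i - p‖ := fun i => norm_pos_iff.2 (sub_ne_zero.2 (hy i))
  have hc : ∀ i, ∃ c ∈ hs.toFinset, dist (‖y i - p‖⁻¹ • (y i - p)) c < beta ε / 2 := by
    intro i
    have hm : ‖y i - p‖⁻¹ • (y i - p) ∈ Metric.closedBall (0 : EuclideanSpace ℝ (Fin n)) 1 := by
      rw [mem_closedBall_zero_iff, norm_smul, norm_inv, norm_norm,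
        inv_mul_cancel₀ (hpos i).ne']
    have := hcov hm
    simp only [Set.mem_iUnion, Metric.mem_ball] at this
    obtain ⟨c, hc, h⟩ := this
    exact ⟨c, hs.mem_toFinset.2 hc, h⟩
  choose c hcs hcd using hc
  obtain ⟨i, -, j, -, hij, hcij⟩ := Finset.exists_ne_map_eq_of_card_lt_of_maps_to
    (s := (Finset.univ : Finset (Fin (hs.toFinset.card + 1)))) (t := hs.toFinset) (f := c)
    (by simp) (fun i _ => hcs i)
  have key : ∀ i j, c i = c j → ‖y i - p‖ ≤ ‖y j - p‖ → ∃ t ∈ Set.Icc (0 : ℝ) 1,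
        dist (y i) ((1 - t) • p + t • y j) ≤ beta ε * dist p (y i) := by
    intro i j hcij hle
    refine ⟨‖y i - p‖ / ‖y j - p‖, ⟨by positivity, (div_le_one (hpos j)).2 hle⟩, ?_⟩
    have hu : ‖‖y i - p‖⁻¹ • (y i - p) - ‖y j - p‖⁻¹ • (y j - p)‖ ≤ beta ε := by
      rw [← dist_eq_norm]
      have h1 := hcd i
      have h2 := hcd j
      rw [← hcij] at h2
      linarith [dist_triangle_right (‖y i - p‖⁻¹ • (y i - p)) (‖y j - p‖⁻¹ • (y j - p)) (c i)]
    have he : y i - ((1 - ‖y i - p‖ / ‖y j - p‖) • p + (‖y i - p‖ / ‖y j - p‖) • y j)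
        = ‖y i - p‖ • (‖y i - p‖⁻¹ • (y i - p) - ‖y j - p‖⁻¹ • (y j - p)) := by
      rw [smul_sub, smul_smul, smul_smul, mul_inv_cancel₀ (hpos i).ne', ← div_eq_mul_inv]
      module
    rw [dist_eq_norm, he, norm_smul, norm_norm, dist_comm p, dist_eq_norm, mul_comm]
    exact mul_le_mul_of_nonneg_right hu (norm_nonneg _)
  rcases le_total ‖y i - p‖ ‖y j - p‖ with h | h
  · exact ⟨i, j, hij, key i j hcij h⟩
  · exact ⟨j, i, hij.symm, key j i hcij.symm h⟩
end
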